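/- arXiv:1810.04949 — 4 statements merged into one kernel-verified Lean document; each statement's English description precedes it below -/
import Mathlib

section
/- Let ρ > 0 and let f : (0,∞) → [0,∞) be a locally integrable function such that for some constants c₁, k > 0 one has f(t) ≤ c₁ + k ∫₀ᵗ (t−s)^{ρ−1} f(s) ds for all t > 0. Then there exist positive constants c₂ and c₃ (depending only on ρ and c₁) such that f(t) ≤ c₂ e^{c₃ k^{1/ρ} t} for all t > 0. -/
open MeasureTheory Real

lemma fg_core (G h : ℝ → ENNReal) (C : ENNReal) (hC : C ≠ ⊤) (T : ℝ)
    (hGm : AEMeasurable G (volume.restrict (Set.Ioo 0 T)))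
    (hfin : ∫⁻ s in Set.Ioo 0 T, G s ≠ ⊤) (hm : Measurable h)
    (hh : ∫⁻ s, h s = 2⁻¹)
    (hG : ∀ t ∈ Set.Ioo 0 T, G t ≤ C + ∫⁻ s in Set.Ioo 0 t, h (t - s) * G s) :
    ∀ t ∈ Set.Ioo 0 T, G t ≤ 2 * C := by
  set W : ℝ → ENNReal := Set.indicator (Set.Ioo 0 T) (fun s => G s - 2 * C) with hW
  have hWm : AEMeasurable W volume := by
    rw [hW, aemeasurable_indicator_iff measurableSet_Ioo]
    exact hGm.sub aemeasurable_const
  have hht : ∀ t : ℝ, ∫⁻ s, h (t - s) = 2⁻¹ := by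
    intro t
    rw [← hh]
    exact lintegral_sub_left_eq_self h t
  have key : ∀ t ∈ Set.Ioo 0 T, G t ≤ 2 * C + ∫⁻ s, h (t - s) * W s := by
    intro t ht
    calc G t ≤ C + ∫⁻ s in Set.Ioo 0 t, h (t - s) * G s := hG t ht
      _ ≤ C + ∫⁻ s in Set.Ioo 0 t, (h (t - s) * (2 * C) + h (t - s) * W s) := by
        gcongr C + ?_
        apply setLIntegral_mono' measurableSet_Ioo
        intro s hs
        rw [← mul_add]
        gcongr
        have : s ∈ Set.Ioo 0 T := ⟨hs.1, hs.2.trans ht.2⟩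
        rw [hW, Set.indicator_of_mem this]
        exact le_add_tsub
      _ ≤ C + ∫⁻ s, (h (t - s) * (2 * C) + h (t - s) * W s) := by
        gcongr C + ?_
        exact setLIntegral_le_lintegral _ _
      _ = C + (C + ∫⁻ s, h (t - s) * W s) := by
        have hmt : Measurable fun s => h (t - s) := hm.comp (measurable_const.sub measurable_id)
        rw [lintegral_add_left (hmt.mul_const _), lintegral_mul_const _ hmt, hht, ← mul_assoc,
          ENNReal.inv_mul_cancel (by simp) (by simp), one_mul]
      _ = _ := by rw [← add_assoc, two_mul]
  have hWfin : ∫⁻ s, W s ≠ ⊤ := by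
    rw [hW, lintegral_indicator measurableSet_Ioo]
    refine ne_top_of_le_ne_top hfin ?_
    exact lintegral_mono fun s => tsub_le_self
  have hWle : ∫⁻ t, W t ≤ 2⁻¹ * ∫⁻ s, W s := by
    calc ∫⁻ t, W t ≤ ∫⁻ t, ∫⁻ s, h (t - s) * W s := by
          apply lintegral_mono
          intro t
          by_cases ht : t ∈ Set.Ioo 0 T
          · simp only [hW, Set.indicator_of_mem ht]
            exact tsub_le_iff_left.2 (key t ht)
          · rw [hW, Set.indicator_of_notMem ht]
            exact zero_le
      _ = ∫⁻ s, ∫⁻ t, h (t - s) * W s := by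
          apply lintegral_lintegral_swap
          apply AEMeasurable.mul
          · exact (hm.comp (measurable_fst.sub measurable_snd)).aemeasurable
          · exact hWm.comp_snd
      _ = ∫⁻ s, 2⁻¹ * W s := by
          congr 1
          ext s
          have hms : Measurable fun t => h (t - s) := hm.comp (measurable_id.sub measurable_const)
          rw [lintegral_mul_const _ hms,
            lintegral_sub_right_eq_self h s, hh]
      _ = _ := lintegral_const_mul'' _ hWm
  have hW0 : ∫⁻ t, W t = 0 := by
    by_contra hne
    have : 2⁻¹ * ∫⁻ s, W s < 1 * ∫⁻ s, W s :=
      ENNReal.mul_lt_mul_left hne hWfin (by simp)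
    rw [one_mul] at this
    exact absurd hWle (not_le.2 this)
  rw [lintegral_eq_zero_iff' hWm] at hW0
  intro t ht
  have h1 := key t ht
  have : ∫⁻ s, h (t - s) * W s = 0 := by
    rw [← lintegral_zero (μ := (volume : Measure ℝ))]
    apply lintegral_congr_ae
    filter_upwards [hW0] with s hs
    simp [hs]
  rwa [this, add_zero] at h1

lemma fg_int (ρ c₁ k : ℝ) (f : ℝ → ℝ) (hf0 : ∀ t, 0 < t → 0 ≤ f t)
    (hf : LocallyIntegrableOn f (Set.Ioi (0 : ℝ)))
    (hle : ∀ t, 0 < t → f t ≤ c₁ + k * ∫ s in Set.Ioo (0 : ℝ) t, (t - s) ^ (ρ - 1) * f s)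
    (T : ℝ) : IntegrableOn f (Set.Ioo 0 T) := by
  have hmeas : AEStronglyMeasurable f (volume.restrict (Set.Ioo 0 T)) :=
    hf.aestronglyMeasurable.mono_measure
      (Measure.restrict_mono (fun x hx => hx.1) le_rfl)
  by_contra hn
  have hb : ∀ t ∈ Set.Ioo 0 T, f t ≤ c₁ := by
    intro t ht
    have h1 := hle t ht.1
    rw [integral_undef, mul_zero, add_zero] at h1
    · exact h1
    intro hi
    apply hn
    have hA : IntegrableOn f (Set.Icc (t/2) T) := by
      apply hf.integrableOn_compact_subset _ isCompact_Icc
      intro x hx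
      have := ht.1
      have := hx.1
      simp only [Set.mem_Ioi]; linarith
    have hi2 : IntegrableOn (fun s => (t - s) ^ (ρ - 1) * f s) (Set.Icc 0 (t/2)) := by
      rw [integrableOn_Icc_iff_integrableOn_Ioo]
      refine IntegrableOn.mono_set (t := Set.Ioo 0 t) hi ?_
      apply Set.Ioo_subset_Ioo_right
      linarith [ht.1]
    have hB : IntegrableOn f (Set.Icc 0 (t/2)) := by
      have hcont : ContinuousOn (fun s : ℝ => (t - s) ^ (1 - ρ)) (Set.Icc 0 (t/2)) := by
        apply ContinuousOn.rpow_const (by fun_prop)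
        intro x hx
        left
        have := hx.2
        have := ht.1
        linarith
      have := hi2.continuousOn_mul hcont isCompact_Icc
      refine this.congr_fun ?_ measurableSet_Icc
      intro s hs
      have hp : 0 < t - s := by linarith [hs.2, ht.1]
      simp only
      rw [← mul_assoc, ← Real.rpow_add hp]
      simp
    refine (hB.union hA).mono_set ?_
    intro x hx
    rcases le_total x (t/2) with h | h
    · exact Or.inl ⟨hx.1.le, h⟩
    · exact Or.inr ⟨h, hx.2.le⟩
  apply hn
  refine Integrable.of_bound (C := c₁) hmeas ?_
  filter_upwards [ae_restrict_mem measurableSet_Ioo] with x hx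
  rw [Real.norm_of_nonneg (hf0 x hx.1)]
  exact hb x hx

/-- Henry's fractional Gronwall inequality: if a locally integrable nonnegative
function `f` on `(0,∞)` satisfies `f(t) ≤ c₁ + k ∫₀ᵗ (t-s)^{ρ-1} f(s) ds` for all
`t > 0`, then `f(t) ≤ c₂ e^{c₃ k^{1/ρ} t}`, with `c₂, c₃` depending only on `ρ, c₁`. -/
theorem fractional_gronwall (ρ c₁ : ℝ) (hρ : 0 < ρ) (hc₁ : 0 < c₁) :
    ∃ c₂ > (0 : ℝ), ∃ c₃ > (0 : ℝ), ∀ (k : ℝ), 0 < k → ∀ f : ℝ → ℝ,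
      (∀ t, 0 < t → 0 ≤ f t) →
      LocallyIntegrableOn f (Set.Ioi (0 : ℝ)) →
      (∀ t, 0 < t → f t ≤ c₁ + k * ∫ s in Set.Ioo (0 : ℝ) t, (t - s) ^ (ρ - 1) * f s) →
      ∀ t, 0 < t → f t ≤ c₂ * Real.exp (c₃ * k ^ (1 / ρ) * t) := by
  have hΓ : 0 < Real.Gamma ρ := Real.Gamma_pos_of_pos hρ
  refine ⟨2 * c₁, by positivity, (2 * Real.Gamma ρ) ^ (1 / ρ), by positivity, ?_⟩
  intro k hk f hf0 hf hle t₀ ht₀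
  set l : ℝ := (2 * Real.Gamma ρ) ^ (1 / ρ) * k ^ (1 / ρ) with hl
  have hlpos : 0 < l := by positivity
  have hlρ : l ^ ρ = 2 * Real.Gamma ρ * k := by
    rw [hl, ← Real.mul_rpow (by positivity) hk.le, ← Real.rpow_mul (by positivity),
      one_div_mul_cancel hρ.ne', Real.rpow_one]
  set h : ℝ → ENNReal := Set.indicator (Set.Ioi 0)
    (fun s => ENNReal.ofReal (k * (s ^ (ρ - 1) * Real.exp (-(l * s))))) with hh
  have hm : Measurable h := by
    apply Measurable.indicator _ measurableSet_Ioi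
    fun_prop
  have hint : ∫ s in Set.Ioi (0 : ℝ), k * (s ^ (ρ - 1) * Real.exp (-(l * s))) = 2⁻¹ := by
    rw [integral_const_mul, Real.integral_rpow_mul_exp_neg_mul_Ioi hρ hlpos,
      Real.div_rpow zero_le_one hlpos.le, hlρ, Real.one_rpow]
    field_simp
  have hh1 : ∫⁻ s, h s = 2⁻¹ := by
    rw [hh, lintegral_indicator measurableSet_Ioi, ← ofReal_integral_eq_lintegral_ofReal, hint]
    · rw [ENNReal.ofReal_inv_of_pos (by norm_num)]; simp
    · apply Integrable.of_integral_ne_zero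
      rw [hint]; norm_num
    · filter_upwards [ae_restrict_mem measurableSet_Ioi] with s hs
      have : 0 < s := hs
      simp only [Pi.zero_apply]
      positivity
  have hfi := fg_int ρ c₁ k f hf0 hf hle (t₀ + 1)
  have hgi : IntegrableOn (fun s => f s * Real.exp (-(l * s))) (Set.Ioo 0 (t₀ + 1)) := by
    rw [← integrableOn_Icc_iff_integrableOn_Ioo] at hfi ⊢
    exact hfi.mul_continuousOn (by fun_prop) isCompact_Icc
  have main := fg_core (fun s => ENNReal.ofReal (f s * Real.exp (-(l * s)))) h
    (ENNReal.ofReal c₁) (by simp) (t₀ + 1) hgi.aemeasurable.ennreal_ofReal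
    hgi.lintegral_lt_top.ne hm hh1 ?_ t₀ ⟨ht₀, by linarith⟩
  · rw [← ENNReal.ofReal_ofNat, ← ENNReal.ofReal_mul (by norm_num),
      ENNReal.ofReal_le_ofReal_iff (by positivity), Real.exp_neg, ← div_eq_mul_inv,
      div_le_iff₀ (by positivity)] at main
    exact main
  intro t ht
  set J : ℝ := ∫ s in Set.Ioo (0 : ℝ) t, (t - s) ^ (ρ - 1) * f s with hJ
  have hpos : ∀ s ∈ Set.Ioo 0 t, 0 ≤ (t - s) ^ (ρ - 1) * f s := by
    intro s hs
    have h1 : 0 < t - s := by linarith [hs.2]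
    have := hf0 s hs.1
    positivity
  have hJ0 : 0 ≤ J := setIntegral_nonneg measurableSet_Ioo hpos
  have hJle : ENNReal.ofReal J ≤ ∫⁻ s in Set.Ioo (0 : ℝ) t,
      ENNReal.ofReal ((t - s) ^ (ρ - 1) * f s) := by
    by_cases hi : Integrable (fun s => (t - s) ^ (ρ - 1) * f s) (volume.restrict (Set.Ioo 0 t))
    · rw [hJ, ofReal_integral_eq_lintegral_ofReal hi]
      filter_upwards [ae_restrict_mem measurableSet_Ioo] with s hs
      exact hpos s hs
    · rw [hJ, integral_undef hi]; simp
  have he1 : Real.exp (-(l * t)) ≤ 1 := by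
    rw [Real.exp_le_one_iff]
    have := mul_pos hlpos ht.1
    linarith
  calc ENNReal.ofReal (f t * Real.exp (-(l * t)))
      ≤ ENNReal.ofReal (c₁ + (k * Real.exp (-(l * t))) * J) := by
        apply ENNReal.ofReal_le_ofReal
        have h1 := mul_le_mul_of_nonneg_right (hle t ht.1) (Real.exp_pos (-(l * t))).le
        rw [← hJ] at h1
        have h2 := mul_le_mul_of_nonneg_left he1 hc₁.le
        linarith
    _ = ENNReal.ofReal c₁ + ENNReal.ofReal (k * Real.exp (-(l * t))) * ENNReal.ofReal J := by
        rw [ENNReal.ofReal_add hc₁.le (by positivity), ENNReal.ofReal_mul (by positivity)]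
    _ ≤ ENNReal.ofReal c₁ + ENNReal.ofReal (k * Real.exp (-(l * t))) *
          ∫⁻ s in Set.Ioo (0 : ℝ) t, ENNReal.ofReal ((t - s) ^ (ρ - 1) * f s) := by
        gcongr
    _ = _ := by
        rw [← lintegral_const_mul' _ _ (by simp)]
        congr 1
        apply setLIntegral_congr_fun measurableSet_Ioo
        intro s hs
        have h1 : 0 < t - s := by linarith [hs.2]
        have h2 : t - s ∈ Set.Ioi (0 : ℝ) := h1
        simp only [hh, Set.indicator_of_mem h2]
        rw [← ENNReal.ofReal_mul (by positivity), ← ENNReal.ofReal_mul (by positivity)]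
        congr 1
        have : Real.exp (-(l * t)) = Real.exp (-(l * (t - s))) * Real.exp (-(l * s)) := by
          rw [← Real.exp_add]; congr 1; ring
        rw [this]; ring
end

section
/- Suppose 0 < α < 2. Then there exist positive constants c₁ and c₂ (depending on d, α, ν) such that for all x ∈ ℝ^d and all t > 0: c₁ · min( t^{-d/α} , t / |x|^{d+α} ) ≤ p_t(x) ≤ c₂ · min( t^{-d/α} , t / |x|^{d+α} ). -/
open MeasureTheory Real
open scoped RealInnerProductSpace

/-- The heat kernel of the fractional Laplacian `-ν(-Δ)^(α/2)` on `ℝ^d`: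
`p_t(x) = (2π)^{-d} ∫ e^{-i x·z} e^{-tν|z|^α} dz`. -/
noncomputable def stableKernel (d : ℕ) (ν α t : ℝ) (x : EuclideanSpace ℝ (Fin d)) : ℝ :=
  ((2 * Real.pi) ^ d)⁻¹ *
    (∫ z : EuclideanSpace ℝ (Fin d),
      Complex.exp (-(Complex.I * (⟪x, z⟫ : ℝ))) *
        Complex.exp (-((t * ν * ‖z‖ ^ α : ℝ) : ℂ))).re

namespace StableAux
open Filter Topology

/-- real form of the Gaussian Fourier transform -/
noncomputable def gk (d : ℕ) (s : ℝ) (x : EuclideanSpace ℝ (Fin d)) : ℝ :=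
  (Real.pi / s) ^ ((d : ℝ) / 2) * Real.exp (-(‖x‖ ^ 2 / (4 * s)))

lemma gauss_integrable (d : ℕ) {s : ℝ} (hs : 0 < s) :
    Integrable (fun z : EuclideanSpace ℝ (Fin d) => Real.exp (-(s * ‖z‖ ^ 2))) := by
  have h := (GaussianFourier.integrable_cexp_neg_mul_sq_norm_add (b := (s : ℂ)) (by simpa using hs) 0
    (0 : EuclideanSpace ℝ (Fin d))).norm
  refine h.congr (Eventually.of_forall fun z => ?_)
  simp only [Complex.norm_exp]
  congr 1
  simp [← Complex.ofReal_pow]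

lemma gauss_fourier (d : ℕ) {s : ℝ} (hs : 0 < s) (x : EuclideanSpace ℝ (Fin d)) :
    ∫ z : EuclideanSpace ℝ (Fin d), Real.cos ⟪x, z⟫ * Real.exp (-(s * ‖z‖ ^ 2)) = gk d s x := by
  have hi := GaussianFourier.integrable_cexp_neg_mul_sq_norm_add (b := (s : ℂ)) (by simpa using hs)
    Complex.I x
  have h := GaussianFourier.integral_cexp_neg_mul_sq_norm_add (b := (s : ℂ)) (by simpa using hs)
    Complex.I x
  have h2 := congrArg Complex.re h
  have h3 := integral_re hi
  simp only [RCLike.re_eq_complex_re] at h3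
  rw [← h3] at h2
  have e : ∀ z : EuclideanSpace ℝ (Fin d),
      (Complex.exp (-(s : ℂ) * (‖z‖ : ℂ) ^ 2 + Complex.I * ((⟪x, z⟫ : ℝ) : ℂ))).re =
      Real.cos ⟪x, z⟫ * Real.exp (-(s * ‖z‖ ^ 2)) := by
    intro z
    rw [Complex.exp_re]
    simp [← Complex.ofReal_pow]
    ring
  simp_rw [e] at h2
  rw [h2, gk]
  have e2 : ((Real.pi : ℂ) / (s : ℂ)) ^ ((Module.finrank ℝ (EuclideanSpace ℝ (Fin d)) : ℂ) / 2)
      = (((Real.pi / s) ^ ((d : ℝ) / 2) : ℝ) : ℂ) := by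
    rw [Complex.ofReal_cpow (by positivity)]
    simp
  rw [e2]
  have e3 : Complex.exp (Complex.I ^ 2 * (‖x‖ : ℂ) ^ 2 / (4 * (s : ℂ))) =
      ((Real.exp (-(‖x‖ ^ 2 / (4 * s))) : ℝ) : ℂ) := by
    push_cast
    congr 1
    rw [Complex.I_sq]; ring
  rw [e3, ← Complex.ofReal_mul, Complex.ofReal_re]

/-- `L` is the Laplace transform of a finite measure on `[0,∞)` -/
def LRep (L : ℝ → ℝ) : Prop :=
  ∃ μ : Measure ℝ, IsFiniteMeasure μ ∧ (∀ᵐ s ∂μ, 0 ≤ s) ∧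
    ∀ l : ℝ, 0 ≤ l → ∫ s, Real.exp (-(l * s)) ∂μ = L l

lemma exp_int (μ : Measure ℝ) [IsFiniteMeasure μ] (h : ∀ᵐ s ∂μ, 0 ≤ s) {l : ℝ} (hl : 0 ≤ l) :
    Integrable (fun s => Real.exp (-(l * s))) μ := by
  refine Integrable.mono' (integrable_const (1 : ℝ)) (by fun_prop) ?_
  filter_upwards [h] with s hs
  rw [Real.norm_eq_abs, abs_of_pos (Real.exp_pos _), Real.exp_le_one_iff]
  have := mul_nonneg hl hs
  linarith

lemma LRep.zero : LRep (fun _ => 0) := ⟨0, inferInstance, by simp, by simp⟩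

lemma LRep.one : LRep (fun _ => 1) :=
  ⟨Measure.dirac 0, inferInstance, by simp [ae_dirac_eq], by simp⟩

lemma LRep.add {L M : ℝ → ℝ} (hL : LRep L) (hM : LRep M) : LRep (fun l => L l + M l) := by
  obtain ⟨μ, _, h0, h⟩ := hL
  obtain ⟨μ', _, h0', h'⟩ := hM
  refine ⟨μ + μ', inferInstance, ?_, fun l hl => ?_⟩
  · rw [ae_add_measure_iff]; exact ⟨h0, h0'⟩
  · rw [integral_add_measure (exp_int _ h0 hl) (exp_int _ h0' hl), h l hl, h' l hl]

lemma LRep.smul {L : ℝ → ℝ} (hL : LRep L) {c : ℝ} (hc : 0 ≤ c) : LRep (fun l => c * L l) := by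
  obtain ⟨μ, _, h0, h⟩ := hL
  refine ⟨(ENNReal.ofReal c) • μ, Measure.smul_finite _ ENNReal.ofReal_ne_top, ?_, fun l hl => ?_⟩
  · exact Measure.ae_smul_measure h0 _
  · rw [integral_smul_measure, h l hl, ENNReal.toReal_ofReal hc, smul_eq_mul]

lemma LRep.mul {L M : ℝ → ℝ} (hL : LRep L) (hM : LRep M) : LRep (fun l => L l * M l) := by
  obtain ⟨μ, _, h0, h⟩ := hL
  obtain ⟨μ', _, h0', h'⟩ := hM
  have hc0 : ∀ᵐ s ∂(μ.conv μ'), 0 ≤ s := by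
    rw [Measure.conv, ae_map_iff (by fun_prop) measurableSet_Ici]
    have a1 : ∀ᵐ p ∂(μ.prod μ'), 0 ≤ p.1 := Measure.quasiMeasurePreserving_fst.ae h0
    have a2 : ∀ᵐ p ∂(μ.prod μ'), 0 ≤ p.2 := Measure.quasiMeasurePreserving_snd.ae h0'
    filter_upwards [a1, a2] with p h1 h2
    exact add_nonneg h1 h2
  refine ⟨μ.conv μ', inferInstance, hc0, fun l hl => ?_⟩
  rw [integral_conv (exp_int _ hc0 hl)]
  simp_rw [mul_add, neg_add, Real.exp_add]
  simp_rw [integral_const_mul, integral_mul_const, h l hl, h' l hl]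

lemma LRep.pow {L : ℝ → ℝ} (hL : LRep L) (n : ℕ) : LRep (fun l => L l ^ n) := by
  induction n with
  | zero => simpa using LRep.one
  | succ k ih => simpa [pow_succ] using ih.mul hL

lemma LRep.sum {L : ℕ → ℝ → ℝ} (hL : ∀ k, LRep (L k)) (n : ℕ) :
    LRep (fun l => ∑ k ∈ Finset.range n, L k l) := by
  induction n with
  | zero => simpa using LRep.zero
  | succ k ih => simpa [Finset.sum_range_succ] using ih.add (hL k)

/-- Fourier integral of the damped profile -/
noncomputable def fk (d : ℕ) (η : ℝ) (L : ℝ → ℝ) (x : EuclideanSpace ℝ (Fin d)) : ℝ :=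
  ∫ z : EuclideanSpace ℝ (Fin d), Real.cos ⟪x, z⟫ * (Real.exp (-(η * ‖z‖ ^ 2)) * L (‖z‖ ^ 2))

def Good (d : ℕ) (L : ℝ → ℝ) : Prop :=
  Measurable (fun z : EuclideanSpace ℝ (Fin d) => L (‖z‖ ^ 2)) ∧
  ∀ η > 0, ∀ x : EuclideanSpace ℝ (Fin d), ∀ (b : ℝ) (a l : Fin 3 → ℝ), (∀ i, 0 ≤ l i) →
    (∀ s ≥ η, 0 ≤ b * gk d s x + ∑ i, a i * Real.exp (-(l i * s))) →
    0 ≤ b * fk d η L x + ∑ i, a i * (Real.exp (-(l i * η)) * L (l i))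

lemma LRep.good {L : ℝ → ℝ} (hL : LRep L) (d : ℕ) : Good d L := by
  obtain ⟨μ, _, h0, h⟩ := hL
  have hz : ∀ z : EuclideanSpace ℝ (Fin d), L (‖z‖ ^ 2) = ∫ s, Real.exp (-(‖z‖ ^ 2 * s)) ∂μ :=
    fun z => (h _ (by positivity)).symm
  refine ⟨?_, ?_⟩
  · simp_rw [hz]
    refine StronglyMeasurable.measurable ?_
    refine StronglyMeasurable.integral_prod_right
      (f := fun (z : EuclideanSpace ℝ (Fin d)) (s : ℝ) => Real.exp (-(‖z‖ ^ 2 * s))) ?_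
    exact Continuous.stronglyMeasurable (by simp only [Function.uncurry_def]; fun_prop)
  · intro η hη x b a l hl hpos
    have hint : Integrable (Function.uncurry fun (z : EuclideanSpace ℝ (Fin d)) (s : ℝ) =>
        Real.cos ⟪x, z⟫ * (Real.exp (-(η * ‖z‖ ^ 2)) * Real.exp (-(‖z‖ ^ 2 * s))))
        ((volume : Measure (EuclideanSpace ℝ (Fin d))).prod μ) := by
      have hb := (gauss_integrable d hη).mul_prod (integrable_const (1 : ℝ) (μ := μ))
      refine hb.mono' (Continuous.aestronglyMeasurable (by simp only [Function.uncurry_def]; fun_prop)) ?_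
      have a2 : ∀ᵐ p ∂((volume : Measure (EuclideanSpace ℝ (Fin d))).prod μ), 0 ≤ p.2 :=
        Measure.quasiMeasurePreserving_snd.ae h0
      filter_upwards [a2] with p hp
      simp only [Function.uncurry_def, norm_mul, Real.norm_eq_abs, Real.abs_exp, mul_one]
      have c1 := Real.abs_cos_le_one ⟪x, p.1⟫
      have c2 : Real.exp (-(‖p.1‖ ^ 2 * p.2)) ≤ 1 := by
        rw [Real.exp_le_one_iff]
        have := mul_nonneg (sq_nonneg ‖p.1‖) hp
        linarith
      have c3 := Real.exp_pos (-(η * ‖p.1‖ ^ 2))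
      calc _ ≤ 1 * (Real.exp (-(η * ‖p.1‖ ^ 2)) * 1) := by gcongr
        _ = _ := by ring
    have hinner : ∀ s : ℝ, 0 ≤ s → ∫ z : EuclideanSpace ℝ (Fin d),
        Real.cos ⟪x, z⟫ * (Real.exp (-(η * ‖z‖ ^ 2)) * Real.exp (-(‖z‖ ^ 2 * s))) = gk d (s + η) x := by
      intro s hs
      rw [← gauss_fourier d (by linarith : 0 < s + η)]
      congr 1; ext z
      rw [← Real.exp_add]; congr 2; ring
    have hfk : fk d η L x = ∫ s, gk d (s + η) x ∂μ := by
      rw [fk]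
      simp_rw [hz, ← integral_const_mul]
      rw [integral_integral_swap hint]
      refine integral_congr_ae ?_
      filter_upwards [h0] with s hs using hinner s hs
    have hgi : Integrable (fun s => gk d (s + η) x) μ := by
      refine hint.integral_prod_right.congr ?_
      filter_upwards [h0] with s hs using hinner s hs
    have hei : ∀ i, Integrable (fun s => Real.exp (-(l i * (s + η)))) μ := by
      intro i
      have := (exp_int μ h0 (hl i)).mul_const (Real.exp (-(l i * η)))
      refine this.congr (Eventually.of_forall fun s => ?_)
      simp only
      rw [← Real.exp_add]; congr 1; ring
    have hev : ∀ i, ∫ s, Real.exp (-(l i * (s + η))) ∂μ = Real.exp (-(l i * η)) * L (l i) := by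
      intro i
      rw [← h _ (hl i), ← integral_const_mul]
      congr 1; ext s; rw [← Real.exp_add]; congr 1; ring
    have key : b * fk d η L x + ∑ i, a i * (Real.exp (-(l i * η)) * L (l i)) =
        ∫ s, (b * gk d (s + η) x + ∑ i, a i * Real.exp (-(l i * (s + η)))) ∂μ := by
      rw [integral_add (hgi.const_mul b) (integrable_finsetSum _ fun i _ => (hei i).const_mul (a i)),
        integral_finsetSum _ (fun i _ => (hei i).const_mul (a i)), integral_const_mul, hfk]
      simp_rw [integral_const_mul, hev]
    rw [key]
    refine integral_nonneg_of_ae ?_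
    filter_upwards [h0] with s hs
    exact hpos _ (by linarith)

lemma Good.lim {d : ℕ} {Ln : ℕ → ℝ → ℝ} {L : ℝ → ℝ} (hg : ∀ n, Good d (Ln n))
    (hb : ∀ n l, 0 ≤ l → |Ln n l| ≤ 1)
    (ht : ∀ l, 0 ≤ l → Tendsto (fun n => Ln n l) atTop (𝓝 (L l))) : Good d L := by
  refine ⟨?_, ?_⟩
  · refine measurable_of_tendsto_metrizable (fun n => (hg n).1) ?_
    rw [tendsto_pi_nhds]
    exact fun z => ht _ (by positivity)
  · intro η hη x b a l hl hpos
    have hk : Tendsto (fun n => fk d η (Ln n) x) atTop (𝓝 (fk d η L x)) := by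
      refine tendsto_integral_of_dominated_convergence (fun z => Real.exp (-(η * ‖z‖ ^ 2))) ?_
        (gauss_integrable d hη) ?_ ?_
      · intro n
        have := (hg n).1
        refine Measurable.aestronglyMeasurable ?_
        exact (by fun_prop : Measurable fun z : EuclideanSpace ℝ (Fin d) => Real.cos ⟪x, z⟫).mul
          ((by fun_prop : Measurable fun z : EuclideanSpace ℝ (Fin d) => Real.exp (-(η * ‖z‖ ^ 2))).mul this)
      · intro n
        refine Eventually.of_forall fun z => ?_
        simp only [norm_mul, Real.norm_eq_abs, Real.abs_exp]
        have c1 := Real.abs_cos_le_one ⟪x, z⟫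
        have c2 := hb n (‖z‖ ^ 2) (by positivity)
        have c3 := Real.exp_pos (-(η * ‖z‖ ^ 2))
        calc _ ≤ 1 * (Real.exp (-(η * ‖z‖ ^ 2)) * 1) := by gcongr
          _ = _ := by ring
      · refine Eventually.of_forall fun z => ?_
        exact ((ht _ (by positivity)).const_mul _).const_mul _
    refine ge_of_tendsto' ((hk.const_mul b).add (tendsto_finsetSum _ fun i _ =>
      ((ht (l i) (hl i)).const_mul (Real.exp (-(l i * η)))).const_mul (a i))) (fun n => ?_)
    exact (hg n).2 η hη x b a l hl hpos

lemma good_exp {d : ℕ} {F : ℝ → ℝ} (hF : LRep F) {M : ℝ} (hb : ∀ l, 0 ≤ l → 0 ≤ F l ∧ F l ≤ M) :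
    Good d (fun l => Real.exp (F l - M)) := by
  have hr : ∀ n, LRep (fun l => Real.exp (-M) * ∑ k ∈ Finset.range n, (k.factorial : ℝ)⁻¹ * F l ^ k) :=
    fun n => (LRep.sum (fun k => (hF.pow k).smul (by positivity)) n).smul (Real.exp_pos _).le
  have hsum : ∀ l n, ∑ k ∈ Finset.range n, (k.factorial : ℝ)⁻¹ * F l ^ k =
      ∑ k ∈ Finset.range n, F l ^ k / k.factorial := by
    intro l n
    exact Finset.sum_congr rfl fun k _ => by rw [div_eq_inv_mul]
  refine Good.lim (fun n => (hr n).good d) ?_ ?_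
  · intro n l hl
    obtain ⟨h0, h1⟩ := hb l hl
    have := Real.sum_le_exp_of_nonneg h0 n
    rw [hsum, abs_of_nonneg (by positivity)]
    calc _ ≤ Real.exp (-M) * Real.exp (F l) := by gcongr
      _ = Real.exp (F l - M) := by rw [← Real.exp_add]; congr 1; ring
      _ ≤ 1 := by rw [Real.exp_le_one_iff]; linarith
  · intro l hl
    have h := (NormedSpace.expSeries_div_hasSum_exp (F l)).tendsto_sum_nat
    rw [← Real.exp_eq_exp_ℝ] at h
    have h2 := h.const_mul (Real.exp (-M))
    rw [← Real.exp_add] at h2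
    simp_rw [hsum]
    convert h2 using 3
    ring

lemma lrep_tail {β ε : ℝ} (hβ : 0 < β) (hε : 0 < ε) :
    LRep (fun l => ∫ s in Set.Ioi ε, Real.exp (-(l * s)) * s ^ (-1 - β)) := by
  have hi : IntegrableOn (fun s : ℝ => s ^ (-1 - β)) (Set.Ioi ε) :=
    integrableOn_Ioi_rpow_of_lt (by linarith) hε
  have hm : Measurable (fun s : ℝ => s ^ (-1 - β)) := by fun_prop
  have hpos : ∀ᵐ s ∂(volume.restrict (Set.Ioi ε)), 0 ≤ s := by
    filter_upwards [ae_restrict_mem measurableSet_Ioi] with s hs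
    exact (hε.trans hs).le
  refine ⟨(volume.restrict (Set.Ioi ε)).withDensity (fun s => ENNReal.ofReal (s ^ (-1 - β))),
    isFiniteMeasure_withDensity_ofReal hi.2, (withDensity_absolutelyContinuous _ _) hpos, ?_⟩
  intro l hl
  rw [integral_withDensity_eq_integral_toReal_smul (by fun_prop) (by simp)]
  refine integral_congr_ae ?_
  filter_upwards [hpos] with s hs
  rw [ENNReal.toReal_ofReal (by positivity), smul_eq_mul, mul_comm]

lemma levy_int {β l : ℝ} (hβ : 0 < β) (hβ1 : β < 1) (hl : 0 ≤ l) :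
    IntegrableOn (fun s : ℝ => (1 - Real.exp (-(l * s))) * s ^ (-1 - β)) (Set.Ioi 0) := by
  rw [← Set.Ioc_union_Ioi_eq_Ioi (zero_le_one : (0:ℝ) ≤ 1)]
  have hm : Measurable (fun s : ℝ => (1 - Real.exp (-(l * s))) * s ^ (-1 - β)) := by fun_prop
  refine IntegrableOn.union ?_ ?_
  · have h1 : IntegrableOn (fun s : ℝ => l * s ^ (-β)) (Set.Ioc 0 1) := by
      rw [← intervalIntegrable_iff_integrableOn_Ioc_of_le zero_le_one]
      exact (intervalIntegral.intervalIntegrable_rpow' (by linarith)).const_mul l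
    refine h1.mono' hm.aestronglyMeasurable ?_
    filter_upwards [ae_restrict_mem measurableSet_Ioc] with s hs
    have hs0 : 0 < s := hs.1
    have e1 : 0 ≤ 1 - Real.exp (-(l * s)) := by
      have : Real.exp (-(l * s)) ≤ 1 := by rw [Real.exp_le_one_iff]; nlinarith
      linarith
    have e2 : 1 - Real.exp (-(l * s)) ≤ l * s := by
      have := Real.add_one_le_exp (-(l * s)); linarith
    rw [Real.norm_eq_abs, abs_of_nonneg (by positivity)]
    calc _ ≤ (l * s) * s ^ (-1 - β) := by gcongr
      _ = l * (s ^ (1:ℝ) * s ^ (-1 - β)) := by rw [Real.rpow_one]; ring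
      _ = _ := by rw [← Real.rpow_add hs0]; congr 2; ring
  · have h1 : IntegrableOn (fun s : ℝ => s ^ (-1 - β)) (Set.Ioi 1) :=
      integrableOn_Ioi_rpow_of_lt (by linarith) one_pos
    refine h1.mono' hm.aestronglyMeasurable ?_
    filter_upwards [ae_restrict_mem measurableSet_Ioi] with s hs
    have hs0 : 0 < s := lt_trans one_pos hs
    have e1 : 0 ≤ 1 - Real.exp (-(l * s)) := by
      have : Real.exp (-(l * s)) ≤ 1 := by rw [Real.exp_le_one_iff]; nlinarith
      linarith
    have e2 := Real.exp_pos (-(l * s))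
    rw [Real.norm_eq_abs, abs_of_nonneg (by positivity)]
    calc _ ≤ 1 * s ^ (-1 - β) := by gcongr; linarith
      _ = _ := one_mul _

lemma levy_scale {β l : ℝ} (hβ : 0 < β) (hl : 0 ≤ l) :
    ∫ s in Set.Ioi (0:ℝ), (1 - Real.exp (-(l * s))) * s ^ (-1 - β) =
      l ^ β * ∫ s in Set.Ioi (0:ℝ), (1 - Real.exp (-s)) * s ^ (-1 - β) := by
  rcases hl.eq_or_lt with rfl | hl
  · simp [Real.zero_rpow hβ.ne']
  · have h := integral_comp_mul_left_Ioi (fun s : ℝ => (1 - Real.exp (-s)) * s ^ (-1 - β)) 0 hl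
    rw [mul_zero, smul_eq_mul] at h
    have h2 : l ^ β * ∫ s in Set.Ioi (0:ℝ), (1 - Real.exp (-s)) * s ^ (-1 - β) =
        l ^ (1 + β) * (l⁻¹ * ∫ s in Set.Ioi (0:ℝ), (1 - Real.exp (-s)) * s ^ (-1 - β)) := by
      rw [Real.rpow_add hl, Real.rpow_one]; field_simp
    rw [h2, ← h, ← integral_const_mul]
    refine setIntegral_congr_fun measurableSet_Ioi fun s hs => ?_
    have hs : 0 < s := hs
    rw [Real.mul_rpow hl.le hs.le, show (-1 - β) = -(1 + β) by ring, Real.rpow_neg hl.le]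
    have := Real.rpow_pos_of_pos hl (1 + β)
    field_simp

lemma levy_pos {β : ℝ} (hβ : 0 < β) (hβ1 : β < 1) :
    0 < ∫ s in Set.Ioi (0:ℝ), (1 - Real.exp (-s)) * s ^ (-1 - β) := by
  have hi := levy_int hβ hβ1 zero_le_one
  simp only [one_mul] at hi
  have hp : ∀ s : ℝ, 0 < s → 0 < (1 - Real.exp (-s)) * s ^ (-1 - β) := by
    intro s hs
    have : Real.exp (-s) < 1 := by rw [Real.exp_lt_one_iff]; linarith
    have := Real.rpow_pos_of_pos hs (-1 - β)
    apply mul_pos <;> linarith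
  rw [setIntegral_pos_iff_support_of_nonneg_ae _ hi]
  · have : Set.Ioi (0:ℝ) ⊆ (Function.support fun s : ℝ => (1 - Real.exp (-s)) * s ^ (-1 - β)) ∩ Set.Ioi 0 :=
      fun s hs => ⟨(hp s hs).ne', hs⟩
    exact lt_of_lt_of_le (by simp) (measure_mono this)
  · filter_upwards [ae_restrict_mem measurableSet_Ioi] with s hs using (hp s hs).le

lemma good_stable (d : ℕ) {β τ : ℝ} (hβ : 0 < β) (hβ1 : β < 1) (hτ : 0 < τ) :
    Good d (fun l => Real.exp (-(τ * l ^ β))) := by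
  set A := ∫ s in Set.Ioi (0:ℝ), (1 - Real.exp (-s)) * s ^ (-1 - β) with hA
  have hApos : 0 < A := levy_pos hβ hβ1
  set e : ℕ → ℝ := fun n => 1 / ((n : ℝ) + 1) with he
  have hepos : ∀ n, 0 < e n := fun n => by simp only [he]; positivity
  have hpi : ∀ n, IntegrableOn (fun s : ℝ => s ^ (-1 - β)) (Set.Ioi (e n)) := fun n =>
    integrableOn_Ioi_rpow_of_lt (by linarith) (hepos n)
  have hji : ∀ n l, 0 ≤ l →
      IntegrableOn (fun s : ℝ => (1 - Real.exp (-(l * s))) * s ^ (-1 - β)) (Set.Ioi (e n)) := fun n l hl =>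
    (levy_int hβ hβ1 hl).mono_set (Set.Ioi_subset_Ioi (hepos n).le)
  have hsplit : ∀ n l, 0 ≤ l → ∫ s in Set.Ioi (e n), Real.exp (-(l * s)) * s ^ (-1 - β) =
      (∫ s in Set.Ioi (e n), s ^ (-1 - β)) -
        ∫ s in Set.Ioi (e n), (1 - Real.exp (-(l * s))) * s ^ (-1 - β) := by
    intro n l hl
    rw [← integral_sub (hpi n) (hji n l hl)]
    congr 1; ext s; ring
  have hjnn : ∀ n l, 0 ≤ l → 0 ≤ ∫ s in Set.Ioi (e n), (1 - Real.exp (-(l * s))) * s ^ (-1 - β) := by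
    intro n l hl
    refine setIntegral_nonneg measurableSet_Ioi fun s hs => ?_
    have hs0 : 0 < s := (hepos n).trans hs
    have : Real.exp (-(l * s)) ≤ 1 := by rw [Real.exp_le_one_iff]; nlinarith
    exact mul_nonneg (by linarith) (by positivity)
  have hc : 0 < τ / A := by positivity
  have hg : ∀ n, Good d (fun l => Real.exp (τ / A * (∫ s in Set.Ioi (e n), Real.exp (-(l * s)) * s ^ (-1 - β))
      - τ / A * ∫ s in Set.Ioi (e n), s ^ (-1 - β))) := by
    intro n
    refine good_exp ((lrep_tail hβ (hepos n)).smul hc.le) fun l hl => ⟨?_, ?_⟩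
    · refine mul_nonneg hc.le (setIntegral_nonneg measurableSet_Ioi fun s hs => ?_)
      have hs0 : 0 < s := (hepos n).trans hs
      positivity
    · refine mul_le_mul_of_nonneg_left ?_ hc.le
      rw [hsplit n l hl]
      linarith [hjnn n l hl]
  have heq : ∀ n l, 0 ≤ l → τ / A * (∫ s in Set.Ioi (e n), Real.exp (-(l * s)) * s ^ (-1 - β))
      - τ / A * (∫ s in Set.Ioi (e n), s ^ (-1 - β)) =
      -(τ / A * ∫ s in Set.Ioi (e n), (1 - Real.exp (-(l * s))) * s ^ (-1 - β)) := by
    intro n l hl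
    rw [hsplit n l hl]; ring
  refine Good.lim hg ?_ ?_
  · intro n l hl
    rw [Real.abs_exp, heq n l hl, Real.exp_le_one_iff]
    have := mul_nonneg hc.le (hjnn n l hl)
    linarith
  · intro l hl
    simp only [heq _ l hl]
    have hU : (⋃ n, Set.Ioi (e n)) = Set.Ioi 0 := by
      ext s
      simp only [Set.mem_iUnion, Set.mem_Ioi]
      constructor
      · rintro ⟨n, hn⟩; exact (hepos n).trans hn
      · intro hs; exact exists_nat_one_div_lt hs
    have hmono : Monotone fun n => Set.Ioi (e n) := by
      intro m n hmn
      refine Set.Ioi_subset_Ioi ?_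
      exact Nat.one_div_le_one_div hmn
    have ht := tendsto_setIntegral_of_monotone (μ := volume) (fun n => (measurableSet_Ioi : MeasurableSet (Set.Ioi (e n))))
      hmono (f := fun s : ℝ => (1 - Real.exp (-(l * s))) * s ^ (-1 - β))
      (by rw [hU]; exact levy_int hβ hβ1 hl)
    rw [hU, levy_scale hβ hl, ← hA] at ht
    have h3 := ((ht.const_mul (τ / A)).neg)
    have h4 : -(τ / A * (l ^ β * A)) = -(τ * l ^ β) := by field_simp
    rw [h4] at h3
    exact (Real.continuous_exp.tendsto _).comp h3

lemma good_zero {d : ℕ} {L : ℝ → ℝ} (hg : Good d L)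
    (hi : Integrable (fun z : EuclideanSpace ℝ (Fin d) => L (‖z‖ ^ 2)))
    (x : EuclideanSpace ℝ (Fin d)) (b : ℝ) (a l : Fin 3 → ℝ) (hl : ∀ i, 0 ≤ l i)
    (hpos : ∀ s > 0, 0 ≤ b * gk d s x + ∑ i, a i * Real.exp (-(l i * s))) :
    0 ≤ b * fk d 0 L x + ∑ i, a i * L (l i) := by
  have hk : Tendsto (fun η => fk d η L x) (𝓝[>] 0) (𝓝 (fk d 0 L x)) := by
    refine tendsto_integral_filter_of_dominated_convergence (fun z => ‖L (‖z‖ ^ 2)‖) ?_ ?_ hi.norm ?_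
    · refine Eventually.of_forall fun η => Measurable.aestronglyMeasurable ?_
      exact (by fun_prop : Measurable fun z : EuclideanSpace ℝ (Fin d) => Real.cos ⟪x, z⟫).mul
          ((by fun_prop : Measurable fun z : EuclideanSpace ℝ (Fin d) => Real.exp (-(η * ‖z‖ ^ 2))).mul hg.1)
    · filter_upwards [self_mem_nhdsWithin] with η hη
      have hη : 0 < η := hη
      refine Eventually.of_forall fun z => ?_
      simp only [norm_mul, Real.norm_eq_abs, Real.abs_exp]
      have c1 := Real.abs_cos_le_one ⟪x, z⟫
      have c3 : Real.exp (-(η * ‖z‖ ^ 2)) ≤ 1 := by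
        rw [Real.exp_le_one_iff]
        have : 0 ≤ η * ‖z‖ ^ 2 := by positivity
        linarith
      calc _ ≤ 1 * (1 * |L (‖z‖ ^ 2)|) := by gcongr
        _ = _ := by ring
    · refine Eventually.of_forall fun z => ?_
      have : Continuous fun η : ℝ => Real.cos ⟪x, z⟫ * (Real.exp (-(η * ‖z‖ ^ 2)) * L (‖z‖ ^ 2)) := by
        fun_prop
      exact this.continuousAt.tendsto.mono_left nhdsWithin_le_nhds
  have hs : Tendsto (fun η : ℝ => ∑ i, a i * (Real.exp (-(l i * η)) * L (l i))) (𝓝[>] 0)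
      (𝓝 (∑ i, a i * L (l i))) := by
    have : Continuous (fun η : ℝ => ∑ i, a i * (Real.exp (-(l i * η)) * L (l i))) := by fun_prop
    have h := (this.tendsto 0).mono_left (nhdsWithin_le_nhds (s := Set.Ioi 0))
    simpa using h
  refine ge_of_tendsto ((hk.const_mul b).add hs) ?_
  filter_upwards [self_mem_nhdsWithin] with η hη
  have hη : 0 < η := hη
  exact hg.2 η hη x b a l hl fun s hs => hpos s (lt_of_lt_of_le hη hs)

lemma pow_exp_bound (k : ℕ) {w : ℝ} (hw : 0 ≤ w) :
    w ^ k ≤ 4 ^ k * k.factorial * Real.exp (w / 4) := by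
  have h := Real.pow_div_factorial_le_exp (x := w / 4) (by positivity) k
  rw [div_pow, div_le_iff₀ (by positivity), div_le_iff₀ (by positivity)] at h
  linarith

lemma half_pow (d : ℕ) {w : ℝ} (hw : 0 ≤ w) : w ^ ((d : ℝ) / 2) ≤ 1 + w ^ d := by
  rcases le_total w 1 with h | h
  · have := Real.rpow_le_one hw h (by positivity : 0 ≤ (d : ℝ) / 2)
    have : 0 ≤ w ^ d := by positivity
    linarith
  · have := Real.rpow_le_rpow_of_exponent_le h (by linarith [Nat.cast_nonneg (α := ℝ) d] : (d : ℝ) / 2 ≤ d)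
    rw [Real.rpow_natCast] at this
    linarith

lemma up_bound (d : ℕ) : ∃ C > 0, ∀ w > (0 : ℝ),
    w ^ ((d : ℝ) / 2) * Real.exp (-(w / 4)) ≤ C * (1 - Real.exp (-(1 / w))) := by
  refine ⟨4 ^ 0 * (0 : ℕ).factorial + 4 ^ 1 * (1 : ℕ).factorial + 4 ^ d * d.factorial
    + 4 ^ (d + 1) * (d + 1).factorial, by positivity, fun w hw => ?_⟩
  set C : ℝ := 4 ^ 0 * (0 : ℕ).factorial + 4 ^ 1 * (1 : ℕ).factorial + 4 ^ d * d.factorial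
    + 4 ^ (d + 1) * (d + 1).factorial
  have hC : 0 < C := by positivity
  have h1 : 1 / (w + 1) ≤ 1 - Real.exp (-(1 / w)) := by
    have := Real.add_one_le_exp (1 / w)
    rw [Real.exp_neg]
    have h2 : (Real.exp (1 / w))⁻¹ ≤ (1 / w + 1)⁻¹ := by gcongr
    have h3 : (1 / w + 1)⁻¹ = 1 - 1 / (w + 1) := by field_simp; ring
    linarith
  have h4 : w ^ ((d : ℝ) / 2) * (w + 1) ≤ C * Real.exp (w / 4) := by
    have b0 := pow_exp_bound 0 hw.le
    have b1 := pow_exp_bound 1 hw.le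
    have b2 := pow_exp_bound d hw.le
    have b3 := pow_exp_bound (d + 1) hw.le
    calc _ ≤ (1 + w ^ d) * (w + 1) := by gcongr; exact half_pow d hw.le
      _ = w ^ 0 + w ^ 1 + w ^ d + w ^ (d + 1) := by ring
      _ ≤ _ := by simp only [C, add_mul]; linarith
  calc w ^ ((d : ℝ) / 2) * Real.exp (-(w / 4)) ≤ C * (1 / (w + 1)) := by
        rw [mul_one_div, le_div_iff₀ (by positivity), Real.exp_neg]
        have := Real.exp_pos (w / 4)
        field_simp
        linarith
    _ ≤ _ := by gcongr

lemma deriv_lower {h : ℝ → ℝ} {h' m : ℝ} (h0 : h 0 = 0) (hd : HasDerivAt h h' 0) (hm : m < h') :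
    ∃ e > 0, ∀ y, 0 ≤ y → y ≤ e → m * y ≤ h y := by
  have := hd.isLittleO.def (by linarith : 0 < h' - m)
  rw [Metric.eventually_nhds_iff] at this
  obtain ⟨e, he, H⟩ := this
  refine ⟨e / 2, by positivity, fun y hy hye => ?_⟩
  have := @H y (by rw [Real.dist_eq, sub_zero, abs_of_nonneg hy]; linarith)
  simp only [h0, sub_zero, Real.norm_eq_abs, smul_eq_mul, abs_of_nonneg hy] at this
  have := (abs_le.1 this).1
  nlinarith

lemma three_deriv (p q r : ℝ) :
    HasDerivAt (fun y : ℝ => Real.exp (-(p * y)) - 2 * Real.exp (-(q * y)) + Real.exp (-(r * y)))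
      (2 * q - p - r) 0 := by
  have e : ∀ p : ℝ, HasDerivAt (fun y : ℝ => Real.exp (-(p * y))) (-p) 0 := by
    intro p
    have := ((hasDerivAt_id (0:ℝ)).const_mul p).neg.exp
    simpa using this
  have := ((e p).sub ((e q).const_mul 2)).add (e r)
  refine this.congr_deriv ?_
  ring

lemma low_bound (d : ℕ) {D : ℝ} (hD : 3 < D) : ∃ C > 0, ∀ w > (0 : ℝ),
    Real.exp (-(1 / w)) - 2 * Real.exp (-(2 * (1 / w))) + Real.exp (-(D * (1 / w)))
      ≤ C * (w ^ ((d : ℝ) / 2) * Real.exp (-(w / 4))) := by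
  obtain ⟨u, hu, H⟩ := deriv_lower (m := 0) (h := fun y : ℝ => -(Real.exp (-(1 * y)) - 2 * Real.exp (-(2 * y)) + Real.exp (-(D * y))))
    (by norm_num) (three_deriv 1 2 D).neg (by linarith)
  refine ⟨2 * Real.exp (1 / (4 * u)) * (1 + d.factorial), by positivity, fun w hw => ?_⟩
  rcases le_total (1 / w) u with h | h
  · have := H (1 / w) (by positivity) h
    simp only [zero_mul, one_mul] at this
    have h2 : 0 ≤ 2 * Real.exp (1 / (4 * u)) * (1 + d.factorial) * (w ^ ((d : ℝ) / 2) * Real.exp (-(w / 4))) := by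
      positivity
    linarith
  · have hwu : w ≤ 1 / u := by
      rw [le_div_iff₀ hu]; rw [le_div_iff₀ hw] at h; linarith
    set v := 1 / w with hv
    have hv0 : 0 < v := by positivity
    have e1 : Real.exp (-(D * v)) ≤ Real.exp (-v) := by
      rw [Real.exp_le_exp]; nlinarith
    have e2 := Real.exp_pos (-(2 * v))
    have e3 : v ^ ((d : ℝ) / 2) ≤ (1 + d.factorial) * Real.exp v := by
      have := Real.pow_div_factorial_le_exp (x := v) hv0.le d
      rw [div_le_iff₀ (by positivity)] at this
      have h1 := Real.one_le_exp hv0.le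
      have := half_pow d hv0.le
      linarith
    have e4 : w ^ ((d : ℝ) / 2) = (v ^ ((d : ℝ) / 2))⁻¹ := by
      rw [← Real.inv_rpow hv0.le, hv]; simp
    have e5 : Real.exp (-v) ≤ (1 + d.factorial) * w ^ ((d : ℝ) / 2) := by
      rw [e4, Real.exp_neg, ← div_eq_mul_inv, le_div_iff₀ (by positivity), inv_mul_le_iff₀ (Real.exp_pos _)]
      linarith
    have e6 : 1 ≤ Real.exp (1 / (4 * u)) * Real.exp (-(w / 4)) := by
      rw [← Real.exp_add]
      apply Real.one_le_exp
      have : 1 / (4 * u) = (1 / u) / 4 := by field_simp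
      rw [this]; linarith
    calc _ ≤ 2 * Real.exp (-v) := by linarith
      _ ≤ 2 * ((1 + d.factorial) * w ^ ((d : ℝ) / 2)) * 1 := by linarith
      _ ≤ 2 * ((1 + d.factorial) * w ^ ((d : ℝ) / 2)) * (Real.exp (1 / (4 * u)) * Real.exp (-(w / 4))) := by
        gcongr
      _ = _ := by ring

lemma exists_D {β : ℝ} (hβ : 0 < β) (hβ1 : β < 1) : ∃ D > (3:ℝ), 0 < 2 * (2:ℝ) ^ β - 1 - D ^ β := by
  have hs := Real.strictConcaveOn_rpow hβ hβ1
  have h := hs.right (show (1:ℝ) ∈ Set.Ici (0:ℝ) by simp) (show (3:ℝ) ∈ Set.Ici (0:ℝ) by simp) (by norm_num)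
    (show (0:ℝ) < 1/2 by norm_num) (show (0:ℝ) < 1/2 by norm_num) (by norm_num)
  norm_num at h
  have hc : ContinuousAt (fun D : ℝ => 2 * (2:ℝ) ^ β - 1 - D ^ β) 3 := by
    have := Real.continuousAt_rpow_const 3 β (by norm_num)
    fun_prop
  have h3 : (0:ℝ) < 2 * (2:ℝ) ^ β - 1 - (3:ℝ) ^ β := by linarith
  have := (hc.eventually (lt_mem_nhds h3)).filter_mono (nhdsWithin_le_nhds (s := Set.Ioi (3:ℝ)))
  obtain ⟨D, h1, h2⟩ := (this.and self_mem_nhdsWithin).exists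
  exact ⟨D, h2, h1⟩

lemma gk_scale (d : ℕ) {s R : ℝ} (hs : 0 < s) (hR : 0 < R) :
    (Real.pi / s) ^ ((d : ℝ) / 2) = Real.pi ^ ((d : ℝ) / 2) * R ^ (-(d : ℝ)) * (R ^ 2 / s) ^ ((d : ℝ) / 2) := by
  rw [Real.div_rpow (by positivity) hs.le, Real.div_rpow (by positivity) hs.le,
    ← Real.rpow_natCast R 2, ← Real.rpow_mul hR.le, Real.rpow_neg hR.le]
  have : ((2:ℕ):ℝ) * ((d : ℝ) / 2) = d := by push_cast; ring
  rw [this]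
  have := Real.rpow_pos_of_pos hR d
  field_simp

lemma stable_integrable (d : ℕ) (hd : 1 ≤ d) {β τ : ℝ} (hβ : 0 < β) (hτ : 0 < τ) :
    Integrable (fun z : EuclideanSpace ℝ (Fin d) => Real.exp (-(τ * (‖z‖ ^ 2) ^ β))) := by
  have : Nonempty (Fin d) := ⟨⟨0, hd⟩⟩
  rw [integrable_fun_norm_addHaar volume (f := fun y : ℝ => Real.exp (-(τ * (y ^ 2) ^ β)))]
  have h := integrableOn_rpow_mul_exp_neg_mul_rpow (p := 2 * β) (s := ((d - 1 : ℕ) : ℝ)) (b := τ)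
    (by have : (0:ℝ) ≤ ((d - 1 : ℕ) : ℝ) := Nat.cast_nonneg _; linarith) (by positivity) hτ
  refine h.congr_fun (fun y hy => ?_) measurableSet_Ioi
  have hy : 0 < y := hy
  simp only [finrank_euclideanSpace, Fintype.card_fin, smul_eq_mul, Real.rpow_natCast]
  rw [← Real.rpow_natCast y 2, ← Real.rpow_mul hy.le]
  push_cast
  rw [neg_mul]

lemma upper_one (d : ℕ) (hd : 1 ≤ d) {β : ℝ} (hβ : 0 < β) : ∃ C > 0, ∀ τ > (0:ℝ),
    ∀ x : EuclideanSpace ℝ (Fin d), fk d 0 (fun l => Real.exp (-(τ * l ^ β))) x ≤ C * τ ^ (-(d:ℝ) / (2 * β)) := by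
  refine ⟨(∫ z : EuclideanSpace ℝ (Fin d), Real.exp (-(1 * (‖z‖ ^ 2) ^ β))) + 1, ?_, ?_⟩
  · have : 0 ≤ ∫ z : EuclideanSpace ℝ (Fin d), Real.exp (-(1 * (‖z‖ ^ 2) ^ β)) :=
      integral_nonneg fun z => (Real.exp_pos _).le
    linarith
  intro τ hτ x
  have h1 : fk d 0 (fun l => Real.exp (-(τ * l ^ β))) x ≤
      ∫ z : EuclideanSpace ℝ (Fin d), Real.exp (-(τ * (‖z‖ ^ 2) ^ β)) := by
    refine (le_abs_self _).trans ?_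
    rw [← Real.norm_eq_abs]
    refine norm_integral_le_of_norm_le (stable_integrable d hd hβ hτ) (Eventually.of_forall fun z => ?_)
    simp only [norm_mul, Real.norm_eq_abs, Real.abs_exp, zero_mul, neg_zero, Real.exp_zero, one_mul]
    exact mul_le_of_le_one_left (Real.exp_pos _).le (Real.abs_cos_le_one _)
  have h2 : ∫ z : EuclideanSpace ℝ (Fin d), Real.exp (-(τ * (‖z‖ ^ 2) ^ β)) =
      τ ^ (-(d:ℝ) / (2 * β)) * ∫ z : EuclideanSpace ℝ (Fin d), Real.exp (-(1 * (‖z‖ ^ 2) ^ β)) := by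
    have h := Measure.integral_comp_smul (volume : Measure (EuclideanSpace ℝ (Fin d)))
      (fun z => Real.exp (-(1 * (‖z‖ ^ 2) ^ β))) (τ ^ (1 / (2 * β)))
    have hp : 0 < τ ^ (1 / (2 * β)) := Real.rpow_pos_of_pos hτ _
    have e1 : ∀ z : EuclideanSpace ℝ (Fin d), 1 * (‖τ ^ (1 / (2 * β)) • z‖ ^ 2) ^ β = τ * (‖z‖ ^ 2) ^ β := by
      intro z
      rw [norm_smul, Real.norm_of_nonneg hp.le, mul_pow, Real.mul_rpow (by positivity) (by positivity), one_mul,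
        ← Real.rpow_natCast (τ ^ (1 / (2 * β))) 2, ← Real.rpow_mul hτ.le, ← Real.rpow_mul hτ.le]
      congr 1
      have : 1 / (2 * β) * ((2:ℕ):ℝ) * β = 1 := by push_cast; field_simp
      rw [this, Real.rpow_one]
    simp_rw [e1] at h
    rw [h, smul_eq_mul]
    congr 1
    rw [abs_of_pos (by positivity), finrank_euclideanSpace, Fintype.card_fin, ← Real.rpow_natCast,
      ← Real.rpow_mul hτ.le, ← Real.rpow_neg hτ.le]
    congr 1
    field_simp
  have := Real.rpow_pos_of_pos hτ (-(d:ℝ) / (2 * β))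
  rw [h2] at h1
  linarith

lemma upper_two (d : ℕ) (hd : 1 ≤ d) {β : ℝ} (hβ : 0 < β) (hβ1 : β < 1) : ∃ C > 0, ∀ τ > (0:ℝ),
    ∀ x : EuclideanSpace ℝ (Fin d), x ≠ 0 →
      fk d 0 (fun l => Real.exp (-(τ * l ^ β))) x ≤ C * (τ / ‖x‖ ^ ((d:ℝ) + 2 * β)) := by
  obtain ⟨C, hC, H⟩ := up_bound d
  refine ⟨Real.pi ^ ((d : ℝ) / 2) * C, by positivity, fun τ hτ x hx => ?_⟩
  have hr : 0 < ‖x‖ := norm_pos_iff.2 hx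
  set r := ‖x‖ with hrdef
  set K := Real.pi ^ ((d : ℝ) / 2) * r ^ (-(d : ℝ)) with hK
  have hK0 : 0 < K := by positivity
  have key := good_zero (good_stable d hβ hβ1 hτ) (stable_integrable d hd hβ hτ) x (-1)
    ![K * C, -(K * C), 0] ![0, 1 / r ^ 2, 0]
    (by intro i; fin_cases i <;> simp <;> positivity) (by
      intro s hs
      have h1 := H (r ^ 2 / s) (by positivity)
      simp only [Fin.sum_univ_three, Matrix.cons_val_zero, Matrix.cons_val_one, Matrix.cons_val]
      rw [gk, gk_scale d hs hr, ← hK, ← hrdef]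
      have e1 : r ^ 2 / (4 * s) = r ^ 2 / s / 4 := by field_simp
      have e2 : 1 / (r ^ 2 / s) = 1 / r ^ 2 * s := by field_simp
      rw [e2] at h1
      rw [e1]
      have := mul_le_mul_of_nonneg_left h1 hK0.le
      simp only [zero_mul, neg_zero, Real.exp_zero]
      linarith)
  simp only [Fin.sum_univ_three, Matrix.cons_val_zero, Matrix.cons_val_one, Matrix.cons_val,
    Real.zero_rpow hβ.ne', mul_zero, neg_zero, Real.exp_zero, zero_mul] at key
  have e3 : 1 - Real.exp (-(τ * (1 / r ^ 2) ^ β)) ≤ τ * (1 / r ^ 2) ^ β := by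
    have := Real.add_one_le_exp (-(τ * (1 / r ^ 2) ^ β)); linarith
  have e4 : (1 / r ^ 2) ^ β = (r ^ (2 * β))⁻¹ := by
    rw [one_div, Real.inv_rpow (by positivity), ← Real.rpow_natCast, ← Real.rpow_mul hr.le]
    norm_num
  have e5 : r ^ ((d:ℝ) + 2 * β) = r ^ (d:ℝ) * r ^ (2 * β) := Real.rpow_add hr _ _
  have e6 := mul_le_mul_of_nonneg_left e3 (by positivity : 0 ≤ K * C)
  have e7 : K * C * (τ * (1 / r ^ 2) ^ β) = Real.pi ^ ((d : ℝ) / 2) * C * (τ / r ^ ((d:ℝ) + 2 * β)) := by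
    rw [e4, e5, hK, Real.rpow_neg hr.le]
    have := Real.rpow_pos_of_pos hr d
    have := Real.rpow_pos_of_pos hr (2 * β)
    field_simp
  linarith

lemma lower_one (d : ℕ) (hd : 1 ≤ d) {β : ℝ} (hβ : 0 < β) (hβ1 : β < 1) : ∃ c > 0, ∃ e > 0, ∀ τ > (0:ℝ),
    ∀ x : EuclideanSpace ℝ (Fin d), ∀ R > 0, ‖x‖ ≤ R → τ / R ^ (2 * β) ≤ e →
      c * (τ / R ^ ((d:ℝ) + 2 * β)) ≤ fk d 0 (fun l => Real.exp (-(τ * l ^ β))) x := by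
  obtain ⟨D, hD, hDβ⟩ := exists_D hβ hβ1
  obtain ⟨C, hC, H⟩ := low_bound d hD
  set κ := 2 * (2:ℝ) ^ β - 1 - D ^ β with hκ
  obtain ⟨e, he, H2⟩ := deriv_lower (m := κ / 2)
    (h := fun y : ℝ => Real.exp (-(1 * y)) - 2 * Real.exp (-(2 ^ β * y)) + Real.exp (-(D ^ β * y)))
    (by norm_num) (three_deriv 1 (2 ^ β) (D ^ β)) (by linarith)
  refine ⟨Real.pi ^ ((d : ℝ) / 2) / C * (κ / 2), by positivity, e, he, fun τ hτ x R hR hxR hτe => ?_⟩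
  set K := Real.pi ^ ((d : ℝ) / 2) * R ^ (-(d : ℝ)) with hK
  have hK0 : 0 < K := by positivity
  have key := good_zero (good_stable d hβ hβ1 hτ) (stable_integrable d hd hβ hτ) x 1
    ![-(K / C), 2 * (K / C), -(K / C)] ![1 * (1 / R ^ 2), 2 * (1 / R ^ 2), D * (1 / R ^ 2)]
    (by intro i; fin_cases i <;> simp <;> positivity) (by
      intro s hs
      have h1 := H (R ^ 2 / s) (by positivity)
      simp only [Fin.sum_univ_three, Matrix.cons_val_zero, Matrix.cons_val_one, Matrix.cons_val]
      rw [gk, gk_scale d hs hR, ← hK]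
      have e1 : Real.exp (-(R ^ 2 / s / 4)) ≤ Real.exp (-(‖x‖ ^ 2 / (4 * s))) := by
        rw [Real.exp_le_exp]
        have : R ^ 2 / s / 4 = R ^ 2 / (4 * s) := by field_simp
        rw [this, neg_le_neg_iff]
        gcongr
      have e2 : 1 / (R ^ 2 / s) = 1 / R ^ 2 * s := by field_simp
      rw [e2] at h1
      have h3 := mul_le_mul_of_nonneg_left h1 (by positivity : 0 ≤ K / C)
      have h4 : K / C * (C * ((R ^ 2 / s) ^ ((d : ℝ) / 2) * Real.exp (-(R ^ 2 / s / 4)))) =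
          K * (R ^ 2 / s) ^ ((d : ℝ) / 2) * Real.exp (-(R ^ 2 / s / 4)) := by field_simp
      have h5 : K * (R ^ 2 / s) ^ ((d : ℝ) / 2) * Real.exp (-(R ^ 2 / s / 4)) ≤
        K * (R ^ 2 / s) ^ ((d : ℝ) / 2) * Real.exp (-(‖x‖ ^ 2 / (4 * s))) := by gcongr
      rw [h4] at h3
      simp only [one_mul, mul_assoc] at *
      linarith)
  simp only [Fin.sum_univ_three, Matrix.cons_val_zero, Matrix.cons_val_one, Matrix.cons_val] at key
  have e4 : (1 / R ^ 2) ^ β = (R ^ (2 * β))⁻¹ := by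
    rw [one_div, Real.inv_rpow (by positivity), ← Real.rpow_natCast, ← Real.rpow_mul hR.le]
    norm_num
  have e8 : ∀ q : ℝ, 0 ≤ q → τ * (q * (1 / R ^ 2)) ^ β = q ^ β * (τ / R ^ (2 * β)) := by
    intro q hq
    rw [Real.mul_rpow hq (by positivity), e4]; ring
  rw [e8 1 zero_le_one, e8 2 zero_le_two, e8 D (by linarith), Real.one_rpow] at key
  have h6 := H2 (τ / R ^ (2 * β)) (by positivity) hτe
  have h7 := mul_le_mul_of_nonneg_left h6 (by positivity : 0 ≤ K / C)
  have e5 : R ^ ((d:ℝ) + 2 * β) = R ^ (d:ℝ) * R ^ (2 * β) := Real.rpow_add hR _ _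
  have e7 : K / C * (κ / 2 * (τ / R ^ (2 * β))) =
      Real.pi ^ ((d : ℝ) / 2) / C * (κ / 2) * (τ / R ^ ((d:ℝ) + 2 * β)) := by
    rw [e5, hK, Real.rpow_neg hR.le]
    have := Real.rpow_pos_of_pos hR d
    have := Real.rpow_pos_of_pos hR (2 * β)
    field_simp
  linarith

lemma lower_two (d : ℕ) (hd : 1 ≤ d) {β : ℝ} (hβ : 0 < β) (hβ1 : β < 1) : ∃ c > 0, ∀ τ > (0:ℝ),
    ∀ x : EuclideanSpace ℝ (Fin d),
      c * τ ^ (-(d:ℝ) / (2 * β)) ≤ fk d 0 (fun l => Real.exp (-(τ * l ^ β))) x ∨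
      (x ≠ 0 ∧ c * (τ / ‖x‖ ^ ((d:ℝ) + 2 * β)) ≤ fk d 0 (fun l => Real.exp (-(τ * l ^ β))) x) := by
  obtain ⟨c, hc, e, he, H⟩ := lower_one d hd hβ hβ1
  refine ⟨min c (c * e ^ (((d:ℝ) + 2 * β) / (2 * β))), lt_min hc (by positivity), fun τ hτ x => ?_⟩
  set R := (τ / e) ^ (1 / (2 * β)) with hR
  have hte : 0 < τ / e := by positivity
  have hR0 : 0 < R := Real.rpow_pos_of_pos hte _
  have hRp : R ^ (2 * β) = τ / e := by
    rw [hR, ← Real.rpow_mul hte.le, one_div_mul_cancel (by positivity), Real.rpow_one]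
  rcases le_total ‖x‖ R with h | h
  · left
    have h1 := H τ hτ x R hR0 h (by rw [hRp]; field_simp; rfl)
    refine le_trans ?_ h1
    have e1 : R ^ ((d:ℝ) + 2 * β) = (τ / e) ^ (((d:ℝ) + 2 * β) / (2 * β)) := by
      rw [hR, ← Real.rpow_mul hte.le]; congr 1; ring
    have e2 : τ ^ (-(d:ℝ) / (2 * β)) = τ / τ ^ (((d:ℝ) + 2 * β) / (2 * β)) := by
      rw [eq_div_iff (by positivity), ← Real.rpow_add hτ]
      conv_rhs => rw [← Real.rpow_one τ]
      congr 1; field_simp; ring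
    rw [e1, Real.div_rpow hτ.le he.le, e2]
    have p1 : 0 < τ ^ (((d:ℝ) + 2 * β) / (2 * β)) := by positivity
    have p2 : 0 < e ^ (((d:ℝ) + 2 * β) / (2 * β)) := by positivity
    calc _ ≤ c * e ^ (((d:ℝ) + 2 * β) / (2 * β)) * (τ / τ ^ (((d:ℝ) + 2 * β) / (2 * β))) := by
          gcongr; exact min_le_right _ _
      _ = _ := by field_simp
  · right
    have hx : 0 < ‖x‖ := lt_of_lt_of_le hR0 h
    refine ⟨norm_pos_iff.1 hx, ?_⟩
    refine le_trans ?_ (H τ hτ x ‖x‖ hx le_rfl ?_)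
    · gcongr; exact min_le_left _ _
    · have : τ / e ≤ ‖x‖ ^ (2 * β) := by rw [← hRp]; gcongr
      rw [div_le_iff₀ (by positivity)]
      rw [div_le_iff₀ he] at this
      linarith

lemma stableKernel_eq (d : ℕ) (hd : 1 ≤ d) {ν α t : ℝ} (hα : 0 < α) (hτ : 0 < t * ν)
    (x : EuclideanSpace ℝ (Fin d)) :
    stableKernel d ν α t x =
      ((2 * Real.pi) ^ d)⁻¹ * fk d 0 (fun l => Real.exp (-(t * ν * l ^ (α / 2)))) x := by
  have e0 : ∀ z : EuclideanSpace ℝ (Fin d), (‖z‖ ^ 2) ^ (α / 2) = ‖z‖ ^ α := by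
    intro z
    rw [← Real.rpow_natCast, ← Real.rpow_mul (norm_nonneg z)]
    congr 1; push_cast; ring
  have hi := stable_integrable d hd (by positivity : 0 < α / 2) hτ
  simp_rw [e0] at hi
  have hci : Integrable (fun z : EuclideanSpace ℝ (Fin d) => Complex.exp (-(Complex.I * (⟪x, z⟫ : ℝ))) *
        Complex.exp (-((t * ν * ‖z‖ ^ α : ℝ) : ℂ))) := by
    refine hi.mono' ?_ (Eventually.of_forall fun z => ?_)
    · refine Measurable.aestronglyMeasurable ?_
      fun_prop
    · rw [norm_mul, Complex.norm_exp, Complex.norm_exp]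
      simp
  rw [stableKernel, fk]
  congr 1
  have h3 := integral_re hci
  simp only [RCLike.re_eq_complex_re] at h3
  rw [← h3]
  congr 1; ext z
  rw [e0, zero_mul, neg_zero, Real.exp_zero, one_mul, ← Complex.ofReal_neg, ← Complex.ofReal_exp,
    Complex.re_mul_ofReal, Complex.exp_re]
  simp

theorem stableKernel_real (d : ℕ) (hd : 1 ≤ d) (ν α : ℝ) (hν : 0 < ν)
    (hα : 0 < α) (hα2 : α < 2) :
    ∃ c₁ > (0 : ℝ), ∃ c₂ > (0 : ℝ), ∀ (x : EuclideanSpace ℝ (Fin d)) (t : ℝ), 0 < t →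
      (c₁ * t ^ (-(d : ℝ) / α) ≤ stableKernel d ν α t x ∨
        (x ≠ 0 ∧ c₁ * (t / ‖x‖ ^ ((d : ℝ) + α)) ≤ stableKernel d ν α t x)) ∧
      stableKernel d ν α t x ≤ c₂ * t ^ (-(d : ℝ) / α) ∧
      (x ≠ 0 → stableKernel d ν α t x ≤ c₂ * (t / ‖x‖ ^ ((d : ℝ) + α))) := by
  have hβ : 0 < α / 2 := by positivity
  have hβ1 : α / 2 < 1 := by linarith
  obtain ⟨c, hc, Hc⟩ := lower_two d hd hβ hβ1
  obtain ⟨C, hC, HC⟩ := upper_one d hd hβ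
  obtain ⟨C', hC', HC'⟩ := upper_two d hd hβ hβ1
  have e2 : 2 * (α / 2) = α := by ring
  rw [e2] at Hc HC HC'
  set q := ((2 * Real.pi) ^ d)⁻¹ with hq
  have hq0 : 0 < q := by positivity
  set N := ν ^ (-(d : ℝ) / α) with hN
  have hN0 : 0 < N := by positivity
  refine ⟨q * c * min N ν, by positivity, q * (C * N + C' * ν), by positivity, fun x t ht => ?_⟩
  have hτ : 0 < t * ν := by positivity
  rw [stableKernel_eq d hd hα hτ, ← hq]
  have eT : (t * ν) ^ (-(d : ℝ) / α) = t ^ (-(d : ℝ) / α) * N := Real.mul_rpow ht.le hν.le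
  have hT : 0 < t ^ (-(d : ℝ) / α) := by positivity
  refine ⟨?_, ?_, ?_⟩
  · rcases Hc (t * ν) hτ x with h | ⟨hx, h⟩
    · left
      calc _ ≤ q * c * N * t ^ (-(d : ℝ) / α) := by gcongr; exact min_le_left _ _
        _ = q * (c * (t * ν) ^ (-(d : ℝ) / α)) := by rw [eT]; ring
        _ ≤ _ := by gcongr
    · right
      refine ⟨hx, ?_⟩
      calc _ ≤ q * c * ν * (t / ‖x‖ ^ ((d : ℝ) + α)) := by gcongr; exact min_le_right _ _
        _ = q * (c * (t * ν / ‖x‖ ^ ((d : ℝ) + α))) := by ring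
        _ ≤ _ := by gcongr
  · calc _ ≤ q * (C * (t * ν) ^ (-(d : ℝ) / α)) := by gcongr; exact HC _ hτ x
      _ = q * (C * N) * t ^ (-(d : ℝ) / α) := by rw [eT]; ring
      _ ≤ _ := by gcongr; linarith [mul_pos hC' hν]
  · intro hx
    calc _ ≤ q * (C' * (t * ν / ‖x‖ ^ ((d : ℝ) + α))) := by gcongr; exact HC' _ hτ x hx
      _ = q * (C' * ν) * (t / ‖x‖ ^ ((d : ℝ) + α)) := by ring
      _ ≤ _ := by gcongr; linarith [mul_pos hC hN0]

end StableAux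


/-- Two-sided heat kernel estimates for `0 < α < 2`:
`c₁ (t^{-d/α} ∧ t/|x|^{d+α}) ≤ p_t(x) ≤ c₂ (t^{-d/α} ∧ t/|x|^{d+α})`.
(Stated in `ℝ≥0∞` so that the convention `t/0 = ∞` at `x = 0` is the correct one.) -/
theorem stableKernel_two_sided_bounds (d : ℕ) (hd : 1 ≤ d) (ν α : ℝ) (hν : 0 < ν)
    (hα : 0 < α) (hα2 : α < 2) :
    ∃ c₁ > (0 : ℝ), ∃ c₂ > (0 : ℝ), ∀ (x : EuclideanSpace ℝ (Fin d)) (t : ℝ), 0 < t →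
      ENNReal.ofReal c₁ *
          ((ENNReal.ofReal (t ^ (-(d : ℝ) / α))) ⊓
            (ENNReal.ofReal t / ENNReal.ofReal (‖x‖ ^ ((d : ℝ) + α))))
        ≤ ENNReal.ofReal (stableKernel d ν α t x) ∧
      ENNReal.ofReal (stableKernel d ν α t x)
        ≤ ENNReal.ofReal c₂ *
          ((ENNReal.ofReal (t ^ (-(d : ℝ) / α))) ⊓
            (ENNReal.ofReal t / ENNReal.ofReal (‖x‖ ^ ((d : ℝ) + α)))) := by
  obtain ⟨c₁, h₁, c₂, h₂, H⟩ := StableAux.stableKernel_real d hd ν α hν hα hα2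
  refine ⟨c₁, h₁, c₂, h₂, fun x t ht => ?_⟩
  obtain ⟨hl, hu1, hu2⟩ := H x t ht
  have hdiv : ∀ x : EuclideanSpace ℝ (Fin d), x ≠ 0 →
      ENNReal.ofReal t / ENNReal.ofReal (‖x‖ ^ ((d : ℝ) + α)) =
        ENNReal.ofReal (t / ‖x‖ ^ ((d : ℝ) + α)) := by
    intro x hx
    have hr : 0 < ‖x‖ := norm_pos_iff.2 hx
    rw [ENNReal.ofReal_div_of_pos (by positivity)]
  constructor
  · rcases hl with h | ⟨hx, h⟩
    · calc _ ≤ ENNReal.ofReal c₁ * ENNReal.ofReal (t ^ (-(d : ℝ) / α)) := by gcongr; exact inf_le_left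
        _ = ENNReal.ofReal (c₁ * t ^ (-(d : ℝ) / α)) := (ENNReal.ofReal_mul h₁.le).symm
        _ ≤ _ := ENNReal.ofReal_le_ofReal h
    · calc _ ≤ ENNReal.ofReal c₁ * (ENNReal.ofReal t / ENNReal.ofReal (‖x‖ ^ ((d : ℝ) + α))) := by
            gcongr; exact inf_le_right
        _ = ENNReal.ofReal (c₁ * (t / ‖x‖ ^ ((d : ℝ) + α))) := by
          rw [hdiv x hx, ENNReal.ofReal_mul h₁.le]
        _ ≤ _ := ENNReal.ofReal_le_ofReal h
  · have hA : ENNReal.ofReal (stableKernel d ν α t x) ≤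
        ENNReal.ofReal c₂ * ENNReal.ofReal (t ^ (-(d : ℝ) / α)) := by
      rw [← ENNReal.ofReal_mul h₂.le]
      exact ENNReal.ofReal_le_ofReal hu1
    rcases le_total (ENNReal.ofReal (t ^ (-(d : ℝ) / α)))
      (ENNReal.ofReal t / ENNReal.ofReal (‖x‖ ^ ((d : ℝ) + α))) with h | h
    · rw [inf_eq_left.2 h]; exact hA
    · rw [inf_eq_right.2 h]
      by_cases hx : x = 0
      · have h0 : ‖x‖ ^ ((d : ℝ) + α) = 0 := by
          rw [hx, norm_zero, Real.zero_rpow (by positivity)]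
        rw [h0, ENNReal.ofReal_zero, ENNReal.div_zero (by simpa using ht)] at h
        exact absurd (top_le_iff.1 h) ENNReal.ofReal_ne_top
      · rw [hdiv x hx, ← ENNReal.ofReal_mul h₂.le]
        exact ENNReal.ofReal_le_ofReal (hu2 hx)
end

section
/- Suppose 0 < β < min(α, d). Then there exists a positive constant c₁ such that for all t > 0, x ∈ ℝ^d and R > 0: ∫_{B(x,R)^c × B(x,R)^c} p_t(x−y) p_t(x−w) |y−w|^{−β} dy dw ≤ c₁ t² / R^{2α+β}. -/
open MeasureTheory Real
open scoped RealInnerProductSpace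

open Filter Topology Set

lemma aux_bound (d : ℕ) : ∃ C > (0:ℝ), ∀ v : ℝ, 0 < v →
    (π / v) ^ ((d:ℝ) / 2) * Real.exp (-(1 / (4 * v))) ≤ C * (1 - Real.exp (-v)) := by
  refine ⟨2 * π ^ d * ((d + 1).factorial * 4 ^ (d + 1)), by positivity, fun v hv => ?_⟩
  have hpi : (1:ℝ) ≤ π := by linarith [Real.pi_gt_three]
  have h1 : v / (1 + v) ≤ 1 - Real.exp (-v) := by
    have := Real.add_one_le_exp v
    rw [Real.exp_neg, div_le_iff₀ (by positivity)]
    have : (Real.exp v)⁻¹ ≤ (1 + v)⁻¹ := by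
      apply inv_anti₀ (by positivity); linarith
    have h3 : (1 + v)⁻¹ * (1 + v) = 1 := by field_simp
    nlinarith
  have hK : (1:ℝ) ≤ ((d + 1).factorial * 4 ^ (d + 1)) := by
    have : (1:ℝ) ≤ ((d+1).factorial : ℝ) := by exact_mod_cast Nat.one_le_iff_ne_zero.mpr (Nat.factorial_ne_zero _)
    have : (1:ℝ) ≤ 4 ^ (d+1) := one_le_pow₀ (by norm_num)
    nlinarith
  set K : ℝ := ((d + 1).factorial * 4 ^ (d + 1)) with hKdef
  have hpd : (0:ℝ) < π ^ d := by positivity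
  rcases le_total 1 v with hv1 | hv1
  · have h2 : 1/2 ≤ 1 - Real.exp (-v) := by
      refine le_trans ?_ h1
      rw [div_le_div_iff₀ (by norm_num) (by positivity)]; linarith
    have h3 : (π / v) ^ ((d:ℝ)/2) ≤ π ^ d := by
      calc (π / v) ^ ((d:ℝ)/2) ≤ π ^ ((d:ℝ)/2) := by
            apply Real.rpow_le_rpow (by positivity) _ (by positivity)
            exact div_le_self (by positivity) hv1
        _ ≤ π ^ (d:ℝ) := by
            apply Real.rpow_le_rpow_of_exponent_le hpi
            have : (0:ℝ) ≤ d := by positivity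
            linarith
        _ = π ^ d := Real.rpow_natCast _ _
    have h4 : Real.exp (-(1 / (4 * v))) ≤ 1 := by
      rw [Real.exp_le_one_iff]; simp; positivity
    calc _ ≤ π ^ d * 1 := by gcongr
      _ ≤ 2 * π ^ d * K * (1/2) := by nlinarith
      _ ≤ _ := by gcongr
  · have h2 : v/2 ≤ 1 - Real.exp (-v) := by
      refine le_trans ?_ h1
      rw [div_le_div_iff₀ (by norm_num) (by positivity)]; nlinarith
    have h3 : (π / v) ^ ((d:ℝ)/2) ≤ (π / v) ^ d := by
      rw [← Real.rpow_natCast (π / v) d]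
      apply Real.rpow_le_rpow_of_exponent_le
      · rw [le_div_iff₀ hv]; linarith
      · have : (0:ℝ) ≤ d := by positivity
        linarith
    have h4 : Real.exp (-(1 / (4 * v))) ≤ K * v ^ (d+1) := by
      have := Real.pow_div_factorial_le_exp (1/(4*v)) (by positivity) (d+1)
      rw [Real.exp_neg]
      calc _ ≤ ((1/(4*v))^(d+1) / (d+1).factorial)⁻¹ := by
            apply inv_anti₀ (by positivity) this
        _ = K * v ^ (d+1) := by
            rw [hKdef, div_pow, mul_pow, one_pow]; field_simp
    calc _ ≤ (π / v) ^ d * (K * v ^ (d+1)) := by gcongr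
      _ = 2 * π ^ d * K * (v/2) := by
          rw [div_pow, pow_succ]; field_simp
      _ ≤ _ := by gcongr

lemma gauss_int (d : ℕ) (v : ℝ) (hv : 0 < v) (θ : EuclideanSpace ℝ (Fin d)) (hθ : ‖θ‖ = 1) :
    ‖∫ z : EuclideanSpace ℝ (Fin d), Complex.exp (-(Complex.I * (⟪θ, z⟫ : ℝ))) *
      ((Real.exp (-(v * ‖z‖^2)) : ℝ) : ℂ)‖ = (π / v) ^ ((d:ℝ) / 2) * Real.exp (-(1 / (4 * v))) := by
  have h := GaussianFourier.integral_cexp_neg_mul_sq_norm_add (V := EuclideanSpace ℝ (Fin d))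
    (b := (v:ℂ)) (by simpa using hv) (-Complex.I) θ
  have e : (fun z : EuclideanSpace ℝ (Fin d) => Complex.exp (-(Complex.I * (⟪θ, z⟫ : ℝ))) *
      ((Real.exp (-(v * ‖z‖^2)) : ℝ) : ℂ)) =
      fun z => Complex.exp (-(v:ℂ) * ‖z‖^2 + (-Complex.I) * (⟪θ, z⟫ : ℝ)) := by
    ext z
    push_cast
    rw [← Complex.exp_add]
    congr 1; ring
  rw [e, h, norm_mul]
  congr 1
  · rw [← Complex.ofReal_div, Complex.norm_cpow_eq_rpow_re_of_pos (by positivity)]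
    congr 1
    simp
  · rw [Complex.norm_exp, hθ]
    congr 1
    have : ((-Complex.I)^2 * ((1:ℝ):ℂ)^2 / (4 * (v:ℂ))) = ((-(1/(4*v)) : ℝ) : ℂ) := by
      simp; ring
    rw [this, Complex.ofReal_re]

lemma gauss_integrable (d : ℕ) (v : ℝ) (hv : 0 < v) :
    Integrable (fun z : EuclideanSpace ℝ (Fin d) => Real.exp (-(v * ‖z‖^2))) := by
  have h := GaussianFourier.integrable_cexp_neg_mul_sq_norm_add (V := EuclideanSpace ℝ (Fin d))
    (b := (v:ℂ)) (by simpa using hv) 0 0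
  have := h.norm
  refine this.congr (Eventually.of_forall fun z => ?_)
  simp only [Complex.norm_exp]
  congr 1
  simp [← Complex.ofReal_pow]

/-- the approximating transform -/
noncomputable def TT (d : ℕ) (θ : EuclideanSpace ℝ (Fin d)) (φ : ℝ → ℝ) (ε : ℝ) : ℂ :=
  ∫ z : EuclideanSpace ℝ (Fin d), Complex.exp (-(Complex.I * (⟪θ, z⟫ : ℝ))) *
      ((φ (‖z‖^2) * Real.exp (-(ε * ‖z‖^2)) : ℝ) : ℂ)

def PP (d : ℕ) (C : ℝ) (φ : ℝ → ℝ) : Prop :=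
  AEStronglyMeasurable (fun z : EuclideanSpace ℝ (Fin d) => φ (‖z‖^2)) volume ∧
  ∀ θ : EuclideanSpace ℝ (Fin d), ‖θ‖ = 1 → ∀ ε : ℝ, 0 < ε →
    ‖TT d θ φ ε‖ ≤ C * (φ 0 - Real.exp (-ε) * φ 1)

def QQ (φ : ℝ → ℝ) : Prop :=
  ∃ μ : Measure ℝ, IsFiniteMeasure μ ∧ (∀ᵐ u ∂μ, 0 ≤ u) ∧ ∀ l : ℝ, 0 ≤ l →
    φ l = ∫ u, Real.exp (-(u * l)) ∂μ

lemma norm_osc (d : ℕ) (θ z : EuclideanSpace ℝ (Fin d)) :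
    ‖Complex.exp (-(Complex.I * (⟪θ, z⟫ : ℝ)))‖ = 1 := by
  rw [Complex.norm_exp]; simp

lemma PP_lim {d : ℕ} {C : ℝ} {φ : ℝ → ℝ} {f : ℕ → ℝ → ℝ} (M : ℝ)
    (hP : ∀ n, PP d C (f n)) (hM : ∀ n l, 0 ≤ l → |f n l| ≤ M)
    (hl : ∀ l, 0 ≤ l → Tendsto (fun n => f n l) atTop (𝓝 (φ l))) : PP d C φ := by
  refine ⟨aestronglyMeasurable_of_tendsto_ae atTop (fun n => (hP n).1)
    (Eventually.of_forall fun z => hl _ (by positivity)), fun θ hθ ε hε => ?_⟩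
  have h1 : Tendsto (fun n => TT d θ (f n) ε) atTop (𝓝 (TT d θ φ ε)) := by
    unfold TT
    refine tendsto_integral_of_dominated_convergence (fun z => M * Real.exp (-(ε * ‖z‖^2)))
      (fun n => ?_) ((gauss_integrable d ε hε).const_mul M) (fun n => ?_) ?_
    · refine AEStronglyMeasurable.mul (Continuous.aestronglyMeasurable (by fun_prop)) ?_
      refine Complex.continuous_ofReal.comp_aestronglyMeasurable ?_
      exact (hP n).1.mul (Continuous.aestronglyMeasurable (by fun_prop))
    · refine Eventually.of_forall fun z => ?_
      rw [norm_mul, norm_osc, one_mul, Complex.norm_real, norm_mul, Real.norm_eq_abs,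
        Real.norm_eq_abs, Real.abs_exp]
      gcongr
      exact hM n _ (by positivity)
    · refine Eventually.of_forall fun z => ?_
      refine Tendsto.const_mul _ ?_
      refine (Complex.continuous_ofReal.tendsto _).comp ?_
      exact (hl _ (by positivity)).mul_const _
  have h2 : Tendsto (fun n => C * (f n 0 - Real.exp (-ε) * f n 1)) atTop
      (𝓝 (C * (φ 0 - Real.exp (-ε) * φ 1))) :=
    ((hl 0 le_rfl).sub ((hl 1 zero_le_one).const_mul _)).const_mul _
  exact le_of_tendsto_of_tendsto' h1.norm h2 fun n => (hP n).2 θ hθ ε hε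

lemma int_exp {μ : Measure ℝ} [IsFiniteMeasure μ] (hμ : ∀ᵐ u ∂μ, 0 ≤ u) (l : ℝ) (hl : 0 ≤ l) :
    Integrable (fun u => Real.exp (-(u * l))) μ := by
  refine Integrable.mono' (integrable_const (1:ℝ)) (Continuous.aestronglyMeasurable (by fun_prop)) ?_
  filter_upwards [hμ] with u hu
  rw [Real.norm_eq_abs, Real.abs_exp, Real.exp_le_one_iff]
  have := mul_nonneg hu hl
  linarith

lemma QQ_PP (d : ℕ) (C : ℝ) (hC : ∀ v : ℝ, 0 < v →
    (π / v) ^ ((d:ℝ) / 2) * Real.exp (-(1 / (4 * v))) ≤ C * (1 - Real.exp (-v)))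
    {φ : ℝ → ℝ} (h : QQ φ) : PP d C φ := by
  obtain ⟨μ, hfin, hμ, hφ⟩ := h
  have e0 : (fun z : EuclideanSpace ℝ (Fin d) => φ (‖z‖^2)) =
      fun z => ∫ u, Real.exp (-(u * ‖z‖^2)) ∂μ := by
    ext z; exact hφ _ (by positivity)
  refine ⟨?_, fun θ hθ ε hε => ?_⟩
  · rw [e0]
    have : Continuous (fun p : EuclideanSpace ℝ (Fin d) × ℝ => Real.exp (-(p.2 * ‖p.1‖^2))) := by
      fun_prop
    exact (this.stronglyMeasurable.integral_prod_right (ν := μ)).aestronglyMeasurable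
  · have e1 : TT d θ φ ε = ∫ z : EuclideanSpace ℝ (Fin d), ∫ u,
        Complex.exp (-(Complex.I * (⟪θ, z⟫ : ℝ))) *
          ((Real.exp (-((u + ε) * ‖z‖^2)) : ℝ) : ℂ) ∂μ := by
      unfold TT
      congr 1; ext z
      rw [integral_const_mul, integral_complex_ofReal, hφ _ (by positivity), ← integral_mul_const]
      congr 3
      ext u
      rw [← Real.exp_add]; congr 1; ring
    have hint : Integrable (Function.uncurry fun (z : EuclideanSpace ℝ (Fin d)) (u : ℝ) =>
        Complex.exp (-(Complex.I * (⟪θ, z⟫ : ℝ))) *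
          ((Real.exp (-((u + ε) * ‖z‖^2)) : ℝ) : ℂ)) (volume.prod μ) := by
      have hb := (gauss_integrable d ε hε).mul_prod (integrable_const (μ := μ) (1:ℝ))
      refine hb.mono' (Continuous.aestronglyMeasurable ?_) ?_
      · unfold Function.uncurry; fun_prop
      · have : ∀ᵐ p : EuclideanSpace ℝ (Fin d) × ℝ ∂(volume.prod μ), 0 ≤ p.2 :=
          Measure.quasiMeasurePreserving_snd.ae hμ
        filter_upwards [this] with p hp
        simp only [Function.uncurry]
        rw [norm_mul, norm_osc, one_mul, Complex.norm_real, Real.norm_eq_abs, Real.abs_exp, mul_one]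
        apply Real.exp_le_exp.mpr
        have : 0 ≤ p.2 * ‖p.1‖^2 := by positivity
        linarith
    rw [e1, integral_integral_swap hint]
    have hi1 := int_exp hμ 1 zero_le_one
    have hi0 := int_exp hμ 0 le_rfl
    calc _ ≤ ∫ u, C * (Real.exp (-(u * 0)) - Real.exp (-ε) * Real.exp (-(u*1))) ∂μ := by
          refine norm_integral_le_of_norm_le ((hi0.sub (hi1.const_mul _)).const_mul _) ?_
          filter_upwards [hμ] with u hu
          rw [gauss_int d (u + ε) (by linarith) θ hθ]
          refine (hC _ (by linarith)).trans (le_of_eq ?_)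
          rw [← Real.exp_add]; simp
      _ = _ := by
          rw [integral_const_mul, integral_sub hi0 (hi1.const_mul _), integral_const_mul,
            hφ 0 le_rfl, hφ 1 zero_le_one]

lemma QQ_one : QQ (fun _ => 1) := by
  refine ⟨Measure.dirac 0, inferInstance, ?_, fun l _ => ?_⟩
  · simp [ae_dirac_eq]
  · simp

lemma QQ_exp (s : ℝ) (hs : 0 ≤ s) : QQ (fun l => Real.exp (-(s * l))) := by
  refine ⟨Measure.dirac s, inferInstance, ?_, fun l _ => ?_⟩
  · simp [ae_dirac_eq, hs]
  · simp

lemma QQ_add {f g : ℝ → ℝ} (hf : QQ f) (hg : QQ g) : QQ (fun l => f l + g l) := by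
  obtain ⟨μ, h1, h2, h3⟩ := hf
  obtain ⟨ν, k1, k2, k3⟩ := hg
  refine ⟨μ + ν, inferInstance, ?_, fun l hl => ?_⟩
  · rw [ae_add_measure_iff]; exact ⟨h2, k2⟩
  · change f l + g l = _
    rw [integral_add_measure (int_exp h2 l hl) (int_exp k2 l hl), h3 l hl, k3 l hl]

lemma QQ_smul {f : ℝ → ℝ} (c : ℝ) (hc : 0 ≤ c) (hf : QQ f) : QQ (fun l => c * f l) := by
  obtain ⟨μ, h1, h2, h3⟩ := hf
  refine ⟨c.toNNReal • μ, inferInstance, ?_, fun l hl => ?_⟩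
  · exact Measure.ae_smul_measure h2 _
  · change c * f l = _
    rw [integral_smul_nnreal_measure, h3 l hl, NNReal.smul_def, Real.coe_toNNReal c hc, smul_eq_mul]

lemma QQ_mul {f g : ℝ → ℝ} (hf : QQ f) (hg : QQ g) : QQ (fun l => f l * g l) := by
  obtain ⟨μ, h1, h2, h3⟩ := hf
  obtain ⟨ν, k1, k2, k3⟩ := hg
  refine ⟨(μ.prod ν).map (fun p => p.1 + p.2), inferInstance, ?_, fun l hl => ?_⟩
  · rw [ae_map_iff (by fun_prop) measurableSet_Ici]
    filter_upwards [Measure.quasiMeasurePreserving_fst.ae h2,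
      Measure.quasiMeasurePreserving_snd.ae k2] with p hp hq
    exact add_nonneg hp hq
  · change f l * g l = _
    rw [integral_map (by fun_prop) (Continuous.aestronglyMeasurable (by fun_prop)), h3 l hl, k3 l hl,
      ← integral_prod_mul]
    congr 1; ext p
    rw [← Real.exp_add]; congr 1; ring

lemma QQ_pow {f : ℝ → ℝ} (hf : QQ f) (n : ℕ) : QQ (fun l => f l ^ n) := by
  induction n with
  | zero => simpa using QQ_one
  | succ n ih => simpa only [pow_succ] using QQ_mul ih hf

lemma QQ_sum {f : ℕ → ℝ → ℝ} (hf : ∀ n, QQ (f n)) (N : ℕ) :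
    QQ (fun l => ∑ n ∈ Finset.range N, f n l) := by
  induction N with
  | zero => 
    have := QQ_smul 0 le_rfl QQ_one
    simpa using this
  | succ n ih => simpa only [Finset.sum_range_succ] using QQ_add ih (hf n)

lemma QQ_bdd {f : ℝ → ℝ} (hf : QQ f) (l : ℝ) (hl : 0 ≤ l) : 0 ≤ f l ∧ f l ≤ f 0 := by
  obtain ⟨μ, h1, h2, h3⟩ := hf
  rw [h3 l hl, h3 0 le_rfl]
  refine ⟨integral_nonneg fun u => (Real.exp_pos _).le, ?_⟩
  refine integral_mono_ae (int_exp h2 l hl) (int_exp h2 0 le_rfl) ?_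
  filter_upwards [h2] with u hu
  apply Real.exp_le_exp.mpr
  have := mul_nonneg hu hl
  linarith

lemma PP_exp {d : ℕ} {C : ℝ} (hC : ∀ v : ℝ, 0 < v →
    (π / v) ^ ((d:ℝ) / 2) * Real.exp (-(1 / (4 * v))) ≤ C * (1 - Real.exp (-v)))
    {L : ℝ → ℝ} (hL : QQ L) (s : ℝ) (hs : 0 ≤ s) :
    PP d C (fun l => Real.exp (-(s * (L 0 - L l)))) := by
  refine PP_lim (f := fun N l => Real.exp (-(s * L 0)) * ∑ n ∈ Finset.range N,
      (s ^ n / n.factorial) * L l ^ n) 1 (fun N => ?_) (fun N l hl => ?_) (fun l hl => ?_)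
  · refine QQ_PP d C hC (QQ_smul _ (Real.exp_pos _).le (QQ_sum (fun n => ?_) N))
    exact QQ_smul _ (by positivity) (QQ_pow hL n)
  · have hb := QQ_bdd hL l hl
    have h0 : 0 ≤ ∑ n ∈ Finset.range N, (s ^ n / n.factorial) * L l ^ n := 
      Finset.sum_nonneg fun n _ => mul_nonneg (by positivity) (pow_nonneg hb.1 _)
    rw [abs_of_nonneg (mul_nonneg (Real.exp_pos _).le h0), Real.exp_neg, inv_mul_le_iff₀ (Real.exp_pos _),
      mul_one]
    refine le_trans ?_ (Real.sum_le_exp_of_nonneg (mul_nonneg hs (hb.1.trans hb.2)) N)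
    refine Finset.sum_le_sum fun n _ => ?_
    rw [mul_pow, div_mul_eq_mul_div]
    have := pow_le_pow_left₀ hb.1 hb.2 n
    gcongr
  · have h := (NormedSpace.expSeries_div_hasSum_exp (s * L l)).tendsto_sum_nat
    rw [← Real.exp_eq_exp_ℝ] at h
    have h2 := h.const_mul (Real.exp (-(s * L 0)))
    rw [← Real.exp_add] at h2
    convert! h2 using 2
    · congr 1
      refine Finset.sum_congr rfl fun n _ => ?_
      rw [mul_pow]; ring
    · congr 1; ring

lemma hfun_integrable (a : ℝ) (ha : 0 < a) (ha1 : a < 1) (l : ℝ) (hl : 0 ≤ l) :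
    IntegrableOn (fun u : ℝ => (1 - Real.exp (-(u * l))) * u ^ (-1 - a)) (Ioi 0) := by
  have hm : Measurable (fun u : ℝ => (1 - Real.exp (-(u * l))) * u ^ (-1 - a)) := by fun_prop
  rw [← Ioc_union_Ioi_eq_Ioi (zero_le_one (α := ℝ))]
  refine IntegrableOn.union ?_ ?_
  · have h1 : IntegrableOn (fun u : ℝ => l * u ^ (-a)) (Ioc 0 1) := by
      have := intervalIntegral.intervalIntegrable_rpow' (a := 0) (b := 1) (r := -a) (by linarith)
      rw [intervalIntegrable_iff_integrableOn_Ioc_of_le zero_le_one] at this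
      exact Integrable.const_mul this l
    refine Integrable.mono' h1 hm.aestronglyMeasurable ?_
    refine (ae_restrict_iff' measurableSet_Ioc).mpr (Eventually.of_forall fun u hu => ?_)
    have hu0 : 0 < u := hu.1
    have e1 : 0 ≤ 1 - Real.exp (-(u * l)) := by
      have : Real.exp (-(u*l)) ≤ 1 := by
        rw [Real.exp_le_one_iff]; have := mul_nonneg hu0.le hl; linarith
      linarith
    have e2 : 1 - Real.exp (-(u * l)) ≤ u * l := by
      have := Real.add_one_le_exp (-(u*l)); linarith
    have e3 : u ^ (-a) = u * u ^ (-1 - a) := by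
      rw [← Real.rpow_one_add' hu0.le (by linarith)]; congr 1; ring
    rw [Real.norm_eq_abs, abs_of_nonneg (by positivity), e3]
    have := Real.rpow_nonneg hu0.le (-1 - a)
    nlinarith
  · refine Integrable.mono' (integrableOn_Ioi_rpow_of_lt (a := -1 - a) (by linarith) one_pos)
      hm.aestronglyMeasurable ?_
    refine (ae_restrict_iff' measurableSet_Ioi).mpr (Eventually.of_forall fun u hu => ?_)
    have hu0 : 0 < u := lt_trans one_pos hu
    have e1 : 0 ≤ 1 - Real.exp (-(u * l)) := by
      have : Real.exp (-(u*l)) ≤ 1 := by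
        rw [Real.exp_le_one_iff]; have := mul_nonneg hu0.le hl; linarith
      linarith
    have := Real.rpow_nonneg hu0.le (-1 - a)
    rw [Real.norm_eq_abs, abs_of_nonneg (by positivity)]
    have := Real.exp_pos (-(u * l))
    nlinarith

lemma hfun_scale (a : ℝ) (ha : 0 < a) (l : ℝ) (hl : 0 ≤ l) :
    ∫ u in Ioi (0:ℝ), (1 - Real.exp (-(u * l))) * u ^ (-1 - a) =
      l ^ a * ∫ u in Ioi (0:ℝ), (1 - Real.exp (-(u * 1))) * u ^ (-1 - a) := by
  rcases hl.eq_or_lt with rfl | hl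
  · simp [Real.zero_rpow ha.ne']
  have h := integral_comp_mul_left_Ioi (fun u : ℝ => (1 - Real.exp (-(u * 1))) * u ^ (-1 - a)) 0 hl
  rw [mul_zero, smul_eq_mul] at h
  have h2 : ∫ u in Ioi (0:ℝ), (1 - Real.exp (-(u * l))) * u ^ (-1 - a) =
      l ^ (1 + a) * ∫ u in Ioi (0:ℝ), (1 - Real.exp (-(l * u * 1))) * (l * u) ^ (-1 - a) := by
    rw [← integral_const_mul]
    refine setIntegral_congr_fun measurableSet_Ioi fun u hu => ?_
    have hu0 : (0:ℝ) < u := hu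
    rw [Real.mul_rpow hl.le hu0.le]
    have : l ^ (1 + a) * l ^ (-1 - a) = 1 := by
      rw [← Real.rpow_add hl]; simp
    rw [show l * u * 1 = u * l by ring]
    linear_combination (-(1 - Real.exp (-(u * l))) * u ^ (-1 - a)) * this
  rw [h2, h, ← mul_assoc]
  congr 1
  rw [Real.rpow_add hl, Real.rpow_one]; field_simp

lemma hfun_pos (a : ℝ) (ha : 0 < a) (ha1 : a < 1) :
    0 < ∫ u in Ioi (0:ℝ), (1 - Real.exp (-(u * 1))) * u ^ (-1 - a) := by
  have hp : ∀ u ∈ Ioi (0:ℝ), 0 < (1 - Real.exp (-(u * 1))) * u ^ (-1 - a) := fun u hu => by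
    have hu0 : (0:ℝ) < u := hu
    have : Real.exp (-(u*1)) < 1 := by rw [Real.exp_lt_one_iff]; linarith
    have := Real.rpow_pos_of_pos hu0 (-1 - a)
    apply mul_pos <;> linarith
  rw [setIntegral_pos_iff_support_of_nonneg_ae]
  · refine lt_of_lt_of_le ?_ (measure_mono (s := Ioi (0:ℝ)) fun u hu => ⟨(hp u hu).ne', hu⟩)
    simp
  · exact (ae_restrict_iff' measurableSet_Ioi).mpr (Eventually.of_forall fun u hu => (hp u hu).le)
  · exact hfun_integrable a ha ha1 1 zero_le_one

lemma exp_rpow_int (a : ℝ) (ha : 0 < a) (δ : ℝ) (hδ : 0 < δ) (l : ℝ) (hl : 0 ≤ l) :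
    IntegrableOn (fun u : ℝ => Real.exp (-(u * l)) * u ^ (-1 - a)) (Ioi δ) := by
  have hm : Measurable (fun u : ℝ => Real.exp (-(u * l)) * u ^ (-1 - a)) := by fun_prop
  refine Integrable.mono' (integrableOn_Ioi_rpow_of_lt (a := -1 - a) (by linarith) hδ)
      hm.aestronglyMeasurable ?_
  refine (ae_restrict_iff' measurableSet_Ioi).mpr (Eventually.of_forall fun u hu => ?_)
  have hu0 : 0 < u := lt_trans hδ hu
  have : Real.exp (-(u*l)) ≤ 1 := by
    rw [Real.exp_le_one_iff]; have := mul_nonneg hu0.le hl; linarith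
  have := Real.rpow_nonneg hu0.le (-1 - a)
  rw [Real.norm_eq_abs, abs_of_nonneg (by positivity)]
  nlinarith

lemma QQ_L (a : ℝ) (ha : 0 < a) (δ : ℝ) (hδ : 0 < δ) :
    QQ (fun l => ∫ u in Ioi δ, Real.exp (-(u * l)) * u ^ (-1 - a)) := by
  have hint := integrableOn_Ioi_rpow_of_lt (a := -1 - a) (by linarith) hδ
  refine ⟨(volume.restrict (Ioi δ)).withDensity (fun u => ENNReal.ofReal (u ^ (-1 - a))),
    isFiniteMeasure_withDensity_ofReal hint.2, ?_, fun l hl => ?_⟩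
  · refine (withDensity_absolutelyContinuous _ _).ae_le ?_
    exact (ae_restrict_iff' measurableSet_Ioi).mpr
      (Eventually.of_forall fun u hu => (lt_trans hδ hu).le)
  · rw [integral_withDensity_eq_integral_toReal_smul (by fun_prop) (by simp)]
    refine setIntegral_congr_fun measurableSet_Ioi fun u hu => ?_
    have hu0 : 0 < u := lt_trans hδ hu
    simp only [smul_eq_mul]
    rw [ENNReal.toReal_ofReal (Real.rpow_nonneg hu0.le _), mul_comm]

lemma PP_stable {d : ℕ} {C : ℝ} (hC : ∀ v : ℝ, 0 < v →
    (π / v) ^ ((d:ℝ) / 2) * Real.exp (-(1 / (4 * v))) ≤ C * (1 - Real.exp (-v)))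
    (a : ℝ) (ha : 0 < a) (ha1 : a ≤ 1) (s : ℝ) (hs : 0 ≤ s) :
    PP d C (fun l => Real.exp (-(s * l ^ a))) := by
  rcases ha1.eq_or_lt with rfl | ha1
  · simp only [Real.rpow_one]
    exact QQ_PP d C hC (QQ_exp s hs)
  set c := ∫ u in Ioi (0:ℝ), (1 - Real.exp (-(u * 1))) * u ^ (-1 - a) with hc
  have hcpos : 0 < c := hfun_pos a ha ha1
  have hδ : ∀ n : ℕ, (0:ℝ) < 1 / ((n:ℝ) + 1) := fun n => by positivity
  have hLdiff : ∀ (n : ℕ) (l : ℝ), 0 ≤ l →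
      (∫ u in Ioi (1 / ((n:ℝ) + 1)), Real.exp (-(u * 0)) * u ^ (-1 - a)) -
      (∫ u in Ioi (1 / ((n:ℝ) + 1)), Real.exp (-(u * l)) * u ^ (-1 - a)) =
      ∫ u in Ioi (1 / ((n:ℝ) + 1)), (1 - Real.exp (-(u * l))) * u ^ (-1 - a) := by
    intro n l hl
    rw [← integral_sub (exp_rpow_int a ha _ (hδ n) 0 le_rfl) (exp_rpow_int a ha _ (hδ n) l hl)]
    congr 1; ext u; simp; ring
  refine PP_lim (f := fun n l => Real.exp (-((s / c) * 
      ((∫ u in Ioi (1 / ((n:ℝ) + 1)), Real.exp (-(u * 0)) * u ^ (-1 - a)) -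
      (∫ u in Ioi (1 / ((n:ℝ) + 1)), Real.exp (-(u * l)) * u ^ (-1 - a)))))) 1
    (fun n => PP_exp hC (QQ_L a ha _ (hδ n)) (s / c) (by positivity)) (fun n l hl => ?_)
    (fun l hl => ?_)
  · rw [Real.abs_exp, Real.exp_le_one_iff]
    have := (QQ_bdd (QQ_L a ha _ (hδ n)) l hl).2
    have h2 : 0 ≤ s / c := by positivity
    nlinarith
  · have hU : ⋃ n : ℕ, Ioi (1 / ((n:ℝ) + 1)) = Ioi (0:ℝ) := by
      ext u
      simp only [mem_iUnion, mem_Ioi]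
      constructor
      · rintro ⟨n, hn⟩; exact lt_trans (hδ n) hn
      · intro hu; exact exists_nat_one_div_lt hu
    have ht := tendsto_setIntegral_of_monotone (μ := volume) (s := fun n : ℕ => Ioi (1 / ((n:ℝ) + 1)))
      (f := fun u : ℝ => (1 - Real.exp (-(u * l))) * u ^ (-1 - a)) (fun n => measurableSet_Ioi)
      (fun m n hmn => Ioi_subset_Ioi (Nat.one_div_le_one_div hmn))
      (by rw [hU]; exact hfun_integrable a ha ha1 l hl)
    rw [hU, hfun_scale a ha l hl, ← hc] at ht
    have h3 := (Real.continuous_exp.tendsto _).comp (ht.const_mul (s / c)).neg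
    rw [show s / c * (l ^ a * c) = s * l ^ a by field_simp] at h3
    refine h3.congr fun n => ?_
    simp only [Function.comp]
    rw [hLdiff n l hl]

lemma unit_bound (d : ℕ) (α : ℝ) (hα : 0 < α) (hα2 : α ≤ 2) : ∃ C > (0:ℝ),
    ∀ θ : EuclideanSpace ℝ (Fin d), ‖θ‖ = 1 → ∀ s : ℝ, 0 < s →
    ‖∫ z : EuclideanSpace ℝ (Fin d), Complex.exp (-(Complex.I * (⟪θ, z⟫ : ℝ))) *
      ((Real.exp (-(s * ‖z‖^α)) : ℝ) : ℂ)‖ ≤ C * s := by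
  obtain ⟨C, hC0, hC⟩ := aux_bound d
  refine ⟨C, hC0, fun θ hθ s hs => ?_⟩
  have hP := (PP_stable hC (α / 2) (by positivity) (by linarith) s hs.le).2 θ hθ
  have hz : ∀ z : EuclideanSpace ℝ (Fin d), (‖z‖ ^ 2) ^ (α / 2) = ‖z‖ ^ α := fun z => by
    rw [← Real.rpow_natCast, ← Real.rpow_mul (norm_nonneg z)]; congr 1; push_cast; ring
  unfold TT at hP
  simp only [hz] at hP
  rw [Real.zero_rpow (by positivity)] at hP
  simp only [mul_zero, neg_zero, Real.exp_zero, Real.one_rpow, mul_one] at hP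
  have hcm : AEStronglyMeasurable (fun z : EuclideanSpace ℝ (Fin d) =>
      Complex.exp (-(Complex.I * (⟪θ, z⟫ : ℝ)))) volume :=
    Continuous.aestronglyMeasurable (by fun_prop)
  by_cases hI : Integrable (fun z : EuclideanSpace ℝ (Fin d) => Real.exp (-(s * ‖z‖^α)))
  · have h1 : Tendsto (fun n : ℕ => ∫ z : EuclideanSpace ℝ (Fin d),
        Complex.exp (-(Complex.I * (⟪θ, z⟫ : ℝ))) *
        ((Real.exp (-(s * ‖z‖^α)) * Real.exp (-((1 / ((n:ℝ) + 1)) * ‖z‖^2)) : ℝ) : ℂ)) atTop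
        (𝓝 (∫ z : EuclideanSpace ℝ (Fin d), Complex.exp (-(Complex.I * (⟪θ, z⟫ : ℝ))) *
        ((Real.exp (-(s * ‖z‖^α)) : ℝ) : ℂ))) := by
      refine tendsto_integral_of_dominated_convergence _ (fun n => ?_) hI (fun n => ?_) ?_
      · refine hcm.mul (Complex.continuous_ofReal.comp_aestronglyMeasurable ?_)
        exact hI.1.mul (Continuous.aestronglyMeasurable (by fun_prop))
      · refine Eventually.of_forall fun z => ?_
        rw [norm_mul, norm_osc, one_mul, Complex.norm_real, norm_mul, Real.norm_eq_abs,
          Real.norm_eq_abs, Real.abs_exp, Real.abs_exp]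
        refine mul_le_of_le_one_right (Real.exp_pos _).le ?_
        rw [Real.exp_le_one_iff]
        have : 0 ≤ (1 / ((n:ℝ) + 1)) * ‖z‖^2 := by positivity
        linarith
      · refine Eventually.of_forall fun z => ?_
        refine Tendsto.const_mul _ ((Complex.continuous_ofReal.tendsto _).comp ?_)
        have := (tendsto_one_div_add_atTop_nhds_zero_nat (𝕜 := ℝ)).mul_const (‖z‖^2)
        have h2 := ((Real.continuous_exp.tendsto _).comp this.neg).const_mul (Real.exp (-(s * ‖z‖^α)))
        simpa using h2
    have h2 : Tendsto (fun n : ℕ => C * (1 - Real.exp (-(1 / ((n:ℝ) + 1))) * Real.exp (-s))) atTop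
        (𝓝 (C * (1 - Real.exp (-s)))) := by
      have := (Real.continuous_exp.tendsto _).comp
        (tendsto_one_div_add_atTop_nhds_zero_nat (𝕜 := ℝ)).neg
      have := ((this.mul_const (Real.exp (-s))).const_sub 1).const_mul C
      simpa using this
    have h3 := le_of_tendsto_of_tendsto' h1.norm h2 fun n => hP _ (by positivity)
    refine h3.trans ?_
    gcongr
    have := Real.add_one_le_exp (-s)
    linarith
  · rw [integral_undef, norm_zero]
    · positivity
    · intro h
      apply hI
      refine h.norm.congr (Eventually.of_forall fun z => ?_)
      beta_reduce
      rw [norm_mul, norm_osc, one_mul, Complex.norm_real, Real.norm_eq_abs, Real.abs_exp]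

lemma kernel_bound (d : ℕ) (ν α : ℝ) (hν : 0 < ν) (hα : 0 < α) (hα2 : α ≤ 2) : ∃ K > (0:ℝ),
    ∀ t : ℝ, 0 < t → ∀ x : EuclideanSpace ℝ (Fin d), x ≠ 0 →
    |stableKernel d ν α t x| ≤ K * t * ‖x‖ ^ (-((d:ℝ) + α)) := by
  obtain ⟨C, hC0, hC⟩ := unit_bound d α hα hα2
  refine ⟨((2 * π) ^ d)⁻¹ * C * ν, by positivity, fun t ht x hx => ?_⟩
  have hr : 0 < ‖x‖ := norm_pos_iff.mpr hx
  set r := ‖x‖ with hrdef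
  have hθ : ‖r⁻¹ • x‖ = 1 := by
    rw [norm_smul, norm_inv, Real.norm_eq_abs, abs_of_pos hr, ← hrdef]; field_simp
  have hb := hC (r⁻¹ • x) hθ (t * ν * r ^ (-α)) (by positivity)
  have hsc := Measure.integral_comp_smul (volume : Measure (EuclideanSpace ℝ (Fin d)))
    (fun z => Complex.exp (-(Complex.I * (⟪r⁻¹ • x, z⟫ : ℝ))) *
      ((Real.exp (-(t * ν * r ^ (-α) * ‖z‖^α)) : ℝ) : ℂ)) r
  have he : (∫ z : EuclideanSpace ℝ (Fin d),
      Complex.exp (-(Complex.I * (⟪x, z⟫ : ℝ))) *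
        Complex.exp (-((t * ν * ‖z‖ ^ α : ℝ) : ℂ))) = |(r ^ d)⁻¹| •
      ∫ z : EuclideanSpace ℝ (Fin d), Complex.exp (-(Complex.I * (⟪r⁻¹ • x, z⟫ : ℝ))) *
      ((Real.exp (-(t * ν * r ^ (-α) * ‖z‖^α)) : ℝ) : ℂ) := by
    rw [finrank_euclideanSpace_fin] at hsc
    rw [← hsc]
    congr 1; ext z
    have e1 : ⟪r⁻¹ • x, r • z⟫ = ⟪x, z⟫ := by
      rw [real_inner_smul_left, real_inner_smul_right]; field_simp
    have e2 : t * ν * r ^ (-α) * ‖r • z‖ ^ α = t * ν * ‖z‖ ^ α := by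
      rw [norm_smul, Real.norm_eq_abs, abs_of_pos hr, Real.mul_rpow hr.le (norm_nonneg _),
        Real.rpow_neg hr.le]
      have := Real.rpow_pos_of_pos hr α
      field_simp
    rw [e1, e2]
    push_cast
    rfl
  unfold stableKernel
  rw [he, abs_mul, abs_of_pos (by positivity)]
  have h4 : r ^ (-((d:ℝ) + α)) = (r ^ d)⁻¹ * r ^ (-α) := by
    rw [neg_add, Real.rpow_add hr, Real.rpow_neg hr.le, Real.rpow_natCast]
  calc _ ≤ ((2 * π) ^ d)⁻¹ * ((r ^ d)⁻¹ * (C * (t * ν * r ^ (-α)))) := by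
        gcongr
        refine (Complex.abs_re_le_norm _).trans ?_
        rw [norm_smul, Real.norm_eq_abs, abs_abs, abs_of_pos (by positivity)]
        gcongr
    _ = _ := by rw [h4]; ring

lemma int_A (d : ℕ) (hd : 1 ≤ d) (α : ℝ) (hα : 0 < α) : ∃ c > (0:ℝ), ∀ R : ℝ, 0 < R →
    ∫⁻ y : EuclideanSpace ℝ (Fin d),
      ENNReal.ofReal ((Ici R).indicator (fun r : ℝ => r ^ (-((d:ℝ) + α))) ‖y‖)
      ≤ ENNReal.ofReal (c * R ^ (-α)) := by
  haveI : Nonempty (Fin d) := ⟨⟨0, hd⟩⟩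
  refine ⟨d * (volume : Measure (EuclideanSpace ℝ (Fin d))).real (Metric.ball 0 1) / α + 1,
    by positivity, fun R hR => ?_⟩
  set f := (Ici R).indicator (fun r : ℝ => r ^ (-((d:ℝ) + α))) with hf
  have e1 : ∀ y ∈ Ioi (0:ℝ), y ^ (d - 1) • f y =
      (Ici R).indicator (fun r : ℝ => r ^ (-1 - α)) y := by
    intro y hy
    have hy0 : 0 < y := hy
    by_cases h : y ∈ Ici R
    · rw [hf, indicator_of_mem h, indicator_of_mem h, smul_eq_mul, ← Real.rpow_natCast,
        ← Real.rpow_add hy0]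
      congr 1
      rw [Nat.cast_sub hd]; push_cast; ring
    · rw [hf, indicator_of_notMem h, indicator_of_notMem h, smul_zero]
  have hsub : Ici R ∩ Ioi 0 = Ici R := inter_eq_left.mpr fun y hy => lt_of_lt_of_le hR hy
  have hint : Integrable (fun y : EuclideanSpace ℝ (Fin d) => f ‖y‖) := by
    rw [integrable_fun_norm_addHaar, finrank_euclideanSpace_fin,
      integrableOn_congr_fun e1 measurableSet_Ioi]
    rw [IntegrableOn, integrable_indicator_iff measurableSet_Ici, IntegrableOn,
      Measure.restrict_restrict measurableSet_Ici, hsub]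
    refine (integrableOn_Ici_iff_integrableOn_Ioi (b := R)).mpr (integrableOn_Ioi_rpow_of_lt (by linarith) hR)
  have hnn : ∀ y : EuclideanSpace ℝ (Fin d), 0 ≤ f ‖y‖ := fun y =>
    indicator_nonneg (fun r hr => Real.rpow_nonneg (hR.le.trans hr) _) _
  rw [← ofReal_integral_eq_lintegral_ofReal hint (Eventually.of_forall hnn)]
  apply ENNReal.ofReal_le_ofReal
  rw [integral_fun_norm_addHaar, finrank_euclideanSpace_fin,
    setIntegral_congr_fun measurableSet_Ioi e1, integral_indicator measurableSet_Ici,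
    Measure.restrict_restrict measurableSet_Ici, hsub, integral_Ici_eq_integral_Ioi,
    integral_Ioi_rpow_of_lt (by linarith) hR]
  have hRp := Real.rpow_pos_of_pos hR (-α)
  have : -R ^ (-1 - α + 1) / (-1 - α + 1) = R ^ (-α) / α := by
    rw [show -1 - α + 1 = -α by ring]; field_simp
  rw [this, nsmul_eq_mul, smul_eq_mul, add_mul]
  have : (d:ℝ) * ((volume : Measure (EuclideanSpace ℝ (Fin d))).real (Metric.ball 0 1) *
    (R ^ (-α) / α)) = d * (volume : Measure (EuclideanSpace ℝ (Fin d))).real (Metric.ball 0 1) / α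
      * R ^ (-α) := by ring
  linarith

lemma int_B (d : ℕ) (hd : 1 ≤ d) (β : ℝ) (hβd : β < d) : ∃ c > (0:ℝ), ∀ R : ℝ, 0 < R →
    ∫⁻ y : EuclideanSpace ℝ (Fin d),
      ENNReal.ofReal ((Iio R).indicator (fun r : ℝ => r ^ (-β)) ‖y‖)
      ≤ ENNReal.ofReal (c * R ^ ((d:ℝ) - β)) := by
  haveI : Nonempty (Fin d) := ⟨⟨0, hd⟩⟩
  have hdb : 0 < (d:ℝ) - β := by linarith
  refine ⟨d * (volume : Measure (EuclideanSpace ℝ (Fin d))).real (Metric.ball 0 1) / (d - β) + 1,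
    by positivity, fun R hR => ?_⟩
  set f := (Iio R).indicator (fun r : ℝ => r ^ (-β)) with hf
  have e1 : ∀ y ∈ Ioi (0:ℝ), y ^ (d - 1) • f y =
      (Iio R).indicator (fun r : ℝ => r ^ ((d:ℝ) - β - 1)) y := by
    intro y hy
    have hy0 : 0 < y := hy
    by_cases h : y ∈ Iio R
    · rw [hf, indicator_of_mem h, indicator_of_mem h, smul_eq_mul, ← Real.rpow_natCast,
        ← Real.rpow_add hy0]
      congr 1
      rw [Nat.cast_sub hd]; push_cast; ring
    · rw [hf, indicator_of_notMem h, indicator_of_notMem h, smul_zero]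
  have hsub : Iio R ∩ Ioi 0 = Ioo 0 R := by rw [inter_comm]; rfl
  have hint : Integrable (fun y : EuclideanSpace ℝ (Fin d) => f ‖y‖) := by
    rw [integrable_fun_norm_addHaar, finrank_euclideanSpace_fin,
      integrableOn_congr_fun e1 measurableSet_Ioi]
    rw [IntegrableOn, integrable_indicator_iff measurableSet_Iio, IntegrableOn,
      Measure.restrict_restrict measurableSet_Iio, hsub]
    exact (intervalIntegral.integrableOn_Ioo_rpow_iff hR).mpr (by linarith)
  have hnn : ∀ y : EuclideanSpace ℝ (Fin d), 0 ≤ f ‖y‖ := fun y => by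
    rw [hf]
    by_cases h : ‖y‖ ∈ Iio R
    · rw [indicator_of_mem h]; positivity
    · rw [indicator_of_notMem h]
  rw [← ofReal_integral_eq_lintegral_ofReal hint (Eventually.of_forall hnn)]
  apply ENNReal.ofReal_le_ofReal
  rw [integral_fun_norm_addHaar, finrank_euclideanSpace_fin,
    setIntegral_congr_fun measurableSet_Ioi e1, integral_indicator measurableSet_Iio,
    Measure.restrict_restrict measurableSet_Iio, hsub, ← integral_Ioc_eq_integral_Ioo,
    ← intervalIntegral.integral_of_le hR.le, integral_rpow (Or.inl (by linarith))]
  have hRp := Real.rpow_pos_of_pos hR ((d:ℝ) - β)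
  rw [sub_add_cancel, Real.zero_rpow hdb.ne', sub_zero, nsmul_eq_mul, smul_eq_mul, add_mul]
  have : (d:ℝ) * ((volume : Measure (EuclideanSpace ℝ (Fin d))).real (Metric.ball 0 1) *
    (R ^ ((d:ℝ) - β) / ((d:ℝ) - β))) =
    d * (volume : Measure (EuclideanSpace ℝ (Fin d))).real (Metric.ball 0 1) / (d - β)
      * R ^ ((d:ℝ) - β) := by ring
  linarith

/-- Lemma 2.2(a): for `0 < β < min(α,d)` there is `c₁ > 0` with
`∫_{B(x,R)ᶜ × B(x,R)ᶜ} p_t(x-y) p_t(x-w) |y-w|^{-β} dy dw ≤ c₁ t² / R^{2α+β}`. -/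
theorem heat_corr_offBall_offBall (d : ℕ) (hd : 1 ≤ d) (ν α β : ℝ) (hν : 0 < ν)
    (hα : 0 < α) (hα2 : α ≤ 2) (hβ : 0 < β) (hβα : β < α) (hβd : β < d) :
    ∃ c₁ > (0 : ℝ), ∀ (t : ℝ), 0 < t → ∀ (x : EuclideanSpace ℝ (Fin d)) (R : ℝ), 0 < R →
      (∫ yw in (Metric.ball x R)ᶜ ×ˢ (Metric.ball x R)ᶜ,
          stableKernel d ν α t (x - yw.1) * stableKernel d ν α t (x - yw.2) *
            ‖yw.1 - yw.2‖ ^ (-β))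
        ≤ c₁ * t ^ 2 / R ^ (2 * α + β) := by
  obtain ⟨K, hK, hker⟩ := kernel_bound d ν α hν hα hα2
  obtain ⟨cA, hcA, hA⟩ := int_A d hd α hα
  obtain ⟨cB, hcB, hB⟩ := int_B d hd β hβd
  refine ⟨K ^ 2 * cA * (cA + cB), by positivity, fun t ht x R hR => ?_⟩
  set fA := (Ici R).indicator (fun r : ℝ => r ^ (-((d:ℝ) + α))) with hfA
  set fB := (Iio R).indicator (fun r : ℝ => r ^ (-β)) with hfB
  have mA : Measurable fA := Measurable.indicator (by fun_prop) measurableSet_Ici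
  have mB : Measurable fB := Measurable.indicator (by fun_prop) measurableSet_Iio
  have nA : ∀ r, 0 ≤ r → 0 ≤ fA r := fun r hr => by
    rw [hfA]
    by_cases h : r ∈ Ici R
    · rw [indicator_of_mem h]; positivity
    · rw [indicator_of_notMem h]
  have nB : ∀ r, 0 ≤ r → 0 ≤ fB r := fun r hr => by
    rw [hfB]
    by_cases h : r ∈ Iio R
    · rw [indicator_of_mem h]; positivity
    · rw [indicator_of_notMem h]
  set c0 : ENNReal := ENNReal.ofReal ((K * t) ^ 2) with hc0
  set c1 : ENNReal := ENNReal.ofReal (R ^ (-β)) with hc1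
  set c2 : ENNReal := ENNReal.ofReal (R ^ (-((d:ℝ) + α))) with hc2
  have hpt : ∀ u v : EuclideanSpace ℝ (Fin d), R ≤ ‖u‖ → R ≤ ‖v‖ →
      ENNReal.ofReal ‖stableKernel d ν α t u * stableKernel d ν α t v * ‖v - u‖ ^ (-β)‖ ≤
      c0 * (ENNReal.ofReal (fA ‖u‖) * (c1 * ENNReal.ofReal (fA ‖v‖) +
        c2 * ENNReal.ofReal (fB ‖v - u‖))) := by
    intro u v hu hv
    have hu0 : 0 < ‖u‖ := hR.trans_le hu
    have hv0 : 0 < ‖v‖ := hR.trans_le hv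
    have qA := nA ‖v‖ (norm_nonneg _)
    have qA' := nA ‖u‖ (norm_nonneg _)
    have qB := nB ‖v - u‖ (norm_nonneg _)
    rw [hc0, hc1, hc2, ← ENNReal.ofReal_mul (by positivity), ← ENNReal.ofReal_mul (by positivity),
      ← ENNReal.ofReal_add (by positivity) (by positivity), ← ENNReal.ofReal_mul (by positivity),
      ← ENNReal.ofReal_mul (by positivity)]
    apply ENNReal.ofReal_le_ofReal
    have k1 := hker t ht u (norm_pos_iff.mp hu0)
    have k2 := hker t ht v (norm_pos_iff.mp hv0)
    have eu : fA ‖u‖ = ‖u‖ ^ (-((d:ℝ) + α)) := indicator_of_mem (s := Ici R) hu _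
    have ev : fA ‖v‖ = ‖v‖ ^ (-((d:ℝ) + α)) := indicator_of_mem (s := Ici R) hv _
    rw [← eu] at k1
    rw [← ev] at k2
    have key : fA ‖v‖ * ‖v - u‖ ^ (-β) ≤
        R ^ (-β) * fA ‖v‖ + R ^ (-((d:ℝ) + α)) * fB ‖v - u‖ := by
      rcases lt_or_ge ‖v - u‖ R with h | h
      · have eB : fB ‖v - u‖ = ‖v - u‖ ^ (-β) := indicator_of_mem (s := Iio R) h _
        rw [eB] at qB ⊢
        have : fA ‖v‖ ≤ R ^ (-((d:ℝ) + α)) := by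
          rw [ev]
          apply Real.rpow_le_rpow_of_nonpos hR hv
          have : (0:ℝ) ≤ d := by positivity
          linarith
        have h3 : 0 ≤ R ^ (-β) * fA ‖v‖ := by positivity
        nlinarith
      · have : ‖v - u‖ ^ (-β) ≤ R ^ (-β) :=
          Real.rpow_le_rpow_of_nonpos hR h (by linarith)
        have h3 : 0 ≤ R ^ (-((d:ℝ) + α)) * fB ‖v - u‖ := by positivity
        nlinarith
    rw [norm_mul, norm_mul, Real.norm_eq_abs, Real.norm_eq_abs, Real.norm_eq_abs,
      abs_of_nonneg (Real.rpow_nonneg (norm_nonneg (v - u)) (-β))]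
    calc _ ≤ (K * t * fA ‖u‖) * (K * t * fA ‖v‖) * ‖v - u‖ ^ (-β) := by gcongr
      _ = (K * t) ^ 2 * (fA ‖u‖ * (fA ‖v‖ * ‖v - u‖ ^ (-β))) := by ring
      _ ≤ _ := by gcongr
  have hmain : ∫⁻ yw in (Metric.ball x R)ᶜ ×ˢ (Metric.ball x R)ᶜ,
      ENNReal.ofReal ‖stableKernel d ν α t (x - yw.1) * stableKernel d ν α t (x - yw.2) *
            ‖yw.1 - yw.2‖ ^ (-β)‖ ≤
      c0 * (ENNReal.ofReal (cA * R ^ (-α)) * (c1 * ENNReal.ofReal (cA * R ^ (-α)) +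
        c2 * ENNReal.ofReal (cB * R ^ ((d:ℝ) - β)))) := by
    have hS : MeasurableSet ((Metric.ball x R)ᶜ ×ˢ (Metric.ball x R)ᶜ) :=
      measurableSet_ball.compl.prod measurableSet_ball.compl
    calc _ ≤ ∫⁻ yw in (Metric.ball x R)ᶜ ×ˢ (Metric.ball x R)ᶜ,
          c0 * (ENNReal.ofReal (fA ‖x - yw.1‖) * (c1 * ENNReal.ofReal (fA ‖x - yw.2‖) +
        c2 * ENNReal.ofReal (fB ‖(x - yw.2) - (x - yw.1)‖))) := by
          refine setLIntegral_mono' hS fun yw h => ?_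
          have h1 : R ≤ ‖x - yw.1‖ := by
            have := h.1
            simpa [Metric.mem_ball, dist_eq_norm, norm_sub_rev] using this
          have h2 : R ≤ ‖x - yw.2‖ := by
            have := h.2
            simpa [Metric.mem_ball, dist_eq_norm, norm_sub_rev] using this
          have := hpt _ _ h1 h2
          rwa [show yw.1 - yw.2 = (x - yw.2) - (x - yw.1) by abel]
      _ ≤ ∫⁻ yw : EuclideanSpace ℝ (Fin d) × EuclideanSpace ℝ (Fin d),
          c0 * (ENNReal.ofReal (fA ‖x - yw.1‖) * (c1 * ENNReal.ofReal (fA ‖x - yw.2‖) +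
        c2 * ENNReal.ofReal (fB ‖(x - yw.2) - (x - yw.1)‖))) := setLIntegral_le_lintegral _ _
      _ = ∫⁻ y : EuclideanSpace ℝ (Fin d), ∫⁻ w : EuclideanSpace ℝ (Fin d),
          c0 * (ENNReal.ofReal (fA ‖x - y‖) * (c1 * ENNReal.ofReal (fA ‖x - w‖) +
        c2 * ENNReal.ofReal (fB ‖(x - w) - (x - y)‖))) := by
          rw [Measure.volume_eq_prod, lintegral_prod]
          fun_prop
      _ ≤ ∫⁻ y : EuclideanSpace ℝ (Fin d), 
          c0 * (ENNReal.ofReal (fA ‖x - y‖) * (c1 * ENNReal.ofReal (cA * R ^ (-α)) +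
        c2 * ENNReal.ofReal (cB * R ^ ((d:ℝ) - β)))) := by
          refine lintegral_mono fun y => ?_
          beta_reduce
          rw [lintegral_const_mul _ (by fun_prop), lintegral_const_mul _ (by fun_prop),
            lintegral_add_left (by fun_prop), lintegral_const_mul _ (by fun_prop),
            lintegral_const_mul _ (by fun_prop),
            lintegral_sub_left_eq_self (fun w => ENNReal.ofReal (fA ‖w‖)) x,
            lintegral_sub_left_eq_self (fun w => ENNReal.ofReal (fB ‖w - (x - y)‖)) x,
            lintegral_sub_right_eq_self (fun w => ENNReal.ofReal (fB ‖w‖)) (x - y)]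
          gcongr
          · exact hA R hR
          · exact hB R hR
      _ ≤ _ := by
          rw [lintegral_const_mul _ (by fun_prop), lintegral_mul_const _ (by fun_prop),
            lintegral_sub_left_eq_self (fun w => ENNReal.ofReal (fA ‖w‖)) x]
          gcongr
          exact hA R hR
  have hfin : c0 * (ENNReal.ofReal (cA * R ^ (-α)) * (c1 * ENNReal.ofReal (cA * R ^ (-α)) +
        c2 * ENNReal.ofReal (cB * R ^ ((d:ℝ) - β)))) =
      ENNReal.ofReal (K ^ 2 * cA * (cA + cB) * t ^ 2 / R ^ (2 * α + β)) := by
    rw [hc0, hc1, hc2, ← ENNReal.ofReal_mul (by positivity), ← ENNReal.ofReal_mul (by positivity),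
      ← ENNReal.ofReal_add (by positivity) (by positivity), ← ENNReal.ofReal_mul (by positivity),
      ← ENNReal.ofReal_mul (by positivity)]
    congr 1
    have e1 : R ^ (-α) * (R ^ (-β) * R ^ (-α)) = (R ^ (2 * α + β))⁻¹ := by
      rw [← Real.rpow_add hR, ← Real.rpow_add hR, ← Real.rpow_neg hR.le]; congr 1; ring
    have e2 : R ^ (-α) * (R ^ (-((d:ℝ) + α)) * R ^ ((d:ℝ) - β)) = (R ^ (2 * α + β))⁻¹ := by
      rw [← Real.rpow_add hR, ← Real.rpow_add hR, ← Real.rpow_neg hR.le]; congr 1; ring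
    rw [div_eq_mul_inv]
    linear_combination (K * t)^2 * cA * cA * e1 + (K * t)^2 * cA * cB * e2
  rw [hfin] at hmain
  refine (Real.le_norm_self _).trans ((norm_integral_le_lintegral_norm _).trans ?_)
  exact ENNReal.toReal_le_of_le_ofReal (by positivity) hmain
end

section
/- Suppose 0 < β < min(α, d). Then there exists a positive constant c₂ such that for all t > 0, x ∈ ℝ^d and R > 0: ∫_{B(x,R)^c × B(x,R)} p_t(x−y) p_t(x−w) |y−w|^{−β} dy dw ≤ c₂ t^{1−β/α} / R^{α}. -/
open MeasureTheory Real
open scoped RealInnerProductSpace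

open Filter Topology

section aux

variable {d : ℕ}

local notation "E" => EuclideanSpace ℝ (Fin d)

lemma gaussInt {b : ℝ} (hb : 0 < b) :
    Integrable (fun z : EuclideanSpace ℝ (Fin d) => rexp (-b * ‖z‖ ^ 2)) := by
  have h := (GaussianFourier.integrable_cexp_neg_mul_sq_norm_add (V := E) (b := (b : ℂ))
    (by simpa using hb) 0 0).re
  refine h.congr (Eventually.of_forall fun z => ?_)
  simp only [zero_mul, add_zero]
  rw [← Complex.ofReal_pow, ← Complex.ofReal_neg, ← Complex.ofReal_mul, ← Complex.ofReal_exp]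
  exact Complex.ofReal_re _

lemma gaussCos {b : ℝ} (hb : 0 < b) (x : EuclideanSpace ℝ (Fin d)) :
    ∫ z : EuclideanSpace ℝ (Fin d), Real.cos ⟪x, z⟫ * rexp (-b * ‖z‖ ^ 2)
      = (π / b) ^ ((d : ℝ) / 2) * rexp (-‖x‖ ^ 2 / (4 * b)) := by
  have h := GaussianFourier.integral_cexp_neg_mul_sq_norm_add (V := E) (b := (b : ℂ))
    (by simpa using hb) Complex.I x
  have hi := GaussianFourier.integrable_cexp_neg_mul_sq_norm_add (V := E) (b := (b : ℂ))
    (by simpa using hb) Complex.I x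
  have h2 := congrArg Complex.re h
  have h3 := integral_re hi
  simp only [RCLike.re_to_complex] at h3
  rw [← h3] at h2
  have e1 : ∀ z : E, (Complex.exp (-(b:ℂ) * ‖z‖ ^ 2 + Complex.I * (⟪x, z⟫ : ℝ))).re
      = Real.cos ⟪x, z⟫ * rexp (-b * ‖z‖ ^ 2) := by
    intro z
    rw [Complex.exp_re]
    have : (-(b:ℂ) * ‖z‖ ^ 2 + Complex.I * (⟪x, z⟫ : ℝ)) = ((-b * ‖z‖^2 : ℝ) : ℂ) + ((⟪x, z⟫ : ℝ) : ℂ) * Complex.I := by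
      push_cast; ring
    rw [this]
    simp only [Complex.add_re, Complex.add_im, Complex.ofReal_re, Complex.ofReal_im,
      Complex.re_ofReal_mul, Complex.im_ofReal_mul, Complex.I_re, Complex.I_im]
    simp [mul_comm]
  simp only [e1] at h2
  rw [h2]
  have e2 : ((π : ℂ) / b) ^ ((Module.finrank ℝ E : ℂ) / 2)
      = (((π / b) ^ ((d : ℝ) / 2) : ℝ) : ℂ) := by
    rw [Complex.ofReal_cpow (by positivity)]
    simp
  have e3 : Complex.exp (Complex.I ^ 2 * (‖x‖:ℂ) ^ 2 / (4 * b)) = ((rexp (-‖x‖ ^ 2 / (4 * b)) : ℝ) : ℂ) := by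
    push_cast
    simp
  rw [e2, e3, ← Complex.ofReal_mul, Complex.ofReal_re]

/-- positivity of regularised Fourier transforms -/
def PosF (d : ℕ) (g : ℝ → ℝ) : Prop :=
  AEStronglyMeasurable (fun z : EuclideanSpace ℝ (Fin d) => g (‖z‖ ^ 2)) volume ∧
  ∀ ε : ℝ, 0 < ε → ∀ x : EuclideanSpace ℝ (Fin d),
    0 ≤ ∫ z : EuclideanSpace ℝ (Fin d), Real.cos ⟪x, z⟫ * rexp (-ε * ‖z‖ ^ 2) * g (‖z‖ ^ 2)

lemma cosMeas (x : EuclideanSpace ℝ (Fin d)) :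
    Continuous (fun z : EuclideanSpace ℝ (Fin d) => Real.cos ⟪x, z⟫) := by fun_prop

lemma PosF.smul {g : ℝ → ℝ} (h : PosF d g) {c : ℝ} (hc : 0 ≤ c) : PosF d (fun u => c * g u) := by
  refine ⟨h.1.const_mul c, fun ε hε x => ?_⟩
  have : ∀ z : E, Real.cos ⟪x, z⟫ * rexp (-ε * ‖z‖ ^ 2) * (c * g (‖z‖ ^ 2))
     = c * (Real.cos ⟪x, z⟫ * rexp (-ε * ‖z‖ ^ 2) * g (‖z‖ ^ 2)) := fun z => by ring
  simp only [this, integral_const_mul]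
  exact mul_nonneg hc (h.2 ε hε x)

lemma PosF.lim {g : ℕ → ℝ → ℝ} {g0 : ℝ → ℝ} (h : ∀ n, PosF d (g n)) (C : ℝ)
    (hC : ∀ n u, 0 ≤ u → |g n u| ≤ C)
    (hl : ∀ u, 0 ≤ u → Tendsto (fun n => g n u) atTop (𝓝 (g0 u))) : PosF d g0 := by
  refine ⟨aestronglyMeasurable_of_tendsto_ae atTop (fun n => (h n).1)
    (Eventually.of_forall fun z => hl _ (by positivity)), fun ε hε x => ?_⟩
  refine ge_of_tendsto' (x := atTop) (tendsto_integral_of_dominated_convergence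
    (F := fun n (z : E) => Real.cos ⟪x, z⟫ * rexp (-ε * ‖z‖ ^ 2) * g n (‖z‖ ^ 2))
    (fun z : E => rexp (-ε * ‖z‖ ^ 2) * C) ?_ ?_ ?_ ?_) (fun n => (h n).2 ε hε x)
  · intro n
    exact (by fun_prop : Continuous fun z : E => Real.cos ⟪x, z⟫ * rexp (-ε * ‖z‖ ^ 2)).aestronglyMeasurable.mul (h n).1
  · exact (gaussInt hε).mul_const C
  · intro n
    refine Eventually.of_forall fun z => ?_
    rw [norm_mul, norm_mul, Real.norm_eq_abs, Real.norm_eq_abs, Real.norm_eq_abs, Real.abs_exp]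
    have h1 := Real.abs_cos_le_one ⟪x, z⟫
    have h2 := hC n (‖z‖^2) (by positivity)
    have h3 := Real.exp_pos (-ε * ‖z‖ ^ 2)
    calc _ ≤ 1 * rexp (-ε * ‖z‖ ^ 2) * C := by gcongr
      _ = _ := by ring
  · exact Eventually.of_forall fun z => (hl _ (by positivity)).const_mul _

/-- Laplace transforms of finite measures -/
def IsLap (g : ℝ → ℝ) : Prop :=
  ∃ μ : Measure NNReal, IsFiniteMeasure μ ∧ ∀ u, 0 ≤ u → g u = ∫ s : NNReal, rexp (-(u * s)) ∂μ

lemma lapInt (μ : Measure NNReal) [IsFiniteMeasure μ] {u : ℝ} (hu : 0 ≤ u) :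
    Integrable (fun s : NNReal => rexp (-(u * s))) μ := by
  refine Integrable.of_bound (C := 1) (by fun_prop) (Eventually.of_forall fun s => ?_)
  rw [Real.norm_eq_abs, Real.abs_exp, Real.exp_le_one_iff]
  have := s.2
  have : 0 ≤ u * s := by positivity
  linarith

lemma IsLap.posF {g : ℝ → ℝ} (h : IsLap g) : PosF d g := by
  obtain ⟨μ, hμ, hg⟩ := h
  have hg' : ∀ z : E, g (‖z‖^2) = ∫ s : NNReal, rexp (-(‖z‖^2 * s)) ∂μ :=
    fun z => hg _ (by positivity)
  have hc : Continuous (fun p : E × NNReal => rexp (-(‖p.1‖^2 * p.2))) := by fun_prop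
  refine ⟨?_, fun ε hε x => ?_⟩
  · simp only [hg']
    exact (hc.stronglyMeasurable.integral_prod_right (ν := μ)).aestronglyMeasurable
  simp only [hg', ← integral_const_mul]
  rw [integral_integral_swap]
  · refine integral_nonneg fun s => ?_
    have : ∀ z : E, Real.cos ⟪x, z⟫ * rexp (-ε * ‖z‖ ^ 2) * rexp (-(‖z‖^2 * s))
       = Real.cos ⟪x, z⟫ * rexp (-(ε + s) * ‖z‖ ^ 2) := by
      intro z; rw [mul_assoc, ← Real.exp_add]; congr 2; ring
    simp only [this]
    rw [gaussCos (by have := s.2; positivity)]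
    have := s.2
    simp only [Pi.zero_apply]
    positivity
  · have := (gaussInt (d := d) hε).mul_prod (integrable_const (μ := μ) (1:ℝ))
    refine this.mono' (by
      exact (by fun_prop : Continuous fun p : E × NNReal => Real.cos ⟪x, p.1⟫ * rexp (-ε * ‖p.1‖ ^ 2) * rexp (-(‖p.1‖^2 * p.2))).aestronglyMeasurable) ?_
    refine Eventually.of_forall fun p => ?_
    simp only [Function.uncurry]
    rw [norm_mul, norm_mul, Real.norm_eq_abs, Real.norm_eq_abs, Real.norm_eq_abs, Real.abs_exp, Real.abs_exp]
    have h1 := Real.abs_cos_le_one ⟪x, p.1⟫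
    have h2 : rexp (-(‖p.1‖^2 * p.2)) ≤ 1 := by
      rw [Real.exp_le_one_iff]
      have : 0 ≤ ‖p.1‖^2 * (p.2:ℝ) := by positivity
      linarith
    calc _ ≤ 1 * rexp (-ε * ‖p.1‖ ^ 2) * 1 := by gcongr
      _ = _ := by ring

lemma IsLap.mul {g h : ℝ → ℝ} (hg : IsLap g) (hh : IsLap h) : IsLap (fun u => g u * h u) := by
  obtain ⟨μ, hμ, hg⟩ := hg
  obtain ⟨ν, hν, hh⟩ := hh
  refine ⟨(μ.prod ν).map (fun p => p.1 + p.2), inferInstance, fun u hu => ?_⟩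
  rw [integral_map (by fun_prop) (by fun_prop)]
  simp only [NNReal.coe_add, mul_add, neg_add, Real.exp_add]
  rw [hg u hu, hh u hu, ← integral_prod_mul]

lemma IsLap.one_add {g : ℝ → ℝ} (hg : IsLap g) (c : NNReal) : IsLap (fun u => 1 + c * g u) := by
  obtain ⟨μ, hμ, hg⟩ := hg
  refine ⟨Measure.dirac 0 + c • μ, inferInstance, fun u hu => ?_⟩
  rw [integral_add_measure (lapInt _ hu) (lapInt _ hu), integral_smul_nnreal_measure, ← hg u hu]
  simp [NNReal.smul_def]

lemma isLap_one : IsLap (fun _ => 1) := by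
  refine ⟨Measure.dirac 0, inferInstance, fun u hu => ?_⟩
  simp

lemma IsLap.pow {g : ℝ → ℝ} (hg : IsLap g) (n : ℕ) : IsLap (fun u => g u ^ n) := by
  induction n with
  | zero => simpa using isLap_one
  | succ n ih => simpa only [pow_succ] using ih.mul hg

lemma IsLap.exp_posF {g : ℝ → ℝ} (hg : IsLap g) : PosF d (fun u => rexp (g u)) := by
  have hb : ∃ C, ∀ u, 0 ≤ u → 0 ≤ g u ∧ g u ≤ C := by
    obtain ⟨μ, hμ, hg⟩ := hg
    refine ⟨∫ s : NNReal, 1 ∂μ, fun u hu => ?_⟩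
    rw [hg u hu]
    refine ⟨integral_nonneg fun s => (Real.exp_pos _).le,
      integral_mono (lapInt μ hu) (integrable_const _) fun s => ?_⟩
    simp only [Real.exp_le_one_iff]
    have : 0 ≤ u * (s:ℝ) := by positivity
    linarith
  obtain ⟨C, hC⟩ := hb
  refine PosF.lim (g := fun n u => (1 + ((n:NNReal)⁻¹ : NNReal) * g u) ^ n)
    (fun n => ((hg.one_add _).pow n).posF) (rexp C) (fun n u hu => ?_) (fun u hu => ?_)
  · obtain ⟨h0, h1⟩ := hC u hu
    have hx : 0 ≤ (((n:NNReal)⁻¹ : NNReal) : ℝ) * g u := by positivity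
    rw [abs_of_nonneg (by positivity)]
    calc _ ≤ (rexp ((((n:NNReal)⁻¹ : NNReal) : ℝ) * g u)) ^ n := by
          gcongr
          linarith [Real.add_one_le_exp ((((n:NNReal)⁻¹ : NNReal) : ℝ) * g u)]
      _ = rexp (n * ((((n:NNReal)⁻¹ : NNReal) : ℝ) * g u)) := by rw [← Real.exp_nat_mul]
      _ ≤ rexp C := by
          gcongr
          rcases Nat.eq_zero_or_pos n with h | h
          · subst h; simp; linarith
          · have : (n:ℝ) ≠ 0 := by positivity
            push_cast
            rw [mul_inv_cancel_left₀ this]; exact h1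
  · have := Real.tendsto_one_add_div_pow_exp (g u)
    refine this.congr fun n => ?_
    push_cast
    rw [div_eq_inv_mul]


lemma one_sub_exp_bd {v : ℝ} (hv : 0 ≤ v) : 0 ≤ 1 - rexp (-v) ∧ 1 - rexp (-v) ≤ 1 ∧ 1 - rexp (-v) ≤ v := by
  refine ⟨?_, ?_, ?_⟩
  · have : rexp (-v) ≤ 1 := by rw [Real.exp_le_one_iff]; linarith
    linarith
  · linarith [Real.exp_pos (-v)]
  · linarith [Real.add_one_le_exp (-v)]

lemma bernInt {a u : ℝ} (ha : 0 < a) (ha1 : a < 1) (hu : 0 ≤ u) :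
    IntegrableOn (fun s : ℝ => (1 - rexp (-(u * s))) * s ^ (-1 - a)) (Set.Ioi 0) := by
  have hmeas : Measurable (fun s : ℝ => (1 - rexp (-(u * s))) * s ^ (-1 - a)) := by fun_prop
  rw [← Set.Ioc_union_Ioi_eq_Ioi (zero_le_one' ℝ)]
  refine IntegrableOn.union ?_ ?_
  · have h1 : IntegrableOn (fun s : ℝ => u * s ^ (-a)) (Set.Ioc 0 1) := by
      have := (intervalIntegral.intervalIntegrable_rpow' (a := 0) (b := 1) (r := -a) (by linarith))
      rw [intervalIntegrable_iff_integrableOn_Ioc_of_le zero_le_one] at this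
      exact this.const_mul u
    refine h1.mono' hmeas.aestronglyMeasurable ?_
    refine (ae_restrict_iff' measurableSet_Ioc).2 (Eventually.of_forall fun s hs => ?_)
    have hs0 : 0 < s := hs.1
    obtain ⟨b1, b2, b3⟩ := one_sub_exp_bd (v := u * s) (by positivity)
    rw [Real.norm_eq_abs, abs_of_nonneg (by positivity)]
    calc _ ≤ (u * s) * s ^ (-1 - a) := by gcongr
      _ = u * s ^ (-a) := by
        rw [mul_assoc, ← Real.rpow_one_add' hs0.le (by linarith)]
        congr 2; ring
  · have h1 : IntegrableOn (fun s : ℝ => s ^ (-1 - a)) (Set.Ioi 1) :=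
      integrableOn_Ioi_rpow_of_lt (by linarith) one_pos
    refine h1.mono' hmeas.aestronglyMeasurable ?_
    refine (ae_restrict_iff' measurableSet_Ioi).2 (Eventually.of_forall fun s hs => ?_)
    have hs0 : 0 < s := lt_trans one_pos hs
    obtain ⟨b1, b2, b3⟩ := one_sub_exp_bd (v := u * s) (by positivity)
    rw [Real.norm_eq_abs, abs_of_nonneg (by positivity)]
    calc _ ≤ 1 * s ^ (-1 - a) := by gcongr
      _ = _ := one_mul _

/-- the constant in the Bernstein representation -/
noncomputable def bernC (a : ℝ) : ℝ := ∫ s in Set.Ioi (0:ℝ), (1 - rexp (-s)) * s ^ (-1 - a)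

lemma bernC_pos {a : ℝ} (ha : 0 < a) (ha1 : a < 1) : 0 < bernC a := by
  unfold bernC
  have hi := bernInt ha ha1 zero_le_one
  simp only [one_mul] at hi
  rw [setIntegral_pos_iff_support_of_nonneg_ae _ hi]
  · have : Set.Ioi (0:ℝ) ⊆ (Function.support fun s : ℝ => (1 - rexp (-s)) * s ^ (-1 - a)) ∩ Set.Ioi 0 := by
      intro s hs
      refine ⟨?_, hs⟩
      have hs0 : (0:ℝ) < s := hs
      have : rexp (-s) < 1 := by rw [Real.exp_lt_one_iff]; linarith
      have h1 : 0 < 1 - rexp (-s) := by linarith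
      rw [Function.mem_support]
      positivity
    refine lt_of_lt_of_le ?_ (measure_mono this)
    simp
  · refine (ae_restrict_iff' measurableSet_Ioi).2 (Eventually.of_forall fun s hs => ?_)
    have hs0 : (0:ℝ) < s := hs
    obtain ⟨b1, b2, b3⟩ := one_sub_exp_bd (v := s) hs0.le
    simp only [Pi.zero_apply]
    positivity

lemma bern_eq {a u : ℝ} (ha : 0 < a) (hu : 0 ≤ u) :
    ∫ s in Set.Ioi (0:ℝ), (1 - rexp (-(u * s))) * s ^ (-1 - a) = u ^ a * bernC a := by
  rcases hu.eq_or_lt with rfl | hu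
  · simp [Real.zero_rpow ha.ne']
  have h := integral_comp_mul_left_Ioi (fun s : ℝ => (1 - rexp (-s)) * s ^ (-1 - a)) 0 hu
  rw [mul_zero, smul_eq_mul] at h
  change _ = u⁻¹ * bernC a at h
  have h2 : ∫ s in Set.Ioi (0:ℝ), (1 - rexp (-(u * s))) * s ^ (-1 - a)
      = ∫ s in Set.Ioi (0:ℝ), u ^ (1 + a) * ((1 - rexp (-(u * s))) * (u * s) ^ (-1 - a)) := by
    refine setIntegral_congr_fun measurableSet_Ioi fun s hs => ?_
    have hs0 : (0:ℝ) < s := hs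
    rw [Real.mul_rpow hu.le hs0.le]
    have : u ^ (1 + a) * u ^ (-1 - a) = 1 := by
      rw [← Real.rpow_add hu]; simp
    linear_combination (-(1 - rexp (-(u * s))) * s ^ (-1 - a)) * this
  rw [h2, integral_const_mul, h, Real.rpow_add hu, Real.rpow_one]
  field_simp

lemma lapTrunc {a k δ : ℝ} (ha : 0 < a) (hk : 0 ≤ k) (hδ : 0 < δ) :
    IsLap (fun u => ∫ s in Set.Ioi δ, (k * s ^ (-1 - a)) * rexp (-(u * s))) := by
  have hint : IntegrableOn (fun s : ℝ => k * s ^ (-1 - a)) (Set.Ioi δ) :=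
    (integrableOn_Ioi_rpow_of_lt (by linarith) hδ).const_mul k
  have hfin : IsFiniteMeasure ((volume.restrict (Set.Ioi δ)).withDensity
      (fun s : ℝ => ENNReal.ofReal (k * s ^ (-1 - a)))) :=
    isFiniteMeasure_withDensity_ofReal hint.2
  refine ⟨((volume.restrict (Set.Ioi δ)).withDensity
      (fun s : ℝ => ENNReal.ofReal (k * s ^ (-1 - a)))).map Real.toNNReal, inferInstance,
      fun u hu => ?_⟩
  rw [integral_map (by fun_prop) (by fun_prop),
    integral_withDensity_eq_integral_toReal_smul (by fun_prop) (by simp)]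
  refine setIntegral_congr_fun measurableSet_Ioi fun s hs => ?_
  have hs0 : (0:ℝ) < s := lt_trans hδ hs
  simp only [smul_eq_mul]
  rw [ENNReal.toReal_ofReal (by positivity), Real.coe_toNNReal _ hs0.le]

lemma posF_exp_rpow {a κ : ℝ} (ha : 0 < a) (ha1 : a < 1) (hκ : 0 ≤ κ) :
    PosF d (fun u => rexp (-(κ * u ^ a))) := by
  have hc := bernC_pos ha ha1
  set k := κ / bernC a with hkdef
  have hk : 0 ≤ k := by positivity
  let δ : ℕ → ℝ := fun n => 1 / ((n:ℝ) + 1)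
  have hδ : ∀ n, 0 < δ n := fun n => by positivity
  let h : ℕ → ℝ → ℝ := fun n u => ∫ s in Set.Ioi (δ n), (k * s ^ (-1 - a)) * rexp (-(u * s))
  have hP : ∀ n, PosF d (fun u => rexp (-(h n 0)) * rexp (h n u)) := fun n =>
    (lapTrunc ha hk (hδ n)).exp_posF.smul (Real.exp_pos _).le
  have key : ∀ n u, 0 ≤ u → rexp (-(h n 0)) * rexp (h n u)
      = rexp (-(k * ∫ s in Set.Ioi (δ n), (1 - rexp (-(u * s))) * s ^ (-1 - a))) := by
    intro n u hu
    rw [← Real.exp_add]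
    congr 1
    have hi0 : IntegrableOn (fun s : ℝ => k * s ^ (-1 - a)) (Set.Ioi (δ n)) :=
      (integrableOn_Ioi_rpow_of_lt (by linarith) (hδ n)).const_mul k
    have hi1 : IntegrableOn (fun s : ℝ => (1 - rexp (-(u * s))) * s ^ (-1 - a)) (Set.Ioi (δ n)) :=
      (bernInt ha ha1 hu).mono_set (Set.Ioi_subset_Ioi (hδ n).le)
    have e : h n u = h n 0 - k * ∫ s in Set.Ioi (δ n), (1 - rexp (-(u * s))) * s ^ (-1 - a) := by
      simp only [h]
      rw [← integral_const_mul, ← integral_sub]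
      · refine integral_congr_ae (Eventually.of_forall fun s => ?_)
        simp; ring
      · simp only [zero_mul, neg_zero, Real.exp_zero, mul_one]; exact hi0
      · exact hi1.const_mul k
    rw [e]; ring
  refine PosF.lim hP 1 (fun n u hu => ?_) (fun u hu => ?_)
  · rw [key n u hu, Real.abs_exp, Real.exp_le_one_iff]
    have : 0 ≤ ∫ s in Set.Ioi (δ n), (1 - rexp (-(u * s))) * s ^ (-1 - a) := by
      refine setIntegral_nonneg measurableSet_Ioi fun s hs => ?_
      have hs0 : (0:ℝ) < s := lt_trans (hδ n) hs
      have := (one_sub_exp_bd (v := u * s) (by positivity)).1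
      positivity
    have := mul_nonneg hk this
    linarith
  · have hcov := (aecover_Ioi_of_Ioi (μ := volume) (A := (0:ℝ)) (a := δ) (l := atTop)
      (tendsto_one_div_add_atTop_nhds_zero_nat)).integral_tendsto_of_countably_generated
        (bernInt ha ha1 hu)
    rw [bern_eq ha hu] at hcov
    have h2 := ((hcov.const_mul k).neg).rexp
    have e : k * (u ^ a * bernC a) = κ * u ^ a := by
      rw [hkdef]; field_simp
    rw [e] at h2
    refine h2.congr fun n => ?_
    rw [key n u hu, Measure.restrict_restrict measurableSet_Ioi,
      Set.inter_eq_left.2 (Set.Ioi_subset_Ioi (hδ n).le)]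

lemma posF_stable {α κ : ℝ} (hα : 0 < α) (hα2 : α ≤ 2) (hκ : 0 ≤ κ) :
    PosF d (fun u => rexp (-(κ * u ^ (α / 2)))) := by
  rcases hα2.eq_or_lt with rfl | h
  · refine IsLap.posF ⟨Measure.dirac κ.toNNReal, inferInstance, fun u hu => ?_⟩
    simp [mul_comm, hκ]
  · exact posF_exp_rpow (by positivity) (by linarith) hκ

lemma expInt {α κ : ℝ} (hd : 1 ≤ d) (hα : 0 < α) (hκ : 0 < κ) :
    Integrable (fun z : EuclideanSpace ℝ (Fin d) => rexp (-(κ * ‖z‖ ^ α))) := by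
  have : Nonempty (Fin d) := ⟨⟨0, hd⟩⟩
  have := (integrable_fun_norm_addHaar (volume : Measure E) (f := fun r => rexp (-(κ * r ^ α)))).2
  apply this
  have h := integrableOn_rpow_mul_exp_neg_mul_rpow (p := α) (s := ((d - 1 : ℕ) : ℝ)) (b := κ)
    (by have : (0:ℝ) ≤ ((d - 1 : ℕ) : ℝ) := by positivity
        linarith) hα hκ
  simpa [neg_mul] using h

lemma kernel_eq {ν α t : ℝ} (hd : 1 ≤ d) (hα : 0 < α) (hκ : 0 < t * ν) (x : EuclideanSpace ℝ (Fin d)) :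
    stableKernel d ν α t x = ((2 * π) ^ d)⁻¹ *
      ∫ z : EuclideanSpace ℝ (Fin d), Real.cos ⟪x, z⟫ * rexp (-(t * ν * ‖z‖ ^ α)) := by
  unfold stableKernel
  congr 1
  have e : ∀ z : E, Complex.exp (-(Complex.I * (⟪x, z⟫ : ℝ))) *
        Complex.exp (-((t * ν * ‖z‖ ^ α : ℝ) : ℂ))
      = Complex.exp (((-⟪x, z⟫ : ℝ) : ℂ) * Complex.I) * ((rexp (-(t * ν * ‖z‖ ^ α)) : ℝ) : ℂ) := by
    intro z
    push_cast
    congr 2; ring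
  have hi : Integrable (fun z : E => Complex.exp (((-⟪x, z⟫ : ℝ) : ℂ) * Complex.I) *
      ((rexp (-(t * ν * ‖z‖ ^ α)) : ℝ) : ℂ)) := by
    refine (expInt hd hα hκ).mono' ?_ (Eventually.of_forall fun z => ?_)
    · have := (expInt (d := d) hd hα hκ).ofReal (𝕜 := ℂ)
      exact (by fun_prop : Continuous fun z : E => Complex.exp (((-⟪x, z⟫ : ℝ) : ℂ) * Complex.I)).aestronglyMeasurable.mul this.1
    · rw [norm_mul, Complex.norm_exp_ofReal_mul_I, one_mul, Complex.norm_real, Real.norm_eq_abs, Real.abs_exp]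
  simp only [e]
  have h3 := integral_re hi
  simp only [RCLike.re_to_complex] at h3
  rw [← h3]
  refine integral_congr_ae (Eventually.of_forall fun z => ?_)
  simp only [Complex.re_mul_ofReal, Complex.exp_ofReal_mul_I_re, Real.cos_neg]

lemma cosInt {α κ : ℝ} (hd : 1 ≤ d) (hα : 0 < α) (hκ : 0 < κ) (x : EuclideanSpace ℝ (Fin d)) :
    Integrable (fun z : EuclideanSpace ℝ (Fin d) => Real.cos ⟪x, z⟫ * rexp (-(κ * ‖z‖ ^ α))) := by
  refine (expInt hd hα hκ).mono' ((cosMeas x).aestronglyMeasurable.mul (expInt hd hα hκ).1)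
    (Eventually.of_forall fun z => ?_)
  rw [norm_mul, Real.norm_eq_abs, Real.norm_eq_abs, Real.abs_exp]
  exact mul_le_of_le_one_left (Real.exp_pos _).le (Real.abs_cos_le_one _)

lemma kernel_nonneg {ν α t : ℝ} (hd : 1 ≤ d) (hα : 0 < α) (hα2 : α ≤ 2) (hκ : 0 < t * ν)
    (x : EuclideanSpace ℝ (Fin d)) : 0 ≤ stableKernel d ν α t x := by
  rw [kernel_eq hd hα hκ]
  refine mul_nonneg (by positivity) ?_
  have hP := posF_stable (d := d) hα hα2 hκ.le
  let ε : ℕ → ℝ := fun n => 1 / ((n:ℝ) + 1)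
  have hε : ∀ n, 0 < ε n := fun n => by positivity
  have e : ∀ z : E, ((‖z‖ ^ 2) ^ (α / 2) : ℝ) = ‖z‖ ^ α := fun z => by
    rw [← Real.rpow_natCast, ← Real.rpow_mul (norm_nonneg _)]; congr 1; push_cast; ring
  refine ge_of_tendsto' (x := atTop) (tendsto_integral_of_dominated_convergence
    (F := fun n (z : E) => Real.cos ⟪x, z⟫ * rexp (-ε n * ‖z‖ ^ 2) * rexp (-(t * ν * (‖z‖ ^ 2) ^ (α / 2))))
    (fun z : E => rexp (-(t * ν * ‖z‖ ^ α))) ?_ ?_ ?_ ?_) (fun n => hP.2 (ε n) (hε n) x)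
  · intro n
    exact (by fun_prop : Continuous fun z : E => Real.cos ⟪x, z⟫ * rexp (-ε n * ‖z‖ ^ 2)).aestronglyMeasurable.mul hP.1
  · exact expInt hd hα hκ
  · intro n
    refine Eventually.of_forall fun z => ?_
    rw [norm_mul, norm_mul, Real.norm_eq_abs, Real.norm_eq_abs, Real.norm_eq_abs, Real.abs_exp, Real.abs_exp, e]
    have h1 := Real.abs_cos_le_one ⟪x, z⟫
    have h2 : rexp (-ε n * ‖z‖ ^ 2) ≤ 1 := by
      rw [Real.exp_le_one_iff]
      have := hε n
      have : 0 ≤ ε n * ‖z‖ ^ 2 := by positivity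
      linarith
    calc _ ≤ 1 * 1 * rexp (-(t * ν * ‖z‖ ^ α)) := by gcongr
      _ = _ := by ring
  · refine Eventually.of_forall fun z => ?_
    simp only [e]
    have h1 : Tendsto ε atTop (𝓝 0) := tendsto_one_div_add_atTop_nhds_zero_nat
    have h2 := ((h1.neg.mul_const (‖z‖^2)).rexp.const_mul (Real.cos ⟪x, z⟫)).mul_const (rexp (-(t * ν * ‖z‖ ^ α)))
    simpa using h2


lemma kernel_cont {ν α t : ℝ} (hd : 1 ≤ d) (hα : 0 < α) (hκ : 0 < t * ν) :
    Continuous (stableKernel d ν α t) := by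
  have : stableKernel d ν α t = fun x => ((2 * π) ^ d)⁻¹ *
      ∫ z : EuclideanSpace ℝ (Fin d), Real.cos ⟪x, z⟫ * rexp (-(t * ν * ‖z‖ ^ α)) :=
    funext fun x => kernel_eq hd hα hκ x
  rw [this]
  refine continuous_const.mul (continuous_of_dominated (bound := fun z : E => rexp (-(t * ν * ‖z‖ ^ α))) ?_ ?_ ?_ ?_)
  · exact fun x => (cosInt hd hα hκ x).1
  · intro x
    refine Eventually.of_forall fun z => ?_
    rw [norm_mul, Real.norm_eq_abs, Real.norm_eq_abs, Real.abs_exp]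
    exact mul_le_of_le_one_left (Real.exp_pos _).le (Real.abs_cos_le_one _)
  · exact expInt hd hα hκ
  · exact Eventually.of_forall fun z => by fun_prop

lemma scale_int (F : EuclideanSpace ℝ (Fin d) → ℝ) {R : ℝ} (hR : 0 < R) :
    ∫ z, F (R • z) = (R ^ d)⁻¹ * ∫ z, F z := by
  rw [Measure.integral_comp_smul_of_nonneg volume F R (hR := hR.le)]
  simp

lemma kernel_le {ν α t : ℝ} (hd : 1 ≤ d) (hα : 0 < α) (hν : 0 < ν) (ht : 0 < t)
    (x : EuclideanSpace ℝ (Fin d)) :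
    stableKernel d ν α t x ≤ (((2 * π) ^ d)⁻¹ *
      ∫ z : EuclideanSpace ℝ (Fin d), rexp (-(ν * ‖z‖ ^ α))) * ((t ^ (1 / α)) ^ d)⁻¹ := by
  have hκ : 0 < t * ν := by positivity
  have hr : 0 < t ^ (1 / α) := by positivity
  have hs := scale_int (fun z : E => rexp (-(ν * ‖z‖ ^ α))) hr
  have e : ∀ z : E, rexp (-(ν * ‖(t ^ (1 / α)) • z‖ ^ α)) = rexp (-(t * ν * ‖z‖ ^ α)) := by
    intro z
    rw [norm_smul, Real.norm_eq_abs, abs_of_pos hr, Real.mul_rpow hr.le (norm_nonneg _),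
      ← Real.rpow_mul ht.le, one_div_mul_cancel hα.ne', Real.rpow_one]
    congr 2; ring
  simp only [e] at hs
  rw [kernel_eq hd hα hκ, mul_assoc]
  refine mul_le_mul_of_nonneg_left ?_ (by positivity)
  rw [mul_comm (∫ z : E, _) _, ← hs]
  refine integral_mono (cosInt hd hα hκ x) (expInt hd hα hκ) fun z => ?_
  exact mul_le_of_le_one_left (Real.exp_pos _).le (Real.cos_le_one _)

/-- the dual Gaussian density -/
noncomputable def gG (d : ℕ) (z : EuclideanSpace ℝ (Fin d)) : ℝ :=
  ((2 * π) ^ d)⁻¹ * π ^ ((d : ℝ) / 2) * rexp (-(1 / 4) * ‖z‖ ^ 2)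

lemma gG_nonneg (z : EuclideanSpace ℝ (Fin d)) : 0 ≤ gG d z := by unfold gG; positivity

lemma gG_int : Integrable (gG d) := (gaussInt (by norm_num)).const_mul _

lemma gG_one : ∫ z, gG d z = 1 := by
  unfold gG
  rw [integral_const_mul]
  have h := gaussCos (d := d) (b := 1 / 4) (by norm_num) 0
  simp only [inner_zero_left, Real.cos_zero, one_mul, norm_zero] at h
  rw [h]
  simp only [ne_eq, OfNat.ofNat_ne_zero, not_false_eq_true, zero_pow, neg_zero, zero_div, Real.exp_zero, mul_one]
  rw [mul_assoc, ← Real.mul_rpow (by positivity) (by positivity)]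
  have : π * (π / (1 / 4)) = (2 * π) ^ (2:ℝ) := by
    rw [Real.rpow_two]; ring
  rw [this, ← Real.rpow_mul (by positivity), mul_div_cancel₀ _ (two_ne_zero), Real.rpow_natCast,
    inv_mul_cancel₀ (by positivity)]

lemma gG_scale_int {R : ℝ} (hR : 0 < R) :
    Integrable (fun z : EuclideanSpace ℝ (Fin d) => R ^ d * gG d (R • z)) :=
  (gG_int.comp_smul hR.ne').const_mul _

lemma dual {ν α t R : ℝ} (hd : 1 ≤ d) (hα : 0 < α) (hκ : 0 < t * ν) (hR : 0 < R) :
    Integrable (fun x : EuclideanSpace ℝ (Fin d) => stableKernel d ν α t x * rexp (-(R ^ 2)⁻¹ * ‖x‖ ^ 2)) ∧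
    ∫ x : EuclideanSpace ℝ (Fin d), stableKernel d ν α t x * rexp (-(R ^ 2)⁻¹ * ‖x‖ ^ 2)
      = ∫ z, rexp (-(t * ν * ‖z‖ ^ α)) * (R ^ d * gG d (R • z)) := by
  have hδ : 0 < (R ^ 2)⁻¹ := by positivity
  have hI : Integrable (fun p : E × E => rexp (-(R ^ 2)⁻¹ * ‖p.1‖ ^ 2) * (Real.cos ⟪p.1, p.2⟫ * rexp (-(t * ν * ‖p.2‖ ^ α)))) (volume.prod volume) := by
    have h1 := (gaussInt (d := d) hδ).mul_prod (expInt (d := d) hd hα hκ)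
    have hc : Continuous (fun p : E × E => Real.cos ⟪p.1, p.2⟫) := by fun_prop
    refine h1.mono' ?_ (Eventually.of_forall fun p => ?_)
    · refine (hc.aestronglyMeasurable.mul h1.1).congr (Eventually.of_forall fun p => ?_)
      simp only [Pi.mul_apply]; ring
    · rw [norm_mul, norm_mul, Real.norm_eq_abs, Real.norm_eq_abs, Real.norm_eq_abs, Real.abs_exp, Real.abs_exp]
      gcongr
      exact mul_le_of_le_one_left (Real.exp_pos _).le (Real.abs_cos_le_one _)
  have e : ∀ x : E, stableKernel d ν α t x * rexp (-(R ^ 2)⁻¹ * ‖x‖ ^ 2)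
     = ((2 * π) ^ d)⁻¹ * ∫ z : E, rexp (-(R ^ 2)⁻¹ * ‖x‖ ^ 2) * (Real.cos ⟪x, z⟫ * rexp (-(t * ν * ‖z‖ ^ α))) := by
    intro x
    rw [kernel_eq hd hα hκ, integral_const_mul]; ring
  simp only [e]
  refine ⟨hI.integral_prod_left.const_mul _, ?_⟩
  rw [integral_const_mul, integral_integral_swap hI, ← integral_const_mul]
  refine integral_congr_ae (Eventually.of_forall fun z => ?_)
  have e2 : ∀ x : E, rexp (-(R ^ 2)⁻¹ * ‖x‖ ^ 2) * (Real.cos ⟪x, z⟫ * rexp (-(t * ν * ‖z‖ ^ α)))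
     = rexp (-(t * ν * ‖z‖ ^ α)) * (Real.cos ⟪z, x⟫ * rexp (-(R ^ 2)⁻¹ * ‖x‖ ^ 2)) := by
    intro x; rw [real_inner_comm]; ring
  simp only [e2]
  rw [integral_const_mul, gaussCos hδ]
  unfold gG
  have e3 : (π / (R ^ 2)⁻¹) ^ ((d : ℝ) / 2) = π ^ ((d : ℝ) / 2) * R ^ d := by
    rw [div_inv_eq_mul, Real.mul_rpow (by positivity) (by positivity), ← Real.rpow_natCast R 2,
      ← Real.rpow_mul hR.le, Nat.cast_ofNat, mul_div_cancel₀ _ (two_ne_zero), Real.rpow_natCast]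
  have e4 : -‖z‖ ^ 2 / (4 * (R ^ 2)⁻¹) = -(1 / 4) * ‖R • z‖ ^ 2 := by
    rw [norm_smul, Real.norm_eq_abs, abs_of_pos hR]; field_simp
  rw [e3, e4]; ring

lemma dual_le_one {ν α t R : ℝ} (hd : 1 ≤ d) (hα : 0 < α) (hκ : 0 < t * ν) (hR : 0 < R) :
    ∫ x : EuclideanSpace ℝ (Fin d), stableKernel d ν α t x * rexp (-(R ^ 2)⁻¹ * ‖x‖ ^ 2) ≤ 1 := by
  rw [(dual hd hα hκ hR).2]
  calc _ ≤ ∫ z, R ^ d * gG d (R • z) := by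
        refine integral_mono_of_nonneg (Eventually.of_forall fun z => ?_) (gG_scale_int hR) (Eventually.of_forall fun z => ?_)
        · have := gG_nonneg (R • z)
          simp only [Pi.zero_apply]; positivity
        · have := gG_nonneg (R • z)
          refine mul_le_of_le_one_left (by positivity) ?_
          rw [Real.exp_le_one_iff]
          have : 0 ≤ t * ν * ‖z‖ ^ α := by positivity
          linarith
    _ = 1 := by
        rw [integral_const_mul, scale_int _ hR, gG_one, mul_one, mul_inv_cancel₀ (by positivity)]

lemma kernel_mass {ν α t : ℝ} (hd : 1 ≤ d) (hα : 0 < α) (hα2 : α ≤ 2) (hκ : 0 < t * ν) :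
    Integrable (stableKernel d ν α t) ∧ ∫ x, stableKernel d ν α t x ≤ 1 := by
  have hp := kernel_nonneg (d := d) hd hα hα2 hκ
  have hc := kernel_cont (d := d) hd hα hκ
  let ρ : ℕ → ℝ := fun n => (n : ℝ) + 1
  have hρ : ∀ n, 0 < ρ n := fun n => by positivity
  have hlim : Tendsto (fun n => ((ρ n) ^ 2)⁻¹) atTop (𝓝 0) :=
    tendsto_inv_atTop_zero.comp ((tendsto_pow_atTop two_ne_zero).comp
      (tendsto_natCast_atTop_atTop.atTop_add tendsto_const_nhds))
  have key : ∫⁻ x, ENNReal.ofReal (stableKernel d ν α t x) ≤ 1 := by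
    have h := lintegral_tendsto_of_tendsto_of_monotone (μ := (volume : Measure E))
      (f := fun n x => ENNReal.ofReal (stableKernel d ν α t x * rexp (-((ρ n) ^ 2)⁻¹ * ‖x‖ ^ 2)))
      (F := fun x => ENNReal.ofReal (stableKernel d ν α t x))
      (fun n => by fun_prop)
      (Eventually.of_forall fun x => by
        intro m n hmn
        refine ENNReal.ofReal_le_ofReal (mul_le_mul_of_nonneg_left (Real.exp_le_exp.2 ?_) (hp x))
        have h1 : ρ m ≤ ρ n := by simp only [ρ]; gcongr
        have h2 : ((ρ n) ^ 2)⁻¹ ≤ ((ρ m) ^ 2)⁻¹ := by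
          have := hρ m
          gcongr
        exact mul_le_mul_of_nonneg_right (neg_le_neg h2) (by positivity))
      (Eventually.of_forall fun x => by
        refine ENNReal.tendsto_ofReal ?_
        have h2 := (hlim.neg.mul_const (‖x‖^2)).rexp.const_mul (stableKernel d ν α t x)
        simpa using h2)
    refine le_of_tendsto' h fun n => ?_
    have hd2 := dual (R := ρ n) hd hα hκ (hρ n)
    rw [← ofReal_integral_eq_lintegral_ofReal hd2.1 (Eventually.of_forall fun x => mul_nonneg (hp x) (Real.exp_pos _).le)]
    rw [← ENNReal.ofReal_one]
    exact ENNReal.ofReal_le_ofReal (dual_le_one hd hα hκ (hρ n))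
  have hi : Integrable (stableKernel d ν α t) := by
    refine ⟨hc.aestronglyMeasurable, ?_⟩
    rw [hasFiniteIntegral_iff_ofReal (Eventually.of_forall hp)]
    exact lt_of_le_of_lt key ENNReal.one_lt_top
  refine ⟨hi, ?_⟩
  rw [← ofReal_integral_eq_lintegral_ofReal hi (Eventually.of_forall hp)] at key
  exact ENNReal.ofReal_le_one.1 key

lemma gG_mom_int {α : ℝ} (hd : 1 ≤ d) (hα : 0 < α) :
    Integrable (fun z : EuclideanSpace ℝ (Fin d) => ‖z‖ ^ α * gG d z) := by
  have : Nonempty (Fin d) := ⟨⟨0, hd⟩⟩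
  have := (integrable_fun_norm_addHaar (volume : Measure E) (f := fun r => r ^ α *
     (((2 * π) ^ d)⁻¹ * π ^ ((d : ℝ) / 2) * rexp (-(1 / 4) * r ^ 2)))).2
  apply this
  have h := (integrableOn_rpow_mul_exp_neg_mul_rpow (p := 2) (s := ((d - 1 : ℕ) : ℝ) + α) (b := 1 / 4)
    (by have : (0:ℝ) ≤ ((d - 1 : ℕ) : ℝ) := by positivity
        linarith) two_pos (by norm_num)).const_mul (((2 * π) ^ d)⁻¹ * π ^ ((d : ℝ) / 2))
  refine IntegrableOn.congr_fun h (fun r hr => ?_) measurableSet_Ioi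
  have hr0 : (0:ℝ) < r := hr
  simp only [smul_eq_mul, finrank_euclideanSpace, Fintype.card_fin]
  rw [Real.rpow_add hr0, Real.rpow_natCast, Real.rpow_two]
  ring

lemma kernel_tail {ν α t R : ℝ} (hd : 1 ≤ d) (hα : 0 < α) (hα2 : α ≤ 2) (ht : 0 < t) (hν : 0 < ν) (hR : 0 < R)
    (x : EuclideanSpace ℝ (Fin d)) :
    ∫ y in (Metric.ball x R)ᶜ, stableKernel d ν α t (x - y)
      ≤ (1 - rexp (-1))⁻¹ * (ν * ∫ z : EuclideanSpace ℝ (Fin d), ‖z‖ ^ α * gG d z) * t / R ^ α := by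
  have hκ : 0 < t * ν := by positivity
  have hp := kernel_nonneg (d := d) hd hα hα2 hκ
  obtain ⟨hi, hm⟩ := kernel_mass (d := d) hd hα hα2 hκ
  obtain ⟨di, de⟩ := dual (d := d) (R := R) hd hα hκ hR
  have h1e : 0 < 1 - rexp (-1) := by
    have : rexp (-1) < 1 := by rw [Real.exp_lt_one_iff]; norm_num
    linarith
  set q : E → ℝ := fun v => stableKernel d ν α t v - stableKernel d ν α t v * rexp (-(R ^ 2)⁻¹ * ‖v‖ ^ 2) with hq
  have hqi : Integrable q := hi.sub di
  have hq0 : ∀ v, 0 ≤ q v := by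
    intro v
    have : rexp (-(R ^ 2)⁻¹ * ‖v‖ ^ 2) ≤ 1 := by
      rw [Real.exp_le_one_iff]
      have : 0 ≤ (R ^ 2)⁻¹ * ‖v‖ ^ 2 := by positivity
      linarith
    have := mul_le_of_le_one_right (hp v) this
    simp only [hq]; linarith
  -- step 1
  have s1 : (1 - rexp (-1)) * ∫ y in (Metric.ball x R)ᶜ, stableKernel d ν α t (x - y) ≤ ∫ v, q v := by
    rw [← integral_const_mul, ← integral_sub_left_eq_self q volume x]
    refine le_trans ?_ (setIntegral_le_integral (s := (Metric.ball x R)ᶜ) (hqi.comp_sub_left x) (Eventually.of_forall fun y => hq0 _))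
    refine setIntegral_mono_on ((hi.comp_sub_left x).const_mul _).integrableOn (hqi.comp_sub_left x).integrableOn
      Metric.isOpen_ball.measurableSet.compl fun y hy => ?_
    have hy' : R ≤ ‖x - y‖ := by
      rw [Set.mem_compl_iff, Metric.mem_ball, dist_comm, dist_eq_norm, not_lt] at hy
      exact hy
    have : rexp (-(R ^ 2)⁻¹ * ‖x - y‖ ^ 2) ≤ rexp (-1) := by
      rw [Real.exp_le_exp]
      have : 1 ≤ (R ^ 2)⁻¹ * ‖x - y‖ ^ 2 := by
        rw [inv_mul_eq_div, one_le_div (by positivity)]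
        gcongr
      linarith
    have := mul_le_mul_of_nonneg_left this (hp (x - y))
    simp only [hq]; linarith
  -- step 2
  have s2 : ∫ v, q v ≤ t * ν * ((R ^ α)⁻¹ * ∫ z : E, ‖z‖ ^ α * gG d z) := by
    have h1 : ∫ v, q v ≤ 1 - ∫ z, rexp (-(t * ν * ‖z‖ ^ α)) * (R ^ d * gG d (R • z)) := by
      simp only [hq]
      rw [integral_sub hi di, de]; linarith
    have h2 : ∫ z, R ^ d * gG d (R • z) = 1 := by
      rw [integral_const_mul, scale_int _ hR, gG_one, mul_one, mul_inv_cancel₀ (by positivity)]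
    have hgi := gG_scale_int (d := d) hR
    have hgi2 : Integrable (fun z => rexp (-(t * ν * ‖z‖ ^ α)) * (R ^ d * gG d (R • z))) := by
      refine hgi.mono' ((expInt hd hα hκ).1.mul hgi.1) (Eventually.of_forall fun z => ?_)
      have := gG_nonneg (R • z)
      rw [Real.norm_eq_abs, abs_of_nonneg (by positivity)]
      refine mul_le_of_le_one_left (by positivity) ?_
      rw [Real.exp_le_one_iff]
      have : 0 ≤ t * ν * ‖z‖ ^ α := by positivity
      linarith
    have hmi := ((gG_mom_int (d := d) hd hα).comp_smul hR.ne').const_mul (t * ν * ((R ^ α)⁻¹ * R ^ d))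
    have h3 := scale_int (fun z : E => ‖z‖ ^ α * gG d z) hR
    calc _ ≤ (∫ z, R ^ d * gG d (R • z)) - ∫ z, rexp (-(t * ν * ‖z‖ ^ α)) * (R ^ d * gG d (R • z)) := by
          rw [h2]; exact h1
      _ = ∫ z, (R ^ d * gG d (R • z) - rexp (-(t * ν * ‖z‖ ^ α)) * (R ^ d * gG d (R • z))) :=
          (integral_sub hgi hgi2).symm
      _ ≤ ∫ z : E, (t * ν * ((R ^ α)⁻¹ * R ^ d)) * (‖R • z‖ ^ α * gG d (R • z)) := by
          refine integral_mono (hgi.sub hgi2) hmi fun z => ?_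
          have hg := gG_nonneg (R • z)
          have hb := (one_sub_exp_bd (v := t * ν * ‖z‖ ^ α) (by positivity)).2.2
          have hn : ‖R • z‖ ^ α = R ^ α * ‖z‖ ^ α := by
            rw [norm_smul, Real.norm_eq_abs, abs_of_pos hR, Real.mul_rpow hR.le (norm_nonneg _)]
          have hRa : 0 < R ^ α := by positivity
          simp only [hn]
          calc _ = (1 - rexp (-(t * ν * ‖z‖ ^ α))) * (R ^ d * gG d (R • z)) := by ring
            _ ≤ (t * ν * ‖z‖ ^ α) * (R ^ d * gG d (R • z)) := by gcongr
            _ = _ := by field_simp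
      _ = _ := by
          rw [integral_const_mul, h3]
          field_simp
  have := s1.trans s2
  rw [← le_div_iff₀' h1e] at this
  refine this.trans (le_of_eq ?_)
  field_simp

/-- truncated Riesz kernel -/
noncomputable def rF (d : ℕ) (β : ℝ) (v : EuclideanSpace ℝ (Fin d)) : ℝ :=
  (Metric.ball (0 : EuclideanSpace ℝ (Fin d)) 1).indicator (fun v => ‖v‖ ^ (-β)) v

lemma rF_nonneg (β : ℝ) (v : EuclideanSpace ℝ (Fin d)) : 0 ≤ rF d β v :=
  Set.indicator_nonneg (fun v _ => by positivity) v

lemma rF_int {β : ℝ} (hd : 1 ≤ d) (hβd : β < d) : Integrable (rF d β) := by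
  have : Nonempty (Fin d) := ⟨⟨0, hd⟩⟩
  unfold rF
  rw [integrable_indicator_iff Metric.isOpen_ball.measurableSet]
  refine (integrableOn_fun_norm_addHaar (volume : Measure E) (f := fun r => r ^ (-β))).2 ?_
  have h := (intervalIntegral.intervalIntegrable_rpow' (a := 0) (b := 1) (r := ((d - 1 : ℕ) : ℝ) - β)
    (by rw [Nat.cast_sub hd]; push_cast; linarith))
  rw [intervalIntegrable_iff_integrableOn_Ioc_of_le zero_le_one] at h
  refine IntegrableOn.congr_fun (h.mono_set Set.Ioo_subset_Ioc_self) (fun r hr => ?_) measurableSet_Ioo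
  have hr0 : (0:ℝ) < r := hr.1
  simp only [smul_eq_mul, finrank_euclideanSpace, Fintype.card_fin]
  rw [sub_eq_add_neg, Real.rpow_add hr0, Real.rpow_natCast]

lemma riesz_le {β r : ℝ} (hβ : 0 < β) (hr : 0 < r) (v : EuclideanSpace ℝ (Fin d)) :
    ‖v‖ ^ (-β) ≤ r ^ (-β) + r ^ (-β) * rF d β (r⁻¹ • v) := by
  have h0 := rF_nonneg β (r⁻¹ • v)
  have hrb : 0 < r ^ (-β) := by positivity
  rcases le_or_gt r ‖v‖ with h | h
  · have := Real.rpow_le_rpow_of_nonpos hr h (z := -β) (by linarith)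
    have : 0 ≤ r ^ (-β) * rF d β (r⁻¹ • v) := by positivity
    linarith
  · have hn : ‖r⁻¹ • v‖ = r⁻¹ * ‖v‖ := by
      rw [norm_smul, Real.norm_eq_abs, abs_of_pos (by positivity)]
    have hm : r⁻¹ • v ∈ Metric.ball (0 : E) 1 := by
      rw [mem_ball_zero_iff, hn, inv_mul_lt_iff₀ hr, mul_one]; exact h
    have : r ^ (-β) * rF d β (r⁻¹ • v) = ‖v‖ ^ (-β) := by
      unfold rF
      rw [Set.indicator_of_mem hm, hn, ← Real.mul_rpow hr.le (by positivity), mul_inv_cancel_left₀ hr.ne']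
    linarith

lemma potential {ν α β t : ℝ} (hd : 1 ≤ d) (hα : 0 < α) (hα2 : α ≤ 2) (ht : 0 < t) (hν : 0 < ν)
    (hβ : 0 < β) (hβd : β < d) (x y : EuclideanSpace ℝ (Fin d)) (B : Set (EuclideanSpace ℝ (Fin d))) :
    ∫ w in B, stableKernel d ν α t (x - w) * ‖y - w‖ ^ (-β) ≤
      (1 + (((2 * π) ^ d)⁻¹ * ∫ z : EuclideanSpace ℝ (Fin d), rexp (-(ν * ‖z‖ ^ α))) * ∫ v, rF d β v)
        * t ^ (-(β / α)) := by
  have hκ : 0 < t * ν := by positivity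
  have hp := kernel_nonneg (d := d) hd hα hα2 hκ
  obtain ⟨hi, hm⟩ := kernel_mass (d := d) hd hα hα2 hκ
  have hle := fun v => kernel_le (d := d) hd hα hν ht v
  set M := (((2 * π) ^ d)⁻¹ * ∫ z : EuclideanSpace ℝ (Fin d), rexp (-(ν * ‖z‖ ^ α))) with hM
  set r := t ^ (1 / α) with hrdef
  have hr : 0 < r := by positivity
  have hrb : 0 < r ^ (-β) := by positivity
  have hM0 : 0 ≤ M * (r ^ d)⁻¹ := (hp 0).trans (hle 0)
  have hFi : Integrable (fun w : E => rF d β (r⁻¹ • (y - w))) :=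
    ((rF_int hd hβd).comp_smul (inv_ne_zero hr.ne')).comp_sub_left y
  set rhs : E → ℝ := fun w => r ^ (-β) * stableKernel d ν α t (x - w)
    + (M * (r ^ d)⁻¹ * r ^ (-β)) * rF d β (r⁻¹ • (y - w)) with hrhs
  have i1 : Integrable (fun w => r ^ (-β) * stableKernel d ν α t (x - w)) := (hi.comp_sub_left x).const_mul _
  have i2 : Integrable (fun w => (M * (r ^ d)⁻¹ * r ^ (-β)) * rF d β (r⁻¹ • (y - w))) := hFi.const_mul _
  have hrhsi : Integrable rhs := i1.add i2
  have hrhs0 : ∀ w, 0 ≤ rhs w := fun w => by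
    have := hp (x - w)
    have := rF_nonneg β (r⁻¹ • (y - w))
    simp only [hrhs]; positivity
  have hpt : ∀ w, stableKernel d ν α t (x - w) * ‖y - w‖ ^ (-β) ≤ rhs w := by
    intro w
    have h1 := hp (x - w)
    have h2 := rF_nonneg β (r⁻¹ • (y - w))
    calc _ ≤ stableKernel d ν α t (x - w) * (r ^ (-β) + r ^ (-β) * rF d β (r⁻¹ • (y - w))) := by
          gcongr; exact riesz_le hβ hr _
      _ = r ^ (-β) * stableKernel d ν α t (x - w) + stableKernel d ν α t (x - w) * (r ^ (-β) * rF d β (r⁻¹ • (y - w))) := by ring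
      _ ≤ r ^ (-β) * stableKernel d ν α t (x - w) + (M * (r ^ d)⁻¹) * (r ^ (-β) * rF d β (r⁻¹ • (y - w))) := by
          gcongr; exact hle _
      _ = _ := by simp only [hrhs]; ring
  have e1 : r ^ (-β) = t ^ (-(β / α)) := by
    rw [hrdef, ← Real.rpow_mul ht.le]; congr 1; ring
  calc _ ≤ ∫ w in B, rhs w := by
        refine integral_mono_of_nonneg (Eventually.of_forall fun w => ?_) hrhsi.integrableOn (Eventually.of_forall hpt)
        have := hp (x - w)
        simp only [Pi.zero_apply]; positivity
    _ ≤ ∫ w, rhs w := setIntegral_le_integral hrhsi (Eventually.of_forall hrhs0)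
    _ = r ^ (-β) * (∫ v, stableKernel d ν α t v) + (M * (r ^ d)⁻¹ * r ^ (-β)) * (r ^ d * ∫ v, rF d β v) := by
        simp only [hrhs]
        rw [integral_add i1 i2, integral_const_mul, integral_const_mul, integral_sub_left_eq_self (stableKernel d ν α t) volume x,
          integral_sub_left_eq_self (fun w => rF d β (r⁻¹ • w)) volume y, scale_int _ (inv_pos.2 hr), inv_pow, inv_inv]
    _ ≤ r ^ (-β) * 1 + (M * (r ^ d)⁻¹ * r ^ (-β)) * (r ^ d * ∫ v, rF d β v) := by gcongr
    _ = _ := by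
        rw [← e1]
        have : r ^ d ≠ 0 := by positivity
        field_simp

end aux

/-- Lemma 2.2(b): for `0 < β < min(α,d)` there is `c₂ > 0` with
`∫_{B(x,R)ᶜ × B(x,R)} p_t(x-y) p_t(x-w) |y-w|^{-β} dy dw ≤ c₂ t^{1-β/α} / R^{α}`. -/
theorem heat_corr_offBall_ball (d : ℕ) (hd : 1 ≤ d) (ν α β : ℝ) (hν : 0 < ν)
    (hα : 0 < α) (hα2 : α ≤ 2) (hβ : 0 < β) (hβα : β < α) (hβd : β < d) :
    ∃ c₂ > (0 : ℝ), ∀ (t : ℝ), 0 < t → ∀ (x : EuclideanSpace ℝ (Fin d)) (R : ℝ), 0 < R →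
      (∫ yw in (Metric.ball x R)ᶜ ×ˢ (Metric.ball x R),
          stableKernel d ν α t (x - yw.1) * stableKernel d ν α t (x - yw.2) *
            ‖yw.1 - yw.2‖ ^ (-β))
        ≤ c₂ * t ^ (1 - β / α) / R ^ α := by
  set C1 := (1 + (((2 * π) ^ d)⁻¹ * ∫ z : EuclideanSpace ℝ (Fin d), rexp (-(ν * ‖z‖ ^ α))) * ∫ v, rF d β v) with hC1
  set C2 := (1 - rexp (-1))⁻¹ * (ν * ∫ z : EuclideanSpace ℝ (Fin d), ‖z‖ ^ α * gG d z) with hC2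
  have hC1p : 0 ≤ C1 := by
    have h1 : 0 ≤ ∫ z : EuclideanSpace ℝ (Fin d), rexp (-(ν * ‖z‖ ^ α)) :=
      integral_nonneg fun z => (Real.exp_pos _).le
    have h2 : 0 ≤ ∫ v, rF d β v := integral_nonneg fun v => rF_nonneg β v
    positivity
  have hC2p : 0 ≤ C2 := by
    have h1e : 0 < 1 - rexp (-1) := by
      have : rexp (-1) < 1 := by rw [Real.exp_lt_one_iff]; norm_num
      linarith
    have h1 : 0 ≤ ∫ z : EuclideanSpace ℝ (Fin d), ‖z‖ ^ α * gG d z :=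
      integral_nonneg fun z => mul_nonneg (by positivity) (gG_nonneg z)
    positivity
  refine ⟨C1 * C2 + 1, by positivity, fun t ht x R hR => ?_⟩
  have hκ : 0 < t * ν := by positivity
  have hp := kernel_nonneg (d := d) hd hα hα2 hκ
  obtain ⟨hi, hm⟩ := kernel_mass (d := d) hd hα hα2 hκ
  by_cases hint : IntegrableOn (fun yw : EuclideanSpace ℝ (Fin d) × EuclideanSpace ℝ (Fin d) =>
      stableKernel d ν α t (x - yw.1) * stableKernel d ν α t (x - yw.2) *
            ‖yw.1 - yw.2‖ ^ (-β)) ((Metric.ball x R)ᶜ ×ˢ (Metric.ball x R)) (volume.prod volume)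
  swap
  · rw [Measure.volume_eq_prod, integral_undef hint]; positivity
  rw [Measure.volume_eq_prod, setIntegral_prod _ hint]
  have hpot := fun y => potential hd hα hα2 ht hν hβ hβd x y (Metric.ball x R)
  have htail := kernel_tail hd hα hα2 ht hν hR x
  rw [← hC1] at hpot
  rw [← hC2] at htail
  have htb : 0 < t ^ (-(β / α)) := by positivity
  calc _ ≤ ∫ y in (Metric.ball x R)ᶜ, stableKernel d ν α t (x - y) * (C1 * t ^ (-(β / α))) := by
        refine integral_mono_of_nonneg (Filter.Eventually.of_forall fun y => ?_)
          ((hi.comp_sub_left x).mul_const _).integrableOn (Filter.Eventually.of_forall fun y => ?_)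
        · exact integral_nonneg fun w => mul_nonneg (mul_nonneg (hp _) (hp _)) (by positivity)
        · simp only [mul_assoc]
          rw [integral_const_mul]
          exact mul_le_mul_of_nonneg_left (hpot y) (hp _)
    _ = (∫ y in (Metric.ball x R)ᶜ, stableKernel d ν α t (x - y)) * (C1 * t ^ (-(β / α))) := integral_mul_const _ _
    _ ≤ (C2 * t / R ^ α) * (C1 * t ^ (-(β / α))) := by gcongr
    _ = C1 * C2 * t ^ (1 - β / α) / R ^ α := by
        rw [sub_eq_add_neg, Real.rpow_add ht, Real.rpow_one]; ring
    _ ≤ _ := by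
        have : 0 < t ^ (1 - β / α) := by positivity
        gcongr
        linarith
end
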